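/- arXiv:1809.01468 — 5 statements merged into one kernel-verified Lean document; each statement's English description precedes it below -/
import Mathlib

section
/- Let G be a graph with n ≥ 2 vertices and average degree d. Then G has a (possibly non-induced) subgraph with all degrees lying in the interval [d', 6d'], where d' = (⌊(d/4 − 1)/⌈log₂ n⌉⌋ + 1)/6. -/
open Classical in
lemma aux_mindeg {V : Type} (r : V → V → Prop) (hs : ∀ a b, r a b → r b a)
    (hi : ∀ a, ¬ r a a) (c : ℝ) (W : Finset V) (hW : W.Nonempty)
    (h : 2 * c * (W.card : ℝ) ≤ ∑ v ∈ W, ((W.filter (r v)).card : ℝ)) :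
    ∃ U ⊆ W, U.Nonempty ∧ ∀ v ∈ U, c ≤ ((U.filter (r v)).card : ℝ) := by
  induction W using Finset.strongInduction with
  | H W ih =>
    by_cases hall : ∀ v ∈ W, c ≤ ((W.filter (r v)).card : ℝ)
    · exact ⟨W, subset_rfl, hW, hall⟩
    · push Not at hall
      obtain ⟨v, hv, hlt⟩ := hall
      have e1 : ∀ w, ((W.filter (r w)).card : ℝ)
          = (((W.erase v).filter (r w)).card : ℝ) + (if r w v then 1 else 0) := by
        intro w
        conv_lhs => rw [← Finset.insert_erase hv, Finset.filter_insert]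
        split_ifs with h1
        · rw [Finset.card_insert_of_notMem (by simp)]; push_cast; ring
        · simp
      have e2 : ((W.filter (r v)).card : ℝ) = (((W.erase v).filter (r v)).card : ℝ) := by
        rw [e1 v]; simp [hi]
      have e3 : ∑ w ∈ W.erase v, (if r w v then (1:ℝ) else 0)
          = (((W.erase v).filter (r v)).card : ℝ) := by
        rw [← Finset.sum_filter, Finset.sum_const, nsmul_eq_mul, mul_one]
        congr 2
        ext w
        simp only [Finset.mem_filter]
        exact and_congr_right fun _ => ⟨hs _ _, hs _ _⟩
      have e4 : ∑ w ∈ W, ((W.filter (r w)).card : ℝ)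
          = ∑ w ∈ W.erase v, (((W.erase v).filter (r w)).card : ℝ)
            + 2 * ((W.filter (r v)).card : ℝ) := by
        rw [← Finset.add_sum_erase _ _ hv, Finset.sum_congr rfl (fun w _ => e1 w),
          Finset.sum_add_distrib, e3, e2]; ring
      have hc : (W.card : ℝ) = ((W.erase v).card : ℝ) + 1 := by
        rw [← Finset.card_erase_add_one hv]; push_cast; ring
      have h5 : 2 * c * ((W.erase v).card : ℝ)
          ≤ ∑ w ∈ W.erase v, (((W.erase v).filter (r w)).card : ℝ) := by
        rw [e4, hc] at h; nlinarith
      by_cases hne : (W.erase v).Nonempty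
      · obtain ⟨U, hU, h6, h7⟩ := ih _ (Finset.erase_ssubset hv) hne h5
        exact ⟨U, hU.trans (Finset.erase_subset _ _), h6, h7⟩
      · rw [Finset.not_nonempty_iff_eq_empty] at hne
        rw [e4, hc, hne] at h
        simp at h
        linarith

open Classical in
lemma aux_cut {V : Type} [Fintype V] (r : V → V → Prop) (hi : ∀ a, ¬ r a a) :
    ∃ s : V → Bool, ∑ v, ((Finset.univ.filter (r v)).card : ℝ) ≤
      2 * ∑ v, ((Finset.univ.filter (fun w => r v w ∧ s v ≠ s w)).card : ℝ) := by
  by_contra hcon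
  push Not at hcon
  have h1 : ∑ s : V → Bool, 2 * ∑ v, ((Finset.univ.filter (fun w => r v w ∧ s v ≠ s w)).card : ℝ)
     < ∑ s : V → Bool, ∑ v, ((Finset.univ.filter (r v)).card : ℝ) :=
    Finset.sum_lt_sum_of_nonempty Finset.univ_nonempty (fun s _ => hcon s)
  refine h1.ne ?_
  rw [← Finset.mul_sum, Finset.sum_comm, Finset.sum_comm, Finset.sum_comm, Finset.mul_sum]
  rw [Finset.sum_comm]
  refine Finset.sum_congr rfl fun v _ => ?_
  have hinv : ∑ s : V → Bool, ((Finset.univ.filter (fun w => r v w ∧ s v ≠ s w)).card : ℝ)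
    = ∑ s : V → Bool, ((Finset.univ.filter (fun w => r v w ∧ s v = s w)).card : ℝ) := by
    refine Finset.sum_nbij' (fun s => Function.update s v (!s v))
      (fun s => Function.update s v (!s v)) (by simp) (by simp) (by simp) (by simp) ?_
    intro s _
    congr 2
    ext w
    simp only [Finset.mem_filter, Finset.mem_univ, true_and]
    refine and_congr_right fun hw => ?_
    have : w ≠ v := by rintro rfl; exact hi _ hw
    simp [Function.update_of_ne this]
    cases s v <;> cases s w <;> simp
  rw [two_mul]
  conv_lhs => rw [hinv]
  nth_rw 2 [← hinv]
  rw [← Finset.sum_add_distrib]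
  refine Finset.sum_congr rfl fun s _ => ?_
  rw [← Finset.card_filter_add_card_filter_not (s := Finset.univ.filter (r v)) (fun w => s v = s w)]
  rw [Finset.filter_filter, Finset.filter_filter]
  push_cast
  rfl

open Classical in
lemma aux_hall {V : Type} (r : V → V → Prop) (A B : Finset V) (hA : A.Nonempty)
    (hc : B.card ≤ A.card) (hr : ∀ a ∈ A, 1 ≤ (B.filter (r a)).card) :
    ∃ A' ⊆ A, ∃ B' ⊆ B, ∃ f : V → V, A'.Nonempty ∧ B'.card = A'.card ∧ Set.InjOn f A' ∧
      (∀ a ∈ A', f a ∈ B' ∧ r a (f a)) ∧ ∀ a ∈ A', ∀ b ∈ B, r a b → b ∈ B' := by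
  let N : Finset V → Finset V := fun X => X.biUnion fun a => B.filter (r a)
  have hN : ∀ X, N X ⊆ B := fun X => Finset.biUnion_subset.2 fun a _ => Finset.filter_subset _ _
  have hex : ∃ X ∈ A.powerset.filter (fun X => X.Nonempty ∧ (N X).card ≤ X.card),
      ∀ Y ∈ A.powerset.filter (fun X => X.Nonempty ∧ (N X).card ≤ X.card), X.card ≤ Y.card := by
    apply Finset.exists_min_image
    exact ⟨A, by simp [hA, (Finset.card_le_card (hN A)).trans hc]⟩
  obtain ⟨X, hX, hmin⟩ := hex
  simp only [Finset.mem_filter, Finset.mem_powerset] at hX hmin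
  obtain ⟨hXA, hXn, hXc⟩ := hX
  have hprop : ∀ Y ⊂ X, Y.card ≤ (N Y).card ∧ (Y.Nonempty → Y.card + 1 ≤ (N Y).card) := by
    intro Y hY
    by_cases hn : Y.Nonempty
    · have := Finset.card_lt_card hY
      by_contra h
      have := hmin Y ⟨hY.subset.trans hXA, hn, by grind⟩
      omega
    · simp [Finset.not_nonempty_iff_eq_empty.1 hn]
  have hmono : ∀ Y Z, Y ⊆ Z → N Y ⊆ N Z := fun Y Z h => Finset.biUnion_subset_biUnion_of_subset_left _ h
  have hXX : X.card ≤ (N X).card := by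
    obtain ⟨a, ha⟩ := hXn
    have h1 := Finset.card_erase_add_one ha
    have h2 := hprop _ (Finset.erase_ssubset ha)
    by_cases hn : (X.erase a).Nonempty
    · have := h2.2 hn
      have := Finset.card_le_card (hmono _ _ (Finset.erase_subset a X))
      omega
    · have h3 := hr a (hXA ha)
      rw [Finset.not_nonempty_iff_eq_empty.1 hn] at h1
      have : B.filter (r a) ⊆ N X := Finset.subset_biUnion_of_mem (fun a => B.filter (r a)) ha
      have := Finset.card_le_card this
      simp at h1
      omega
  have hall : ∀ s : Finset X, s.card ≤ (s.biUnion fun a => B.filter (r a)).card := by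
    intro s
    have h1 : (s.biUnion fun a => B.filter (r a)) = N (s.map (Function.Embedding.subtype _)) := by
      ext b; simp [N]
    have h2 : s.map (Function.Embedding.subtype _) ⊆ X := by
      intro x; simp; intro h _; exact h
    rw [h1, ← Finset.card_map (Function.Embedding.subtype _)]
    rcases h2.eq_or_ssubset with h | h
    · rw [h]; exact hXX
    · exact (hprop _ h).1
  obtain ⟨f, hf, hf2⟩ := (Finset.all_card_le_biUnion_card_iff_exists_injective _).1 hall
  refine ⟨X, hXA, N X, hN X, fun a => if h : a ∈ X then f ⟨a, h⟩ else a, hXn, le_antisymm hXc hXX, ?_, ?_, ?_⟩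
  · intro a ha b hb hab
    simp only [Finset.mem_coe] at ha hb
    simp only [ha, hb, dif_pos] at hab
    simpa using hf hab
  · intro a ha
    simp only [ha, dif_pos]
    have := hf2 ⟨a, ha⟩
    exact ⟨Finset.mem_biUnion.2 ⟨a, ha, this⟩, (Finset.mem_filter.1 this).2⟩
  · intro a ha b hb h
    exact Finset.mem_biUnion.2 ⟨a, ha, Finset.mem_filter.2 ⟨hb, h⟩⟩

open Classical in
lemma aux_seq {V : Type} (k : ℕ) : ∀ (r : V → V → Prop) (A B : Finset V), A.Nonempty →
    B.card ≤ A.card → (∀ a ∈ A, k ≤ (B.filter (r a)).card) →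
    ∃ (As Bs : ℕ → Finset V) (f : ℕ → V → V),
      (∀ i < k, (As i).Nonempty ∧ (Bs i).card = (As i).card ∧ As i ⊆ A ∧ Bs i ⊆ B ∧
        Set.InjOn (f i) (As i) ∧ ∀ a ∈ As i, f i a ∈ Bs i ∧ r a (f i a)) ∧
      ∀ i j, i < j → j < k → As j ⊆ As i ∧ Bs j ⊆ Bs i ∧ ∀ a ∈ As j, f j a ≠ f i a := by
  induction k with
  | zero => intro r A B _ _ _; exact ⟨fun _ => ∅, fun _ => ∅, fun _ a => a, by simp, by simp⟩
  | succ k ih =>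
    intro r A B hA hc hr
    obtain ⟨A', hA', B', hB', f, h1, h2, h3, h4, h5⟩ := aux_hall r A B hA hc
      (fun a ha => le_trans (by omega) (hr a ha))
    obtain ⟨As, Bs, fs, p, q⟩ := ih (fun a b => r a b ∧ b ≠ f a) A' B' h1 h2.le (by
      intro a ha
      have e : (B.filter (r a)) ⊆ insert (f a) (B'.filter (fun b => r a b ∧ b ≠ f a)) := by
        intro b hb
        have hb' := Finset.mem_filter.1 hb
        by_cases h : b = f a
        · simp [h]
        · simp [h, h5 a ha b hb'.1 hb'.2, hb'.2]
      have := Finset.card_le_card e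
      have := hr a (hA' ha)
      have := Finset.card_insert_le (f a) (B'.filter (fun b => r a b ∧ b ≠ f a))
      have key : k ≤ (B'.filter (fun b => r a b ∧ b ≠ f a)).card := by omega
      convert key)
    refine ⟨fun i => i.casesOn A' As, fun i => i.casesOn B' Bs, fun i => i.casesOn f fs, ?_, ?_⟩
    · intro i hi
      cases i with
      | zero => exact ⟨h1, h2, hA', hB', h3, h4⟩
      | succ i =>
        obtain ⟨p1, p2, p3, p4, p5, p6⟩ := p i (by omega)
        exact ⟨p1, p2, p3.trans hA', p4.trans hB', p5, fun a ha => ⟨(p6 a ha).1, (p6 a ha).2.1⟩⟩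
    · intro i j hij hj
      cases j with
      | zero => omega
      | succ j =>
        obtain ⟨p1, p2, p3, p4, p5, p6⟩ := p j (by omega)
        cases i with
        | zero => exact ⟨p3, p4, fun a ha => (p6 a ha).2.2⟩
        | succ i => exact q i j (by omega) (by omega)

open Classical in
lemma aux_core {V : Type} (r : V → V → Prop) (A B : Finset V) (hA : A.Nonempty)
    (hdis : Disjoint A B) (hc : B.card ≤ A.card) (k L D : ℕ)
    (hr : ∀ a ∈ A, k ≤ (B.filter (r a)).card) (hD : 1 ≤ D) (hk : L * (D - 1) < k)
    (hL : ∀ m, 1 ≤ m → 2 * m ≤ A.card + B.card → Nat.log 2 m < L) :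
    ∃ (U : Finset V) (K : V → V → Prop), U.Nonempty ∧ (∀ a b, K a b → K b a) ∧
      (∀ a b, K a b → r a b ∨ r b a) ∧
      ∀ v ∈ U, (D : ℝ) / 4 ≤ ((U.filter (K v)).card : ℝ) ∧ (U.filter (K v)).card ≤ D := by
  obtain ⟨As, Bs, f, p, q⟩ := aux_seq k r A B hA hc hr
  obtain ⟨y, hy, hy2⟩ := Finset.exists_lt_card_fiber_of_mul_lt_card_of_maps_to
    (s := Finset.range k) (t := Finset.range L) (f := fun i => Nat.log 2 (As i).card) (n := D - 1)
    (by
      intro i hi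
      simp only [Finset.mem_range] at hi ⊢
      obtain ⟨p1, p2, p3, p4, p5, p6⟩ := p i hi
      have := Finset.card_le_card p3
      have := Finset.card_le_card p4
      exact hL _ (Finset.card_pos.2 p1) (by omega))
    (by simpa using hk)
  obtain ⟨I, hI, hIc⟩ := Finset.exists_subset_card_eq (Nat.le_of_pred_lt hy2 : D ≤ _)
  have hIk : ∀ i ∈ I, i < k ∧ Nat.log 2 (As i).card = y := by
    intro i hi; simpa using hI hi
  have hIn : I.Nonempty := Finset.card_pos.1 (by omega)
  obtain ⟨m, hm, hmin⟩ := I.exists_min_image id hIn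
  simp only [id] at hmin
  obtain ⟨m1, m2, m3, m4, m5, m6⟩ := p m (hIk m hm).1
  have hsub : ∀ i ∈ I, As i ⊆ As m ∧ Bs i ⊆ Bs m := by
    intro i hi
    rcases (hmin i hi).eq_or_lt with h | h
    · subst h; exact ⟨subset_rfl, subset_rfl⟩
    · have := q m i h (hIk i hi).1; exact ⟨this.1, this.2.1⟩
  have hsz : ∀ i ∈ I, (As m).card ≤ 2 * (As i).card := by
    intro i hi
    have h1 := Nat.lt_pow_succ_log_self (b := 2) (by norm_num) (As m).card
    have h2 := Nat.pow_log_le_self 2 (x := (As i).card)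
      (Finset.card_pos.2 (p i (hIk i hi).1).1).ne'
    rw [(hIk m hm).2, pow_succ] at h1
    rw [(hIk i hi).2] at h2
    omega
  let K0 : V → V → Prop := fun a b => ∃ i ∈ I, a ∈ As i ∧ b = f i a
  have hK0 : ∀ a b, K0 a b → a ∈ As m ∧ b ∈ Bs m ∧ r a b := by
    rintro a b ⟨i, hi, ha, rfl⟩
    have := (p i (hIk i hi).1).2.2.2.2.2 a ha
    exact ⟨(hsub i hi).1 ha, (hsub i hi).2 this.1, this.2⟩
  have hd : Disjoint (As m) (Bs m) := Finset.disjoint_of_subset_left m3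
    (Finset.disjoint_of_subset_right m4 hdis)
  obtain ⟨K, hKd⟩ : ∃ K : V → V → Prop, ∀ a b, K a b ↔ (K0 a b ∨ K0 b a) :=
    ⟨fun a b => K0 a b ∨ K0 b a, fun _ _ => Iff.rfl⟩
  have hKs : ∀ a b, K a b → K b a := fun a b h => (hKd _ _).2 ((hKd _ _).1 h).symm
  have hKi : ∀ a, ¬ K a a := by
    intro a h
    have := hK0 a a (by simpa [hKd] using h)
    exact Finset.disjoint_left.1 hd this.1 this.2.1
  have hW : (As m ∪ Bs m).Nonempty := m1.mono Finset.subset_union_left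
  have hWA : ∀ a ∈ As m, (As m ∪ Bs m).filter (K a) = (Bs m).filter (K0 a) := by
    intro a ha
    ext b
    simp only [Finset.mem_filter, Finset.mem_union, hKd]
    constructor
    · rintro ⟨_, h | h⟩
      · exact ⟨(hK0 _ _ h).2.1, h⟩
      · exact absurd (hK0 _ _ h).2.1 (Finset.disjoint_left.1 hd ha)
    · rintro ⟨h1, h2⟩; exact ⟨Or.inr h1, Or.inl h2⟩
  have hWB : ∀ b ∈ Bs m, (As m ∪ Bs m).filter (K b) = (As m).filter (fun a => K0 a b) := by
    intro a ha
    ext b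
    simp only [Finset.mem_filter, Finset.mem_union, hKd]
    constructor
    · rintro ⟨_, h | h⟩
      · exact absurd ha (Finset.disjoint_left.1 hd (hK0 _ _ h).1)
      · exact ⟨(hK0 _ _ h).1, h⟩
    · rintro ⟨h1, h2⟩; exact ⟨Or.inl h1, Or.inr h2⟩
  have hup : ∀ v ∈ As m ∪ Bs m, ((As m ∪ Bs m).filter (K v)).card ≤ D := by
    intro v hv
    rcases Finset.mem_union.1 hv with h | h
    · rw [hWA v h, ← hIc]
      refine (Finset.card_le_card (t := I.image fun i => f i v) ?_).trans Finset.card_image_le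
      intro b hb
      obtain ⟨i, hi, _, rfl⟩ := (Finset.mem_filter.1 hb).2
      exact Finset.mem_image_of_mem _ hi
    · rw [hWB v h, ← hIc]
      refine (Finset.card_le_card (t := I.biUnion fun i => (As i).filter fun a => f i a = v) ?_).trans
        ((Finset.card_biUnion_le_card_mul _ _ 1 ?_).trans (by simp))
      · intro a ha
        obtain ⟨i, hi, h1, h2⟩ := (Finset.mem_filter.1 ha).2
        exact Finset.mem_biUnion.2 ⟨i, hi, Finset.mem_filter.2 ⟨h1, h2.symm⟩⟩
      · intro i hi
        rw [Finset.card_le_one]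
        intro a ha b hb
        rw [Finset.mem_filter] at ha hb
        exact (p i (hIk i hi).1).2.2.2.2.1 ha.1 hb.1 (ha.2.trans hb.2.symm)
  have hne : ∀ i ∈ I, ∀ j ∈ I, ∀ a, a ∈ As i → a ∈ As j → f i a = f j a → i = j := by
    intro i hi j hj a h1 h2 h3
    rcases lt_trichotomy i j with h | h | h
    · exact absurd h3.symm ((q i j h (hIk j hj).1).2.2 a h2)
    · exact h
    · exact absurd h3 ((q j i h (hIk i hi).1).2.2 a h1)
  have hdegA : ∀ a ∈ As m, (I.filter (fun i => a ∈ As i)).card ≤ ((Bs m).filter (K0 a)).card := by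
    intro a ha
    refine Finset.card_le_card_of_injOn (fun i => f i a) ?_ ?_
    · intro i hi
      have hi := Finset.mem_filter.1 hi
      have : K0 a (f i a) := ⟨i, hi.1, hi.2, rfl⟩
      exact Finset.mem_coe.2 (Finset.mem_filter.2 ⟨(hK0 _ _ this).2.1, this⟩)
    · intro i hi j hj h
      have hi := Finset.mem_filter.1 hi
      have hj := Finset.mem_filter.1 hj
      exact hne i hi.1 j hj.1 a hi.2 hj.2 h
  have hsumA : D * (As m).card ≤ 2 * ∑ a ∈ As m, ((Bs m).filter (K0 a)).card := by
    have h1 : ∑ a ∈ As m, (I.filter (fun i => a ∈ As i)).card = ∑ i ∈ I, ((As m).filter (fun a => a ∈ As i)).card :=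
      Finset.sum_card_bipartiteAbove_eq_sum_card_bipartiteBelow (fun a i => a ∈ As i)
    have h2 : ∀ i ∈ I, (As m).card ≤ 2 * ((As m).filter (fun a => a ∈ As i)).card := by
      intro i hi
      refine (hsz i hi).trans (Nat.mul_le_mul_left _ (Finset.card_le_card ?_))
      intro a ha; exact Finset.mem_filter.2 ⟨(hsub i hi).1 ha, ha⟩
    have h3 := Finset.sum_le_sum h2
    rw [Finset.sum_const, smul_eq_mul, hIc, ← Finset.mul_sum, ← h1] at h3
    exact h3.trans (Nat.mul_le_mul_left _ (Finset.sum_le_sum hdegA))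
  have hsumB : ∑ a ∈ As m, ((Bs m).filter (K0 a)).card
      = ∑ b ∈ Bs m, ((As m).filter (fun a => K0 a b)).card :=
    Finset.sum_card_bipartiteAbove_eq_sum_card_bipartiteBelow K0
  obtain ⟨U, hU, hUn, hUd⟩ := aux_mindeg K hKs hKi ((D : ℝ) / 4) (As m ∪ Bs m) hW (by
    have eA : ∑ a ∈ As m, (((As m ∪ Bs m).filter (K a)).card : ℝ)
        = ∑ a ∈ As m, (((Bs m).filter (K0 a)).card : ℝ) :=
      Finset.sum_congr rfl (fun a ha => by rw [hWA a ha])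
    have eB : ∑ a ∈ Bs m, (((As m ∪ Bs m).filter (K a)).card : ℝ)
        = ∑ b ∈ Bs m, (((As m).filter (fun a => K0 a b)).card : ℝ) :=
      Finset.sum_congr rfl (fun a ha => by rw [hWB a ha])
    rw [Finset.sum_union hd, eA, eB, Finset.card_union_of_disjoint hd, m2,
      ← Nat.cast_sum, ← Nat.cast_sum, ← hsumB]
    have : (D : ℝ) * ((As m).card : ℝ) ≤ 2 * ((∑ a ∈ As m, ((Bs m).filter (K0 a)).card : ℕ) : ℝ) := by
      exact_mod_cast hsumA
    push_cast at this ⊢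
    linarith)
  refine ⟨U, K, hUn, hKs, ?_, fun v hv => ⟨hUd v hv, ?_⟩⟩
  · intro a b h
    rcases (hKd _ _).1 h with h | h
    · exact Or.inl (hK0 _ _ h).2.2
    · exact Or.inr (hK0 _ _ h).2.2
  · exact (Finset.card_le_card (Finset.filter_subset_filter _ hU)).trans (hup v (hU hv))

/-- Lemma 2.1, the regularisation lemma.  Let `G` be a graph with
`n ≥ 2` vertices and average degree `d`.  Then `G` has a (possibly non-induced, nonempty)
subgraph all of whose degrees lie in the interval `[d', 6d']`, where
`d' = (⌊(d/4 − 1)/⌈log₂ n⌉⌋ + 1)/6`. -/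
theorem stmt3 {V : Type} [Fintype V] (G : SimpleGraph V) (n : ℕ)
    (hn : n = Fintype.card V) (h2 : 2 ≤ n) (d d' : ℝ)
    (hd : d = 2 * (G.edgeSet.ncard : ℝ) / (n : ℝ))
    (hd' : d' = ((⌊(d / 4 - 1) / ((⌈Real.logb 2 (n : ℝ)⌉ : ℤ) : ℝ)⌋ : ℤ) + 1) / 6) :
    ∃ H : G.Subgraph, H.verts.Nonempty ∧
      ∀ v ∈ H.verts,
        d' ≤ ((H.neighborSet v).ncard : ℝ) ∧ ((H.neighborSet v).ncard : ℝ) ≤ 6 * d' := by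
  classical
  have hnpos : (0 : ℝ) < n := by exact_mod_cast (by omega : 0 < n)
  have hlog : (1 : ℝ) ≤ Real.logb 2 n := by
    rw [Real.le_logb_iff_rpow_le (by norm_num) hnpos]
    simpa using (by exact_mod_cast h2 : (2 : ℝ) ≤ n)
  obtain ⟨L, hL⟩ : ∃ L : ℕ, (L : ℤ) = ⌈Real.logb 2 (n : ℝ)⌉ :=
    ⟨_, Int.toNat_of_nonneg (Int.ceil_nonneg (by linarith))⟩
  have hLr : Real.logb 2 n ≤ L := by
    have := Int.le_ceil (Real.logb 2 (n : ℝ))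
    rw [← hL] at this; exact_mod_cast this
  have hL1 : (1 : ℝ) ≤ L := hlog.trans hLr
  have hd0 : 0 ≤ d := by rw [hd]; positivity
  rw [← hL] at hd'
  have hx : (-1 : ℝ) ≤ (d / 4 - 1) / ((L : ℤ) : ℝ) := by
    push_cast
    rw [le_div_iff₀ (by linarith)]; nlinarith
  have hfl : -1 ≤ ⌊(d / 4 - 1) / ((L : ℤ) : ℝ)⌋ := Int.le_floor.2 (by exact_mod_cast hx)
  obtain ⟨D, hD⟩ : ∃ D : ℕ, (D : ℤ) = ⌊(d / 4 - 1) / ((L : ℤ) : ℝ)⌋ + 1 :=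
    ⟨_, Int.toNat_of_nonneg (by omega)⟩
  have hD' : (D : ℝ) = ((⌊(d / 4 - 1) / ((L : ℤ) : ℝ)⌋ : ℤ) : ℝ) + 1 := by exact_mod_cast hD
  have hdD : 6 * d' = D := by rw [hd', hD']; ring
  have hfle := Int.floor_le ((d / 4 - 1) / ((L : ℤ) : ℝ))
  rcases Nat.eq_zero_or_pos D with h0 | hpos
  · have : Nonempty V := Fintype.card_pos_iff.1 (by omega)
    obtain ⟨v⟩ := this
    refine ⟨G.singletonSubgraph v, ⟨v, by simp⟩, ?_⟩
    intro w hw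
    have : (G.singletonSubgraph v).neighborSet w = ∅ := by
      ext x; simp [SimpleGraph.Subgraph.mem_neighborSet]
    rw [this, hdD, h0]
    rw [h0] at hdD
    simp at hdD ⊢
    linarith
  have hD1 : (1 : ℝ) ≤ D := by exact_mod_cast hpos
  have hk1 : (L : ℝ) * (D - 1) ≤ d / 4 - 1 := by
    have : (D : ℝ) - 1 ≤ (d / 4 - 1) / ((L : ℤ) : ℝ) := by linarith
    push_cast at this
    rw [le_div_iff₀ (by linarith)] at this
    linarith
  have hd4 : 1 ≤ d / 4 := by nlinarith
  obtain ⟨s, hs⟩ := aux_cut G.Adj (fun a => G.loopless.irrefl a)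
  have hsum : ∑ v, ((Finset.univ.filter (G.Adj v)).card : ℝ) = d * n := by
    have h := G.sum_degrees_eq_twice_card_edges
    have h3 : G.edgeSet.ncard = G.edgeFinset.card := by
      rw [← SimpleGraph.coe_edgeFinset, Set.ncard_coe_finset]
    have h4 : ∀ v, Finset.univ.filter (G.Adj v) = G.neighborFinset v := by
      intro v; ext w; simp
    simp only [h4, SimpleGraph.card_neighborFinset_eq_degree]
    rw [← Nat.cast_sum, h, hd, h3]
    field_simp
    push_cast; ring
  obtain ⟨r, hrd⟩ : ∃ r : V → V → Prop, ∀ v w, r v w ↔ (G.Adj v w ∧ s v ≠ s w) :=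
    ⟨fun v w => G.Adj v w ∧ s v ≠ s w, fun _ _ => Iff.rfl⟩
  have hrs : ∀ a b, r a b → r b a := by
    intro a b h
    rw [hrd] at h ⊢
    exact ⟨h.1.symm, h.2.symm⟩
  obtain ⟨W, -, hWn, hW⟩ := aux_mindeg r hrs (fun a h => ((hrd _ _).1 h).2 rfl) (d / 4) Finset.univ
    (Finset.card_pos.1 (by rw [Finset.card_univ]; omega)) (by
      rw [Finset.card_univ, ← hn]
      have : ∑ v, ((Finset.univ.filter (r v)).card : ℝ)
        = ∑ v, ((Finset.univ.filter (fun w => G.Adj v w ∧ s v ≠ s w)).card : ℝ) := by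
        simp only [hrd]
      rw [this]
      linarith)
  have hside : ∀ b : Bool, ∀ a ∈ W.filter (fun v => s v = b),
      ⌈d / 4⌉₊ ≤ ((W.filter (fun v => s v = !b)).filter (r a)).card := by
    intro b a ha
    rw [Finset.mem_filter] at ha
    rw [Nat.ceil_le]
    refine (hW a ha.1).trans ?_
    norm_cast
    refine Finset.card_le_card ?_
    intro w hw
    rw [Finset.mem_filter] at hw
    refine Finset.mem_filter.2 ⟨Finset.mem_filter.2 ⟨hw.1, ?_⟩, hw.2⟩
    have h1 := ((hrd _ _).1 hw.2).2
    rw [ha.2] at h1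
    revert h1
    cases b <;> cases s w <;> simp
  have hdisj : ∀ b : Bool, Disjoint (W.filter (fun v => s v = b)) (W.filter (fun v => s v = !b)) := by
    intro b
    rw [Finset.disjoint_left]
    intro a h1 h2
    rw [Finset.mem_filter] at h1 h2
    have := h1.2.symm.trans h2.2
    cases b <;> simp at this
  have hmain : ∃ b : Bool, (W.filter (fun v => s v = !b)).card ≤ (W.filter (fun v => s v = b)).card := by
    rcases le_total (W.filter (fun v => s v = true)).card (W.filter (fun v => s v = false)).card with h | h
    · exact ⟨false, h⟩
    · exact ⟨true, h⟩
  obtain ⟨b, hb⟩ := hmain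
  have hAn : (W.filter (fun v => s v = b)).Nonempty := by
    by_contra hne
    rw [Finset.not_nonempty_iff_eq_empty] at hne
    rw [hne, Finset.card_empty, Nat.le_zero, Finset.card_eq_zero] at hb
    obtain ⟨w, hw⟩ := hWn
    by_cases h : s w = b
    · have : w ∈ W.filter (fun v => s v = b) := Finset.mem_filter.2 ⟨hw, h⟩
      rw [hne] at this; simp at this
    · have : w ∈ W.filter (fun v => s v = !b) := Finset.mem_filter.2 ⟨hw, by
        revert h; cases b <;> cases s w <;> simp⟩
      rw [hb] at this; simp at this
  obtain ⟨U, K, hUn, hKs, hKr, hU⟩ := aux_core r _ _ hAn (hdisj b) hb ⌈d / 4⌉₊ L D (hside b) hpos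
    (by
      rw [Nat.lt_ceil]
      push_cast [Nat.cast_sub hpos]
      linarith)
    (by
      intro m hm1 hm2
      rw [← Finset.card_union_of_disjoint (hdisj b)] at hm2
      have h3 := hm2.trans (Finset.card_le_univ _)
      rw [← hn] at h3
      have h4 := Nat.pow_log_le_self 2 (x := m) (by omega)
      have h5 : 2 ^ (Nat.log 2 m + 1) ≤ n := by rw [pow_succ]; omega
      have h6 : ((Nat.log 2 m + 1 : ℕ) : ℝ) ≤ Real.logb 2 n := by
        rw [Real.le_logb_iff_rpow_le (by norm_num) hnpos, Real.rpow_natCast]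
        exact_mod_cast h5
      have h7 : ((Nat.log 2 m + 1 : ℕ) : ℝ) ≤ L := h6.trans hLr
      have h8 : Nat.log 2 m + 1 ≤ L := by exact_mod_cast h7
      omega)
  refine ⟨{ verts := U, Adj := fun v w => v ∈ U ∧ w ∈ U ∧ K v w, adj_sub := ?_, edge_vert := ?_, symm := ?_ }, ?_, ?_⟩
  · rintro v w ⟨_, _, h⟩
    rcases hKr _ _ h with h | h
    · exact ((hrd _ _).1 h).1
    · exact ((hrd _ _).1 h).1.symm
  · rintro v w ⟨h, _⟩; exact h
  · constructor
    rintro v w ⟨h1, h2, h3⟩; exact ⟨h2, h1, hKs _ _ h3⟩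
  · exact hUn
  · intro v hv
    have hv : v ∈ U := hv
    have hset : ∀ X : Set V, X = {w | v ∈ U ∧ w ∈ U ∧ K v w} → X.ncard = (U.filter (K v)).card := by
      rintro X rfl
      rw [← Set.ncard_coe_finset]
      congr 1
      ext w; simp [hv]
    have := hU v hv
    have e : ∀ x : ℕ, x = (U.filter (K v)).card → d' ≤ (x : ℝ) ∧ (x : ℝ) ≤ 6 * d' := by
      rintro x rfl
      rw [hdD]
      refine ⟨?_, by exact_mod_cast this.2⟩
      linarith [this.1]
    exact e _ (hset _ rfl)
end

section
/- Let G be an ordered graph, U ⊆ V(G), and xy ∈ E(G) an edge with h(xy,G) > 4m+3 for some real number m satisfying m ≥ |U| and m²/2 > Δ(G)·|U|. Then there exist vertices z, w ∈ V(G) \ U such that xyzw is an increasing path (its three edges xy, yz, zw form a strictly increasing sequence in the edge order and x, y, z, w are distinct) and h(zw, G−U) ≥ h(xy,G) − 4m − 3, where G−U is the induced ordered subgraph of G on V(G) \ U. -/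
open scoped Classical

namespace EO

/-- Auxiliary choice function for building the height table: given the list `prev` of the
(optional) entries at all earlier scanning positions, `htPick N G w k prev` is the entry at
scanning position `k`, namely the `w`-largest edge of `G` containing the column vertex
`⟨k % N⟩` of position `k` that does not occur among the earlier entries, if any exists. -/
noncomputable def htPick (N : ℕ) (G : SimpleGraph (Fin N)) (w : Sym2 (Fin N) → ℕ)
    (k : ℕ) (prev : List (Option (Sym2 (Fin N)))) : Option (Sym2 (Fin N)) :=
  if hN : 0 < N then
    if h : ∃ e, (e ∈ G.edgeSet ∧ (⟨k % N, Nat.mod_lt k hN⟩ : Fin N) ∈ e ∧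
          some e ∉ prev) ∧
        ∀ f, (f ∈ G.edgeSet ∧ (⟨k % N, Nat.mod_lt k hN⟩ : Fin N) ∈ f ∧
          some f ∉ prev) → w f ≤ w e
    then some h.choose else none
  else none

/-- The list of the first `k` entries of the height table of the ordered graph `G`
(vertex set `Fin N` with its natural vertex order, edge order given by the injective
weight `w`).  Scanning position `k` corresponds to row `k / N + 1` and column `⟨k % N⟩`,
so scanning positions in increasing order of `k` is exactly scanning the table in
increasing lexicographic order (row first, then vertex order within a row). -/
noncomputable def htList (N : ℕ) (G : SimpleGraph (Fin N)) (w : Sym2 (Fin N) → ℕ) :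
    ℕ → List (Option (Sym2 (Fin N)))
  | 0 => []
  | k + 1 => htList N G w k ++ [htPick N G w k (htList N G w k)]

/-- The entry of the height table of `G` at scanning position `k`: the `w`-largest
not-yet-entered edge containing the column vertex of position `k`, if any. -/
noncomputable def htEntry (N : ℕ) (G : SimpleGraph (Fin N)) (w : Sym2 (Fin N) → ℕ)
    (k : ℕ) : Option (Sym2 (Fin N)) :=
  htPick N G w k (htList N G w k)

/-- The scanning index at which the edge `e` is entered into the height table
(junk value `0` if `e` is never entered; every edge of `G` is in fact entered exactly
once).  The lexicographic order on table positions corresponds exactly to the order of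
scanning indices. -/
noncomputable def htIndex (N : ℕ) (G : SimpleGraph (Fin N)) (w : Sym2 (Fin N) → ℕ)
    (e : Sym2 (Fin N)) : ℕ :=
  if h : ∃ k, htEntry N G w k = some e then Nat.find h else 0

/-- The height (row, `1`-indexed) of the edge `e` in the height table of `G`. -/
noncomputable def height (N : ℕ) (G : SimpleGraph (Fin N)) (w : Sym2 (Fin N) → ℕ)
    (e : Sym2 (Fin N)) : ℕ :=
  htIndex N G w e / N + 1

/-- The index of the column (vertex) of the edge `e` in the height table of `G`. -/
noncomputable def col (N : ℕ) (G : SimpleGraph (Fin N)) (w : Sym2 (Fin N) → ℕ)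
    (e : Sym2 (Fin N)) : ℕ :=
  htIndex N G w e % N

/-- The column vertex of the edge `e` in the height table of `G` (for `N > 0`). -/
noncomputable def colV (N : ℕ) (hN : 0 < N) (G : SimpleGraph (Fin N))
    (w : Sym2 (Fin N) → ℕ) (e : Sym2 (Fin N)) : Fin N :=
  ⟨htIndex N G w e % N, Nat.mod_lt _ hN⟩

/-- A list of edges is increasing (with respect to the edge order given by `w`) if
consecutive entries are strictly increasing. -/
def Increasing {V : Type*} (w : Sym2 V → ℕ) (l : List (Sym2 V)) : Prop :=
  l.Chain' fun a b => w a < w b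

end EO

namespace EO

theorem mem_htList (N : ℕ) (G : SimpleGraph (Fin N)) (w : Sym2 (Fin N) → ℕ) (k : ℕ)
    (o : Option (Sym2 (Fin N))) :
    o ∈ htList N G w k ↔ ∃ j, j < k ∧ htEntry N G w j = o := by
  induction k with
  | zero => simp [htList]
  | succ k ih =>
    rw [htList, List.mem_append, ih, List.mem_singleton]
    constructor
    · rintro (⟨j, hj, h⟩ | h)
      · exact ⟨j, by omega, h⟩
      · exact ⟨k, by omega, h.symm⟩
    · rintro ⟨j, hj, h⟩
      rcases Nat.lt_succ_iff_lt_or_eq.mp hj with h1 | h1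
      · exact Or.inl ⟨j, h1, h⟩
      · subst h1; exact Or.inr h.symm

theorem htEntry_some {N : ℕ} {G : SimpleGraph (Fin N)} {w : Sym2 (Fin N) → ℕ} {k : ℕ}
    {e : Sym2 (Fin N)} (h : htEntry N G w k = some e) (v : Fin N) (hv : k % N = v) :
    e ∈ G.edgeSet ∧ v ∈ e ∧ some e ∉ htList N G w k ∧
      ∀ f, f ∈ G.edgeSet → v ∈ f → some f ∉ htList N G w k → w f ≤ w e := by
  have hN : 0 < N := v.pos
  have hv' : (⟨k % N, Nat.mod_lt k hN⟩ : Fin N) = v := Fin.ext hv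
  unfold htEntry htPick at h
  rw [dif_pos hN] at h
  split_ifs at h with h1
  have h2 := h1.choose_spec
  rw [Option.some.injEq] at h
  rw [h, hv'] at h2
  exact ⟨h2.1.1, h2.1.2.1, h2.1.2.2, fun f a b c => h2.2 f ⟨a, b, c⟩⟩

theorem htEntry_exists {N : ℕ} {G : SimpleGraph (Fin N)} {w : Sym2 (Fin N) → ℕ} {k : ℕ}
    {e : Sym2 (Fin N)} (v : Fin N) (hv : k % N = v) (he : e ∈ G.edgeSet) (hve : v ∈ e)
    (hn : some e ∉ htList N G w k) : ∃ f, htEntry N G w k = some f := by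
  have hN : 0 < N := v.pos
  have hv' : (⟨k % N, Nat.mod_lt k hN⟩ : Fin N) = v := Fin.ext hv
  unfold htEntry htPick
  rw [dif_pos hN]
  have h : ∃ e, (e ∈ G.edgeSet ∧ (⟨k % N, Nat.mod_lt k hN⟩ : Fin N) ∈ e ∧
          some e ∉ htList N G w k) ∧
        ∀ f, (f ∈ G.edgeSet ∧ (⟨k % N, Nat.mod_lt k hN⟩ : Fin N) ∈ f ∧
          some f ∉ htList N G w k) → w f ≤ w e := by
    rw [hv']
    obtain ⟨f, hf, hmax⟩ := Finset.exists_max_image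
      (Finset.univ.filter fun e => e ∈ G.edgeSet ∧ v ∈ e ∧ some e ∉ htList N G w k) w
      ⟨e, by simp [he, hve, hn]⟩
    refine ⟨f, by simpa using hf, fun g hg => hmax g (by simpa using hg)⟩
  rw [dif_pos h]
  exact ⟨_, rfl⟩

theorem htEntry_inj {N : ℕ} {G : SimpleGraph (Fin N)} {w : Sym2 (Fin N) → ℕ} {j k : ℕ}
    {e : Sym2 (Fin N)} (hN : 0 < N) (hj : htEntry N G w j = some e)
    (hk : htEntry N G w k = some e) : j = k := by
  rcases lt_trichotomy j k with h | h | h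
  · exact absurd ((mem_htList N G w k _).2 ⟨j, h, hj⟩)
      (htEntry_some hk ⟨k % N, Nat.mod_lt _ hN⟩ rfl).2.2.1
  · exact h
  · exact absurd ((mem_htList N G w j _).2 ⟨k, h, hk⟩)
      (htEntry_some hj ⟨j % N, Nat.mod_lt _ hN⟩ rfl).2.2.1

theorem pos_mod {N : ℕ} (r : ℕ) (v : Fin N) : (r * N + v) % N = v := by
  rw [Nat.mul_comm, Nat.mul_add_mod, Nat.mod_eq_of_lt v.2]

theorem exists_entry {N : ℕ} {G : SimpleGraph (Fin N)} {w : Sym2 (Fin N) → ℕ}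
    {e : Sym2 (Fin N)} (he : e ∈ G.edgeSet) : ∃ k, htEntry N G w k = some e := by
  by_contra hcon
  push Not at hcon
  obtain ⟨v, hv⟩ : ∃ v, v ∈ e := by
    induction e with
    | _ a b => exact ⟨a, by simp⟩
  have key : ∀ r : ℕ, ∃ f, htEntry N G w (r * N + v) = some f := fun r =>
    htEntry_exists v (pos_mod r v) he hv (by
      rw [mem_htList]; rintro ⟨j, -, hj⟩; exact hcon j hj)
  choose F hF using key
  refine not_injective_infinite_finite F fun a b hab => ?_
  have := htEntry_inj v.pos (hF a) (hab ▸ hF b)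
  have h2 : a * N = b * N := by omega
  exact Nat.eq_of_mul_eq_mul_right v.pos h2

/-- edges placed before time `k` -/
noncomputable def placed (N : ℕ) (G : SimpleGraph (Fin N)) (w : Sym2 (Fin N) → ℕ) (k : ℕ) :
    Finset (Sym2 (Fin N)) :=
  Finset.univ.filter fun e => some e ∈ htList N G w k

theorem mem_placed {N : ℕ} {G : SimpleGraph (Fin N)} {w : Sym2 (Fin N) → ℕ} {k : ℕ}
    {e : Sym2 (Fin N)} : e ∈ placed N G w k ↔ some e ∈ htList N G w k := by
  simp [placed]

theorem placed_succ_none {N : ℕ} {G : SimpleGraph (Fin N)} {w : Sym2 (Fin N) → ℕ} {k : ℕ}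
    (h : htEntry N G w k = none) : placed N G w (k + 1) = placed N G w k := by
  ext f
  rw [mem_placed, mem_placed, htList, List.mem_append, List.mem_singleton]
  change _ ∨ some f = htEntry N G w k ↔ _
  rw [h]; simp

theorem placed_succ_some {N : ℕ} {G : SimpleGraph (Fin N)} {w : Sym2 (Fin N) → ℕ} {k : ℕ}
    {e : Sym2 (Fin N)} (h : htEntry N G w k = some e) :
    placed N G w (k + 1) = insert e (placed N G w k) := by
  ext f
  rw [mem_placed, Finset.mem_insert, mem_placed, htList, List.mem_append, List.mem_singleton]
  change _ ∨ some f = htEntry N G w k ↔ _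
  rw [h, Option.some.injEq, or_comm]

theorem placed_sub {N : ℕ} {G : SimpleGraph (Fin N)} {w : Sym2 (Fin N) → ℕ} {k : ℕ}
    (hN : 0 < N) {e : Sym2 (Fin N)} (h : e ∈ placed N G w k) : e ∈ G.edgeSet := by
  rw [mem_placed, mem_htList] at h
  obtain ⟨j, -, hj⟩ := h
  exact (htEntry_some hj ⟨j % N, Nat.mod_lt _ hN⟩ rfl).1

theorem placed_compare {N : ℕ} (hN : 0 < N) {G G' : SimpleGraph (Fin N)}
    {w : Sym2 (Fin N) → ℕ} (hw : Function.Injective w) (hle : G'.edgeSet ⊆ G.edgeSet) (k : ℕ) :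
    (∀ e ∈ placed N G w k, e ∈ G'.edgeSet → e ∈ placed N G' w k) ∧
      (placed N G' w k).card ≤ (placed N G w k).card := by
  induction k with
  | zero => simp [placed, htList]
  | succ k ih =>
    obtain ⟨ih1, ih2⟩ := ih
    set v : Fin N := ⟨k % N, Nat.mod_lt _ hN⟩ with hv
    have hun : ∀ e, e ∈ G'.edgeSet → some e ∉ htList N G' w k → some e ∉ htList N G w k := by
      intro e he h1 h2
      exact h1 (mem_placed.1 (ih1 e (mem_placed.2 h2) he))
    cases ha : htEntry N G w k with
    | none =>
      cases hb : htEntry N G' w k with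
      | none => rw [placed_succ_none ha, placed_succ_none hb]; exact ⟨ih1, ih2⟩
      | some b =>
        obtain ⟨b1, b2, b3, b4⟩ := htEntry_some hb v rfl
        obtain ⟨f, hf⟩ := htEntry_exists v rfl (hle b1) b2 (hun b b1 b3)
        rw [ha] at hf; cases hf
    | some a =>
      obtain ⟨a1, a2, a3, a4⟩ := htEntry_some ha v rfl
      rw [placed_succ_some ha, Finset.card_insert_of_notMem (by rwa [mem_placed])]
      cases hb : htEntry N G' w k with
      | none =>
        rw [placed_succ_none hb]
        refine ⟨?_, by omega⟩
        intro e he he'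
        rcases Finset.mem_insert.1 he with rfl | he
        · by_contra hc
          rw [mem_placed] at hc
          obtain ⟨f, hf⟩ := htEntry_exists v rfl he' a2 hc
          rw [hb] at hf; cases hf
        · exact ih1 e he he'
      | some b =>
        obtain ⟨b1, b2, b3, b4⟩ := htEntry_some hb v rfl
        rw [placed_succ_some hb, Finset.card_insert_of_notMem (by rwa [mem_placed])]
        refine ⟨?_, by omega⟩
        intro e he he'
        rw [Finset.mem_insert]
        rcases Finset.mem_insert.1 he with rfl | he
        · by_cases hc : e ∈ placed N G' w k
          · exact Or.inr hc
          · rw [mem_placed] at hc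
            exact Or.inl (hw (le_antisymm (b4 e he' a2 hc) (a4 b (hle b1) b2 (hun b b1 b3))))
        · exact Or.inr (ih1 e he he')

theorem deleted_card {N : ℕ} (G : SimpleGraph (Fin N)) [DecidableRel G.Adj]
    (U : Finset (Fin N)) (S : Finset (Sym2 (Fin N)))
    (hS : ∀ e ∈ S, e ∈ G.edgeSet ∧ ∃ u ∈ U, u ∈ e) : S.card ≤ G.maxDegree * U.card := by
  have h1 : S ⊆ U.biUnion fun u => G.incidenceFinset u := by
    intro e he
    obtain ⟨h1, u, hu, h2⟩ := hS e he
    rw [Finset.mem_biUnion]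
    exact ⟨u, hu, by rw [SimpleGraph.mem_incidenceFinset]; exact ⟨h1, h2⟩⟩
  refine (Finset.card_le_card h1).trans ?_
  rw [mul_comm]
  refine Finset.card_biUnion_le_card_mul _ _ _ fun u _ => ?_
  rw [SimpleGraph.card_incidenceFinset_eq_degree]
  exact G.degree_le_maxDegree u

/-- an edge unplaced at time `r*N+y` with strictly later placement yields a larger edge. -/
theorem next_edge {N : ℕ} {G : SimpleGraph (Fin N)} {w : Sym2 (Fin N) → ℕ}
    (hw : Function.Injective w) {e : Sym2 (Fin N)} (he : e ∈ G.edgeSet) {y : Fin N} (hy : y ∈ e)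
    (r : ℕ) (hn : some e ∉ htList N G w (r * N + y + 1)) :
    ∃ z, htEntry N G w (r * N + y) = some s(y, z) ∧ G.Adj y z ∧ w e < w s(y, z) := by
  have hn' : some e ∉ htList N G w (r * N + y) := by
    rw [mem_htList] at hn ⊢
    rintro ⟨j, hj, h⟩
    exact hn ⟨j, by omega, h⟩
  obtain ⟨f, hf⟩ := htEntry_exists y (pos_mod r y) he hy hn'
  obtain ⟨f1, f2, f3, f4⟩ := htEntry_some hf y (pos_mod r y)
  obtain ⟨z, rfl⟩ := Sym2.mem_iff_exists.1 f2
  refine ⟨z, hf, f1, lt_of_le_of_ne (f4 e he hy hn') fun h => ?_⟩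
  have := hw h
  subst this
  exact hn ((mem_htList ..).2 ⟨_, by omega, hf⟩)

end EO

/-- Lemma 3.2.  Let `G` be an ordered graph, `U ⊆ V(G)`, and
`xy ∈ E(G)` an edge with `h(xy, G) > 4m + 3` for a real `m` with `m ≥ |U|` and
`m²/2 > Δ(G)·|U|`.  Then there are vertices `z, v ∈ V(G) ∖ U` such that `xyzv` is an
increasing path (`x, y, z, v` distinct, with `xy < yz < zv` in the edge order) and
`h(zv, G − U) ≥ h(xy, G) − 4m − 3`, where `G − U` is obtained from `G` by removing `U`
(formally: deleting all edges touching `U`, which leaves the height table of the induced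
subgraph on `V(G) ∖ U` unchanged). -/
theorem stmt10 (N : ℕ) (G : SimpleGraph (Fin N)) [DecidableRel G.Adj]
    (wt : Sym2 (Fin N) → ℕ) (hw : Function.Injective wt)
    (U : Finset (Fin N)) (x y : Fin N) (hxy : G.Adj x y) (m : ℝ)
    (hht : 4 * m + 3 < (EO.height N G wt s(x, y) : ℝ))
    (hUm : (U.card : ℝ) ≤ m)
    (hΔ : (G.maxDegree : ℝ) * (U.card : ℝ) < m ^ 2 / 2) :
    ∃ z v : Fin N, z ∉ U ∧ v ∉ U ∧
      G.Adj y z ∧ G.Adj z v ∧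
      x ≠ z ∧ x ≠ v ∧ y ≠ v ∧ z ≠ v ∧
      wt s(x, y) < wt s(y, z) ∧ wt s(y, z) < wt s(z, v) ∧
      (EO.height N G wt s(x, y) : ℝ) - 4 * m - 3 ≤
        (EO.height N (G.deleteEdges {e | ∃ u ∈ U, u ∈ e}) wt s(z, v) : ℝ) := by
  have hN : 0 < N := x.pos
  by_contra hcon
  push Not at hcon
  have hm0 : 0 ≤ m := le_trans (Nat.cast_nonneg _) hUm
  set G' := G.deleteEdges {e | ∃ u ∈ U, u ∈ e} with hG'
  set H := EO.htIndex N G wt s(x, y) / N with hH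
  have hhH : EO.height N G wt s(x, y) = H + 1 := rfl
  rw [hhH] at hht hcon
  obtain ⟨n, hn⟩ : ∃ n, n = ⌊4 * m + 3⌋₊ := ⟨_, rfl⟩
  have hn1 : (n : ℝ) ≤ 4 * m + 3 := hn ▸ Nat.floor_le (by linarith)
  have hn2 : 4 * m + 3 < n + 1 := hn ▸ Nat.lt_floor_add_one _
  have hnH : n ≤ H := by
    have : (n : ℝ) < ((H + 1 : ℕ) : ℝ) := lt_of_le_of_lt hn1 hht
    have := Nat.cast_lt.1 this
    omega
  -- first step
  have step1 : ∀ r, r < H → ∃ z, EO.htEntry N G wt (r * N + y) = some s(y, z) ∧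
      G.Adj y z ∧ wt s(x, y) < wt s(y, z) := by
    intro r hr
    refine EO.next_edge hw hxy (by simp) r ?_
    rw [EO.mem_htList]
    rintro ⟨j, hj, hje⟩
    have hex : ∃ k, EO.htEntry N G wt k = some s(x, y) := ⟨j, hje⟩
    have hidx : EO.htIndex N G wt s(x, y) ≤ j := by
      unfold EO.htIndex
      rw [dif_pos hex]
      exact Nat.find_min' hex hje
    have h1 : H * N ≤ EO.htIndex N G wt s(x, y) := Nat.div_mul_le_self _ _
    have h2 : (r + 1) * N ≤ H * N := Nat.mul_le_mul_right _ hr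
    have h3 := y.2
    rw [Nat.add_mul] at h2
    omega
  have : Nonempty (Fin N) := ⟨x⟩
  choose! z hz1 hz2 hz3 using step1
  have hzinj : ∀ r < H, ∀ r' < H, z r = z r' → r = r' := by
    intro r hr r' hr' h
    have h1 := EO.htEntry_inj hN (hz1 r hr) (h ▸ hz1 r' hr')
    have h2 : r * N = r' * N := by omega
    exact Nat.eq_of_mul_eq_mul_right hN h2
  have hzx : ∀ r < H, x ≠ z r := by
    intro r hr h
    have := hz3 r hr
    rw [← h, Sym2.eq_swap] at this
    exact lt_irrefl _ this
  have step2 : ∀ r r', r < H → r' < r → ∃ v, EO.htEntry N G wt (r' * N + z r) = some s(z r, v) ∧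
      G.Adj (z r) v ∧ wt s(y, z r) < wt s(z r, v) := by
    intro r r' hr hr'
    refine EO.next_edge hw (hz2 r hr) (by simp) r' ?_
    rw [EO.mem_htList]
    rintro ⟨j, hj, hje⟩
    have h1 := EO.htEntry_inj hN hje (hz1 r hr)
    have h2 : (r' + 1) * N ≤ r * N := Nat.mul_le_mul_right _ hr'
    have h3 := (z r).2
    rw [Nat.add_mul] at h2
    omega
  choose! v hv1 hv2 hv3 using step2
  have hvinj : ∀ r < H, ∀ a < r, ∀ b < r, v r a = v r b → a = b := by
    intro r hr a ha b hb h
    have h1 := EO.htEntry_inj hN (hv1 r a hr ha) (h ▸ hv1 r b hr hb)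
    have h2 : a * N = b * N := by omega
    exact Nat.eq_of_mul_eq_mul_right hN h2
  set t := (H - n) * N with ht
  have hsub : G'.edgeSet ⊆ G.edgeSet := by
    rw [hG', SimpleGraph.edgeSet_deleteEdges]; exact Set.sdiff_subset
  obtain ⟨c1, c2⟩ := EO.placed_compare hN hw hsub t
  set A := EO.placed N G wt t with hA
  set B := EO.placed N G' wt t with hB
  have hcard : (B \ A).card ≤ G.maxDegree * U.card := by
    have h1 : (B \ A).card ≤ (A \ B).card := by
      have e1 := Finset.card_sdiff_add_card_inter B A
      have e2 := Finset.card_sdiff_add_card_inter A B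
      rw [Finset.inter_comm] at e2
      omega
    refine h1.trans (EO.deleted_card G U _ fun e he => ?_)
    rw [Finset.mem_sdiff] at he
    have he1 := EO.placed_sub hN he.1
    refine ⟨he1, ?_⟩
    by_contra hc
    refine he.2 (c1 e he.1 ?_)
    rw [hG', SimpleGraph.edgeSet_deleteEdges]
    exact ⟨he1, hc⟩
  obtain ⟨L, hL⟩ : ∃ L, L = n / 2 := ⟨_, rfl⟩
  set R := (Finset.Ico (H - L) H).filter fun r => z r ∉ U with hR
  set S := fun r => (Finset.Ico (H - n) (H - L)).filter fun r' => v r r' ∉ insert x U with hS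
  have hRc : L - U.card ≤ R.card := by
    have h1 := Finset.card_filter_add_card_filter_not (s := Finset.Ico (H - L) H) (fun r => z r ∈ U)
    have h2 : ((Finset.Ico (H - L) H).filter fun r => z r ∈ U).card ≤ U.card := by
      refine Finset.card_le_card_of_injOn z (fun r hr => (Finset.mem_filter.1 hr).2) ?_
      intro a ha b hb h
      have ha := (Finset.mem_Ico.1 (Finset.mem_filter.1 ha).1).2
      have hb := (Finset.mem_Ico.1 (Finset.mem_filter.1 hb).1).2
      exact hzinj a ha b hb h
    rw [Nat.card_Ico] at h1
    have h3 : R.card = ((Finset.Ico (H - L) H).filter fun r => ¬ z r ∈ U).card := rfl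
    omega
  have hSc : ∀ r ∈ R, n - L - (U.card + 1) ≤ (S r).card := by
    intro r hr
    obtain ⟨hr1, hr2⟩ := Finset.mem_Ico.1 (Finset.mem_filter.1 hr).1
    have h1 := Finset.card_filter_add_card_filter_not (s := Finset.Ico (H - n) (H - L))
      (fun r' => v r r' ∈ insert x U)
    have h2 : ((Finset.Ico (H - n) (H - L)).filter fun r' => v r r' ∈ insert x U).card
        ≤ (insert x U).card := by
      refine Finset.card_le_card_of_injOn (v r) (fun r hr => (Finset.mem_filter.1 hr).2) ?_
      intro a ha b hb h
      have ha := (Finset.mem_Ico.1 (Finset.mem_filter.1 ha).1).2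
      have hb := (Finset.mem_Ico.1 (Finset.mem_filter.1 hb).1).2
      exact hvinj r hr2 a (by omega) b (by omega) h
    have h4 := Finset.card_insert_le x U
    rw [Nat.card_Ico] at h1
    have h3 : (S r).card = ((Finset.Ico (H - n) (H - L)).filter
      fun r' => ¬ v r r' ∈ insert x U).card := rfl
    omega
  have hbig : (R.sigma S).card ≤ (B \ A).card := by
    refine Finset.card_le_card_of_injOn (fun p => s(z p.1, v p.1 p.2)) ?_ ?_
    · rintro ⟨r, r'⟩ hp
      obtain ⟨hr, hr'⟩ := Finset.mem_sigma.1 hp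
      dsimp only at hr hr'
      obtain ⟨hrI, hzU⟩ := Finset.mem_filter.1 hr
      obtain ⟨hrI', hvU⟩ := Finset.mem_filter.1 hr'
      rw [Finset.mem_Ico] at hrI hrI'
      rw [Finset.mem_insert, not_or] at hvU
      have hlt : r' < r := by omega
      have hvy : y ≠ v r r' := by
        intro h
        have := hv3 r r' hrI.2 hlt
        rw [← h, Sym2.eq_swap] at this
        exact lt_irrefl _ this
      have hh := hcon (z r) (v r r') hzU hvU.2 (hz2 r hrI.2) (hv2 r r' hrI.2 hlt) (hzx r hrI.2)
        (Ne.symm hvU.1) hvy (hv2 r r' hrI.2 hlt).ne (hz3 r hrI.2) (hv3 r r' hrI.2 hlt)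
      have hE : s(z r, v r r') ∈ G'.edgeSet := by
        rw [hG', SimpleGraph.edgeSet_deleteEdges]
        refine ⟨hv2 r r' hrI.2 hlt, ?_⟩
        rintro ⟨u, hu, hue⟩
        rcases Sym2.mem_iff.1 hue with rfl | rfl
        · exact hzU hu
        · exact hvU.2 hu
      have hex := EO.exists_entry (w := wt) hE
      change s(z r, v r r') ∈ B \ A
      rw [Finset.mem_sdiff, hA, hB, EO.mem_placed, EO.mem_placed, EO.mem_htList, EO.mem_htList]
      constructor
      · refine ⟨Nat.find hex, ?_, Nat.find_spec hex⟩
        have hi : EO.htIndex N G' wt s(z r, v r r') = Nat.find hex := by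
          unfold EO.htIndex; rw [dif_pos hex]
        unfold EO.height at hh
        rw [hi] at hh
        have h5 : ((Nat.find hex / N + 1 + n : ℕ) : ℝ) < ((H + 1 : ℕ) : ℝ) := by
          push_cast at hh ⊢
          linarith
        have h6 := Nat.cast_lt.1 h5
        rw [ht]
        exact (Nat.div_lt_iff_lt_mul hN).1 (by omega)
      · rintro ⟨j, hj, hje⟩
        have h1 := EO.htEntry_inj hN hje (hv1 r r' hrI.2 hlt)
        have h2 : (H - n) * N ≤ r' * N := Nat.mul_le_mul_right _ hrI'.1
        omega
    · rintro ⟨r, r'⟩ hp ⟨q, q'⟩ hq heq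
      obtain ⟨hr, hr'⟩ := Finset.mem_sigma.1 hp
      obtain ⟨hq, hq'⟩ := Finset.mem_sigma.1 hq
      dsimp only at hr hr' hq hq' heq
      have hr := Finset.mem_Ico.1 (Finset.mem_filter.1 hr).1
      have hr' := Finset.mem_Ico.1 (Finset.mem_filter.1 hr').1
      have hq := Finset.mem_Ico.1 (Finset.mem_filter.1 hq).1
      have hq' := Finset.mem_Ico.1 (Finset.mem_filter.1 hq').1
      have e1 := hv1 r r' hr.2 (by omega)
      have e2 := hv1 q q' hq.2 (by omega)
      rw [heq] at e1
      have e3 := EO.htEntry_inj hN e1 e2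
      have e4 : z r = z q := by
        apply Fin.ext
        rw [← EO.pos_mod r' (z r), e3, EO.pos_mod]
      have e5 := hzinj r hr.2 q hq.2 e4
      subst e5
      have h2 : r' * N = q' * N := by omega
      have e6 := Nat.eq_of_mul_eq_mul_right hN h2
      subst e6
      rfl
  have hprod : (L - U.card) * (n - L - (U.card + 1)) ≤ (R.sigma S).card := by
    rw [Finset.card_sigma]
    calc _ ≤ R.card * (n - L - (U.card + 1)) := Nat.mul_le_mul_right _ hRc
      _ ≤ _ := by
        rw [← smul_eq_mul]
        exact Finset.card_nsmul_le_sum _ _ _ hSc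
  have hfin := hprod.trans (hbig.trans hcard)
  have hfinR : (((L - U.card) * (n - L - (U.card + 1)) : ℕ) : ℝ) ≤
      (G.maxDegree : ℝ) * (U.card : ℝ) := by exact_mod_cast hfin
  rw [Nat.cast_mul] at hfinR
  have hLn : (n : ℝ) ≤ 2 * L + 1 := by
    have : n ≤ 2 * L + 1 := by omega
    exact_mod_cast this
  have hLn2 : (2 * L : ℝ) ≤ n := by
    have : 2 * L ≤ n := by omega
    exact_mod_cast this
  have p1 : m ≤ ((L - U.card : ℕ) : ℝ) := by
    have h : L ≤ (L - U.card) + U.card := by omega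
    have h' : (L : ℝ) ≤ ((L - U.card : ℕ) : ℝ) + U.card := by exact_mod_cast h
    linarith
  have p2 : m ≤ ((n - L - (U.card + 1) : ℕ) : ℝ) := by
    have h : n ≤ (n - L - (U.card + 1)) + L + U.card + 1 := by omega
    have h' : (n : ℝ) ≤ ((n - L - (U.card + 1) : ℕ) : ℝ) + L + U.card + 1 := by exact_mod_cast h
    linarith
  have p3 := mul_le_mul p1 p2 hm0 (hm0.trans p1)
  nlinarith [sq_nonneg m]
end

section
/- For every n-vertex graph G with average degree d ≥ 2 and every edge-ordering of G, there is a monotone path of length at least d / 2^{C√(log₂ d · log₂ log₂ n)} for some absolute constant C. -/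
open scoped Classical

namespace MPath

/-- `Mono G w τ v l`: the list `v :: l` is an increasing walk in `G` using edges at times `≥ τ`. -/
def Mono {V : Type*} (G : SimpleGraph V) (w : V → V → ℕ) : ℕ → V → List V → Prop
  | _, _, [] => True
  | τ, v, u :: l => G.Adj v u ∧ τ ≤ w v u ∧ Mono G w (w v u + 1) u l

/-- Reversed walk from `x` (started at time `τ0`) to `u`, arriving before time `τ`. -/
def RP {V : Type*} (G : SimpleGraph V) (w : V → V → ℕ) (x : V) (τ0 : ℕ) : ℕ → V → List V → Prop
  | τ, u, [] => u = x ∧ τ0 ≤ τ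
  | τ, u, p :: l => G.Adj p u ∧ w p u + 1 ≤ τ ∧ RP G w x τ0 (w p u) p l

noncomputable def darts {V : Type*} [Fintype V] (G : SimpleGraph V) : ℕ :=
  (Finset.univ.filter fun p : V × V => G.Adj p.1 p.2).card

def Hyp {V : Type*} [Fintype V] (w : V → V → ℕ) (D ℓ : ℕ) : Prop :=
  ∀ (G : SimpleGraph V) (A : Finset V), A.Nonempty → (∀ u v, G.Adj u v → u ∈ A) →
    D * A.card ≤ darts G → ∃ v l, Mono G w 0 v l ∧ (v :: l).Nodup ∧ ℓ ≤ l.length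

lemma card_le_darts {V : Type*} [Fintype V] {G : SimpleGraph V} {s : Finset (V × V)}
    (h : ∀ p ∈ s, G.Adj p.1 p.2) : s.card ≤ darts G :=
  Finset.card_le_card fun p hp => Finset.mem_filter.2 ⟨Finset.mem_univ _, h p hp⟩

lemma Mono.weaken {V : Type*} {G G' : SimpleGraph V} {w : V → V → ℕ} (hG : G ≤ G')
    {τ τ' : ℕ} (h : τ' ≤ τ) {v : V} {l : List V} (hm : Mono G w τ v l) : Mono G' w τ' v l := by
  induction l generalizing τ τ' v with
  | nil => trivial
  | cons u l ih => exact ⟨hG hm.1, h.trans hm.2.1, ih le_rfl hm.2.2⟩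

lemma Mono.take {V : Type*} {G : SimpleGraph V} {w : V → V → ℕ}
    {τ : ℕ} {v : V} {l₁ l₂ : List V} (hm : Mono G w τ v (l₁ ++ l₂)) : Mono G w τ v l₁ := by
  induction l₁ generalizing τ v with
  | nil => trivial
  | cons u l ih => exact ⟨hm.1, hm.2.1, ih hm.2.2⟩

lemma Mono.drop {V : Type*} {G : SimpleGraph V} {w : V → V → ℕ}
    {τ : ℕ} {v q : V} {l₁ l₂ : List V} (hm : Mono G w τ v (l₁ ++ q :: l₂)) :
    Mono G w τ q l₂ := by
  induction l₁ generalizing τ v with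
  | nil => exact hm.2.2.weaken le_rfl (hm.2.1.trans (Nat.le_succ _))
  | cons u l ih => exact (ih hm.2.2).weaken le_rfl (hm.2.1.trans (Nat.le_succ _))

lemma RP.weaken {V : Type*} {G : SimpleGraph V} {w : V → V → ℕ} {x : V} {τ0 : ℕ}
    {τ τ' : ℕ} (h : τ ≤ τ') {v : V} {l : List V} (hm : RP G w x τ0 τ v l) :
    RP G w x τ0 τ' v l := by
  cases l with
  | nil => exact ⟨hm.1, hm.2.trans h⟩
  | cons u l => exact ⟨hm.1, hm.2.1.trans h, hm.2.2⟩

/-- cutting a reversed path at one of its vertices. -/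
lemma RP.cut {V : Type*} {G : SimpleGraph V} {w : V → V → ℕ} {x : V} {τ0 : ℕ}
    {τ : ℕ} {u q : V} {l : List V} (hm : RP G w x τ0 τ u l) (hq : q ∈ l) :
    ∃ l', RP G w x τ0 τ q l' ∧ (q :: l') <:+ l := by
  induction l generalizing τ u with
  | nil => simp at hq
  | cons p l ih =>
    rcases List.mem_cons.1 hq with rfl | hq
    · exact ⟨l, hm.2.2.weaken (Nat.le_of_succ_le hm.2.1), List.suffix_rfl⟩
    · obtain ⟨l', h1, h2⟩ := ih hm.2.2 hq
      exact ⟨l', h1.weaken (Nat.le_of_succ_le hm.2.1), h2.trans (List.suffix_cons _ _)⟩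

/-- glue a reversed path and a forward path. -/
lemma RP.glue {V : Type*} {G : SimpleGraph V} {w : V → V → ℕ} {x : V} {τ0 : ℕ}
    {τ : ℕ} {u : V} {l m : List V} (hr : RP G w x τ0 τ u l) (hm : Mono G w τ u m) :
    ∃ m', Mono G w τ0 x m' ∧ x :: m' = (u :: l).reverse ++ m := by
  induction l generalizing τ u m with
  | nil =>
    obtain ⟨rfl, h⟩ := hr
    exact ⟨m, hm.weaken le_rfl h, by simp⟩
  | cons p l ih =>
    obtain ⟨m', h1, h2⟩ := ih (m := u :: m) hr.2.2
      ⟨hr.1, le_rfl, hm.weaken le_rfl hr.2.1⟩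
    exact ⟨m', h1, by simp [h2]⟩

lemma comb {V : Type*} {G : SimpleGraph V} {w : V → V → ℕ} {x : V} {τ0 : ℕ} {S : Finset V}
    (g : ℕ) (N : ℕ) : ∀ {τ : ℕ} {u : V} {l m : List V}, l.length ≤ N →
    RP G w x τ0 τ u l → (u :: l).Nodup →
    (∀ y ∈ u :: l, y ∉ S) → Mono G w τ u m → (u :: m).Nodup → (∀ y ∈ m, y ∉ S) →
    g * (l.length + 1) ≤ m.length →
    ∃ m', Mono G w τ0 x m' ∧ (x :: m').Nodup ∧ (∀ y ∈ m', y ∉ S) ∧ g ≤ m'.length := by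
  induction N with
  | zero =>
    intro τ u l m hN hr hl hlS hm hmn hmS hlen
    obtain rfl : l = [] := List.length_eq_zero_iff.1 (Nat.le_zero.1 hN)
    obtain ⟨rfl, h⟩ := hr
    exact ⟨m, hm.weaken le_rfl h, hmn, hmS, by simpa using hlen⟩
  | succ N ih =>
    intro τ u l m hN hr hl hlS hm hmn hmS hlen
    have key : ∀ m₁ : List V, m₁ <+: m → (∀ y ∈ m₁, y ∉ l) → g ≤ m₁.length →
        ∃ m', Mono G w τ0 x m' ∧ (x :: m').Nodup ∧ (∀ y ∈ m', y ∉ S) ∧ g ≤ m'.length := by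
      rintro m₁ ⟨m₂, rfl⟩ hd hg
      obtain ⟨m', h1, h2⟩ := hr.glue hm.take
      refine ⟨m', h1, ?_, ?_, ?_⟩
      · rw [h2, List.nodup_append]
        refine ⟨List.nodup_reverse.2 hl, ?_, ?_⟩
        · have := (List.nodup_cons.1 hmn).2
          exact (List.nodup_append.1 this).1
        · rintro a ha b hb rfl
          simp only [List.mem_reverse, List.mem_cons] at ha
          rcases ha with rfl | ha
          · exact (List.nodup_cons.1 hmn).1 (by simp [hb])
          · exact hd _ hb ha
      · intro y hy
        have : y ∈ x :: m' := by simp [hy]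
        rw [h2] at this
        rcases List.mem_append.1 this with h | h
        · exact hlS y (List.mem_reverse.1 h)
        · exact hmS y (by simp [h])
      · have := congrArg List.length h2
        simp at this
        omega
    by_cases hit : ∃ q ∈ m, q ∈ l
    · -- first hit
      have : ∃ m₁ q m₂, m = m₁ ++ q :: m₂ ∧ q ∈ l ∧ ∀ y ∈ m₁, y ∉ l := by
        clear key hlen hmS hmn hm
        induction m with
        | nil => simp at hit
        | cons a m ihm =>
          by_cases ha : a ∈ l
          · exact ⟨[], a, m, rfl, ha, by simp⟩
          · obtain ⟨m₁, q, m₂, h1, h2, h3⟩ := ihm (by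
              obtain ⟨q, hq, hql⟩ := hit
              rcases List.mem_cons.1 hq with rfl | hq
              · exact absurd hql ha
              · exact ⟨q, hq, hql⟩)
            refine ⟨a :: m₁, q, m₂, by simp [h1], h2, ?_⟩
            intro y hy
            rcases List.mem_cons.1 hy with rfl | hy
            · exact ha
            · exact h3 y hy
      obtain ⟨m₁, q, m₂, rfl, hq, hd⟩ := this
      by_cases hg : g ≤ m₁.length
      · exact key m₁ ⟨_, rfl⟩ hd hg
      · obtain ⟨l', h1, h2⟩ := hr.cut hq
        have hlen2 := h2.length_le
        simp at hlen2 hlen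
        refine ih (τ := τ) (u := q) (l := l') (m := m₂) (by omega) h1 ?_ ?_ hm.drop ?_ ?_ ?_
        · exact (List.nodup_cons.1 hl).2.sublist h2.sublist
        · intro y hy
          exact hlS y (List.mem_cons_of_mem _ (h2.subset hy))
        · have := (List.nodup_cons.1 hmn).2
          exact (List.nodup_append.1 this).2.1
        · intro y hy; exact hmS y (by simp [hy])
        · have : g * (l'.length + 1) ≤ g * l.length := Nat.mul_le_mul_left _ hlen2
          rw [Nat.mul_add] at hlen
          omega
    · push Not at hit
      exact key m List.prefix_rfl hit (by nlinarith [Nat.zero_le l.length])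

noncomputable def goodSet {V : Type*} [Fintype V] (G : SimpleGraph V) (w : V → V → ℕ)
    (P : V → ℕ → Prop) (v : V) (τ : ℕ) : Finset V :=
  Finset.univ.filter fun u => G.Adj v u ∧ τ ≤ w v u ∧ P u (w v u + 1)

def Good {V : Type*} [Fintype V] (G : SimpleGraph V) (w : V → V → ℕ) (b : ℕ) :
    ℕ → V → ℕ → Prop
  | 0, _, _ => True
  | s + 1, v, τ => b ≤ (goodSet G w (Good G w b s) v τ).card

lemma mem_goodSet {V : Type*} [Fintype V] {G : SimpleGraph V} {w : V → V → ℕ}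
    {P : V → ℕ → Prop} {v u : V} {τ : ℕ} :
    u ∈ goodSet G w P v τ ↔ G.Adj v u ∧ τ ≤ w v u ∧ P u (w v u + 1) := by
  simp [goodSet]

lemma Good.anti_tau {V : Type*} [Fintype V] {G : SimpleGraph V} {w : V → V → ℕ} {b s : ℕ}
    {v : V} {τ τ' : ℕ} (h : τ' ≤ τ) (hg : Good G w b s v τ) : Good G w b s v τ' := by
  cases s with
  | zero => trivial
  | succ s =>
    refine le_trans hg (Finset.card_le_card ?_)
    intro u hu
    rw [mem_goodSet] at hu ⊢
    exact ⟨hu.1, h.trans hu.2.1, hu.2.2⟩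

lemma Good.anti_b {V : Type*} [Fintype V] {G : SimpleGraph V} {w : V → V → ℕ} {b b' s : ℕ}
    {v : V} {τ : ℕ} (h : b' ≤ b) (hg : Good G w b s v τ) : Good G w b' s v τ := by
  induction s generalizing v τ with
  | zero => trivial
  | succ s ih =>
    refine h.trans (le_trans hg (Finset.card_le_card ?_))
    intro u hu
    rw [mem_goodSet] at hu ⊢
    exact ⟨hu.1, hu.2.1, ih hu.2.2⟩

lemma Good.pred {V : Type*} [Fintype V] {G : SimpleGraph V} {w : V → V → ℕ} {b s : ℕ}
    {v : V} {τ : ℕ} (hg : Good G w b (s + 1) v τ) : Good G w b s v τ := by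
  induction s generalizing v τ with
  | zero => trivial
  | succ s ih =>
    refine (le_trans hg (Finset.card_le_card ?_))
    intro u hu
    rw [mem_goodSet] at hu ⊢
    exact ⟨hu.1, hu.2.1, ih hu.2.2⟩

lemma Good.anti_s {V : Type*} [Fintype V] {G : SimpleGraph V} {w : V → V → ℕ} {b s s' : ℕ}
    {v : V} {τ : ℕ} (h : s' ≤ s) (hg : Good G w b s v τ) : Good G w b s' v τ := by
  induction h with
  | refl => exact hg
  | step _ ih => exact ih hg.pred

lemma exists_good {V : Type*} [Fintype V] {G : SimpleGraph V} {w : V → V → ℕ}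
    (hs : ∀ u v, w u v = w v u) (hi : ∀ u v v', w u v = w u v' → v = v')
    {A : Finset V} (hA : ∀ u v, G.Adj u v → u ∈ A) (b L : ℕ)
    (hd : 2 * (L * b * A.card) < darts G) : ∃ x, Good G w b L x 0 := by
  by_contra hcon
  push Not at hcon
  set lab : V → ℕ → ℕ := fun v τ => Nat.findGreatest (fun s => Good G w b s v τ) L with hlab
  have lab_good : ∀ v τ, Good G w b (lab v τ) v τ := fun v τ =>
    Nat.findGreatest_spec (P := fun s => Good G w b s v τ) (Nat.zero_le L) trivial
  have lab_lt : ∀ v τ, lab v τ < L := by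
    intro v τ
    refine lt_of_le_of_ne (Nat.findGreatest_le L) ?_
    intro h
    have := lab_good v τ
    rw [h] at this
    exact hcon v (this.anti_tau (Nat.zero_le _))
  have lab_not : ∀ v τ, ¬ Good G w b (lab v τ + 1) v τ := fun v τ =>
    Nat.findGreatest_is_greatest (P := fun s => Good G w b s v τ) (Nat.lt_succ_self _) (lab_lt v τ)
  set U : Finset (V × V) := Finset.univ.filter fun p : V × V => G.Adj p.1 p.2 ∧
    lab p.1 (w p.1 p.2 + 1) ≤ lab p.2 (w p.1 p.2 + 1) with hU
  have hUcard : U.card ≤ b * (A ×ˢ Finset.range L).card := by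
    refine Finset.card_le_mul_card_image_of_maps_to
      (f := fun p : V × V => (p.1, lab p.1 (w p.1 p.2 + 1))) ?_ b ?_
    · intro p hp
      simp only [hU, Finset.mem_filter, Finset.mem_univ, true_and] at hp
      exact Finset.mem_product.2 ⟨hA _ _ hp.1, Finset.mem_range.2 (lab_lt _ _)⟩
    · rintro ⟨u, a⟩ -
      set F : Finset V := Finset.univ.filter fun v => G.Adj u v ∧ lab u (w u v + 1) = a ∧
        a ≤ lab v (w u v + 1) with hF
      have h1 : (U.filter fun p => (p.1, lab p.1 (w p.1 p.2 + 1)) = (u, a)).card ≤ F.card := by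
        refine Finset.card_le_card_of_injOn (fun p => p.2) ?_ ?_
        · intro p hp
          simp only [hU, Finset.coe_filter, Finset.mem_filter, Finset.mem_univ, true_and,
            Set.mem_ofPred_eq, Prod.mk.injEq] at hp
          obtain ⟨⟨h1, h2⟩, h3, h4⟩ := hp
          simp only [hF, Finset.coe_filter, Finset.mem_univ, true_and, Set.mem_ofPred_eq]
          subst h3
          exact ⟨h1, h4, h4 ▸ h2⟩
        · rintro ⟨p1, p2⟩ hp ⟨q1, q2⟩ hq h
          simp only [Finset.coe_filter, Set.mem_ofPred_eq, Prod.mk.injEq] at hp hq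
          simp only at h
          rw [hp.2.1, hq.2.1, h]
      refine h1.trans ?_
      by_contra hlt
      push Not at hlt
      have hne : F.Nonempty := Finset.card_pos.1 (by omega)
      obtain ⟨v0, hv0, hmin⟩ := Finset.exists_min_image F (fun v => w u v) hne
      have hv0' := hv0
      simp only [hF, Finset.mem_filter, Finset.mem_univ, true_and] at hv0'
      apply lab_not u (w u v0 + 1)
      rw [hv0'.2.1]
      have : F.erase v0 ⊆ goodSet G w (Good G w b a) u (w u v0 + 1) := by
        intro v hv
        have hvF := Finset.mem_of_mem_erase hv
        have hle := hmin v hvF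
        simp only [hF, Finset.mem_filter, Finset.mem_univ, true_and] at hvF
        rw [mem_goodSet]
        refine ⟨hvF.1, ?_, (lab_good v _).anti_s hvF.2.2⟩
        refine Nat.succ_le_of_lt (lt_of_le_of_ne hle ?_)
        intro h
        exact (Finset.ne_of_mem_erase hv) (hi _ _ _ h).symm
      have h2 := Finset.card_le_card this
      rw [Finset.card_erase_of_mem hv0] at h2
      change b ≤ _
      omega
  have hsub : (Finset.univ.filter fun p : V × V => G.Adj p.1 p.2) ⊆ U ∪ U.image Prod.swap := by
    intro p hp
    simp only [Finset.mem_filter, Finset.mem_univ, true_and] at hp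
    rw [Finset.mem_union]
    rcases le_total (lab p.1 (w p.1 p.2 + 1)) (lab p.2 (w p.1 p.2 + 1)) with h | h
    · left; simp [hU, hp, h]
    · right
      rw [Finset.mem_image]
      refine ⟨p.swap, ?_, by simp⟩
      simp only [hU, Finset.mem_filter, Finset.mem_univ, true_and, Prod.fst_swap, Prod.snd_swap]
      exact ⟨hp.symm, by rw [hs p.2 p.1]; exact h⟩
  have h3 := (Finset.card_le_card hsub).trans (Finset.card_union_le _ _)
  have h4 : (U.image Prod.swap).card ≤ U.card := Finset.card_image_le
  rw [Finset.card_product, Finset.card_range] at hUcard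
  unfold darts at hd
  have : b * (A.card * L) = L * b * A.card := by ring
  omega

lemma Good.path {V : Type*} [Fintype V] {G : SimpleGraph V} {w : V → V → ℕ} {b s : ℕ}
    {v : V} {τ : ℕ} (hg : Good G w b s v τ) (S : Finset V) (hS : S.card + s ≤ b) :
    ∃ l, Mono G w τ v l ∧ l.Nodup ∧ (∀ y ∈ l, y ∉ S) ∧ l.length = s := by
  induction s generalizing v τ S with
  | zero => exact ⟨[], trivial, by simp, by simp, rfl⟩
  | succ s ih =>
    have hg' : b ≤ (goodSet G w (Good G w b s) v τ).card := hg
    obtain ⟨u, hu, huS⟩ := Finset.exists_mem_notMem_of_card_lt_card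
      (s := S) (t := goodSet G w (Good G w b s) v τ) (by omega)
    rw [mem_goodSet] at hu
    obtain ⟨l, h1, h2, h3, h4⟩ := ih hu.2.2 (insert u S)
      (by have := Finset.card_insert_le u S; omega)
    refine ⟨u :: l, ⟨hu.1, hu.2.1, h1⟩, ?_, ?_, by simp [h4]⟩
    · refine List.nodup_cons.2 ⟨fun h => h3 u h (by simp), h2⟩
    · intro y hy
      rcases List.mem_cons.1 hy with rfl | hy
      · exact huS
      · intro h; exact h3 y hy (by simp [h])

lemma hyp_base {V : Type*} [Fintype V] {w : V → V → ℕ}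
    (hs : ∀ u v, w u v = w v u) (hi : ∀ u v v', w u v = w u v' → v = v') (m : ℕ) :
    Hyp w (2 * m * (m + 1) + 1) m := by
  intro G A hne hA hd
  have hpos := hne.card_pos
  obtain ⟨x, hx⟩ := exists_good hs hi hA (m + 1) m (by nlinarith)
  obtain ⟨l, h1, h2, h3, h4⟩ := hx.path {x} (by simp; omega)
  refine ⟨x, l, h1, List.nodup_cons.2 ⟨fun h => h3 x h (by simp), h2⟩, h4.ge⟩

def Arr {V : Type*} [Fintype V] (G : SimpleGraph V) (w : V → V → ℕ) (S : Finset V) (b L : ℕ)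
    (x : V) (τ0 : ℕ) : ℕ → V → ℕ → Prop
  | 0, v, τ => v = x ∧ τ0 ≤ τ
  | s + 1, v, τ => Arr G w S b L x τ0 s v τ ∨ ∃ u, Arr G w S b L x τ0 s u (w u v) ∧ G.Adj u v ∧
      v ∉ S ∧ w u v + 1 ≤ τ ∧ Good G w b (L - (s + 1)) v (w u v + 1)

section
variable {V : Type*} [Fintype V] {G : SimpleGraph V} {w : V → V → ℕ} {S : Finset V} {b L : ℕ}
    {x : V} {τ0 : ℕ}

lemma Arr.mono {s : ℕ} {v : V} {τ τ' : ℕ} (h : τ ≤ τ') (ha : Arr G w S b L x τ0 s v τ) :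
    Arr G w S b L x τ0 s v τ' := by
  induction s with
  | zero => exact ⟨ha.1, ha.2.trans h⟩
  | succ s ih =>
    rcases ha with ha | ⟨u, h1, h2, h3, h4, h5⟩
    · exact Or.inl (ih ha)
    · exact Or.inr ⟨u, h1, h2, h3, h4.trans h, h5⟩

lemma Arr.good (hx : Good G w b L x τ0) {s : ℕ} {v : V} {τ : ℕ}
    (ha : Arr G w S b L x τ0 s v τ) :
    ∃ τ1, Arr G w S b L x τ0 s v τ1 ∧ Good G w b (L - s) v τ1 := by
  induction s with
  | zero => exact ⟨τ0, ⟨ha.1, le_rfl⟩, by rw [ha.1]; exact hx⟩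
  | succ s ih =>
    rcases ha with ha | ⟨u, h1, h2, h3, h4, h5⟩
    · obtain ⟨τ1, h1, h2⟩ := ih ha
      exact ⟨τ1, Or.inl h1, h2.anti_s (by omega)⟩
    · exact ⟨w u v + 1, Or.inr ⟨u, h1, h2, h3, le_rfl, h5⟩, h5⟩

lemma Arr.notS (hx : x ∉ S) {s : ℕ} {v : V} {τ : ℕ}
    (ha : Arr G w S b L x τ0 s v τ) : v ∉ S := by
  induction s with
  | zero => rw [ha.1]; exact hx
  | succ s ih =>
    rcases ha with ha | ⟨u, h1, h2, h3, h4, h5⟩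
    · exact ih ha
    · exact h3

lemma Arr.back (hx : x ∉ S) {s : ℕ} {v : V} {τ : ℕ} (ha : Arr G w S b L x τ0 s v τ) :
    ∃ l, RP G w x τ0 τ v l ∧ (v :: l).Nodup ∧ (∀ y ∈ v :: l, y ∉ S) ∧ l.length ≤ s := by
  induction s generalizing v τ with
  | zero => exact ⟨[], ha, by simp, by simpa [ha.1] using hx, by simp⟩
  | succ s ih =>
    rcases ha with ha | ⟨u, h1, h2, h3, h4, h5⟩
    · obtain ⟨l, a1, a2, a3, a4⟩ := ih ha
      exact ⟨l, a1, a2, a3, by omega⟩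
    · obtain ⟨l, a1, a2, a3, a4⟩ := ih h1
      by_cases hv : v ∈ l
      · obtain ⟨l', c1, c2⟩ := a1.cut hv
        have := c2.length_le
        simp at this
        refine ⟨l', c1.weaken (by omega), ?_, ?_, by omega⟩
        · exact (List.nodup_cons.1 a2).2.sublist c2.sublist
        · intro y hy
          exact a3 y (List.mem_cons_of_mem _ (c2.subset hy))
      · refine ⟨u :: l, ⟨h2, h4, a1⟩, ?_, ?_, by simp; omega⟩
        · refine List.nodup_cons.2 ⟨?_, a2⟩
          intro h
          rcases List.mem_cons.1 h with h | h
          · exact h2.ne h.symm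
          · exact hv h
        · intro y hy
          rcases List.mem_cons.1 hy with rfl | hy
          · exact h3
          · exact a3 y hy

lemma rooted (hs : ∀ u v, w u v = w v u) (hi : ∀ u v v', w u v = w u v' → v = v')
    {D ℓ g k : ℕ} (hyp : Hyp w D ℓ) (hg : 1 ≤ g) (hℓ : g * (L + 1) ≤ ℓ)
    (hL : Fintype.card V < 2 ^ L) (hb : 2 * D + 2 + k ≤ b)
    (hx : Good G w b L x τ0) (hxS : x ∉ S) (hS : S.card ≤ k) :
    ∃ m, Mono G w τ0 x m ∧ (x :: m).Nodup ∧ (∀ y ∈ m, y ∉ S) ∧ g ≤ m.length := by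
  by_contra hcon
  set A : ℕ → Finset V := fun s => Finset.univ.filter fun v => ∃ τ, Arr G w S b L x τ0 s v τ
    with hA
  have memA : ∀ s v, v ∈ A s ↔ ∃ τ, Arr G w S b L x τ0 s v τ := by intro s v; simp [hA]
  have grow : ∀ s, s < L → 2 * (A s).card ≤ (A (s + 1)).card := by
    intro s hsL
    by_contra hlt
    push Not at hlt
    apply hcon
    -- half darts
    set half : V → V → Prop := fun u v => Arr G w S b L x τ0 s u (w u v) ∧ G.Adj u v ∧
      v ∉ S ∧ Good G w b (L - (s + 1)) v (w u v + 1) with hhalf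
    have half_arr : ∀ u v, half u v → Arr G w S b L x τ0 (s + 1) v (w u v + 1) := by
      intro u v h
      exact Or.inr ⟨u, h.1, h.2.1, h.2.2.1, le_rfl, h.2.2.2⟩
    set HD : Finset (V × V) := Finset.univ.filter fun p : V × V => half p.1 p.2 with hHD
    have hHDcard : (2 * D + 2) * (A s).card ≤ HD.card := by
      rw [mul_comm]
      have hmaps : ∀ p ∈ HD, p.1 ∈ A s := by
        intro p hp
        simp only [hHD, Finset.mem_filter, Finset.mem_univ, true_and] at hp
        exact (memA _ _).2 ⟨_, hp.1⟩
      rw [Finset.card_eq_sum_card_fiberwise (f := Prod.fst) (t := A s) hmaps]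
      rw [← smul_eq_mul]
      refine Finset.card_nsmul_le_sum _ _ _ ?_
      intro u hu
      obtain ⟨τ, hτ⟩ := (memA _ _).1 hu
      obtain ⟨τ1, h1, h2⟩ := hτ.good hx
      have hLs : L - s = (L - (s + 1)) + 1 := by omega
      rw [hLs] at h2
      have h3 : b ≤ (goodSet G w (Good G w b (L - (s + 1))) u τ1).card := h2
      have h4 : (goodSet G w (Good G w b (L - (s + 1))) u τ1 \ S).card ≤
          (HD.filter fun p => p.1 = u).card := by
        refine Finset.card_le_card_of_injOn (fun v => (u, v)) ?_ ?_
        · intro v hv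
          have hv' := Finset.mem_sdiff.1 (Finset.mem_coe.1 hv)
          have hv1 := mem_goodSet.1 hv'.1
          refine Finset.mem_coe.2 (Finset.mem_filter.2 ⟨?_, rfl⟩)
          simp only [hHD, Finset.mem_filter, Finset.mem_univ, true_and]
          exact ⟨h1.mono hv1.2.1, hv1.1, hv'.2, hv1.2.2⟩
        · intro a _ c _ h
          exact (Prod.mk.inj h).2
      have h5 := Finset.le_card_sdiff S (goodSet G w (Good G w b (L - (s + 1))) u τ1)
      omega
    set BD : Finset (V × V) := HD.filter fun p : V × V =>
      ¬ Arr G w S b L x τ0 (s + 1) p.2 (w p.1 p.2) with hBD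
    have hBDcard : BD.card ≤ (A (s + 1)).card := by
      refine Finset.card_le_card_of_injOn Prod.snd ?_ ?_
      · intro p hp
        have hp := Finset.mem_filter.1 (Finset.mem_coe.1 hp)
        have hp1 := (Finset.mem_filter.1 hp.1).2
        exact Finset.mem_coe.2 ((memA _ _).2 ⟨_, half_arr _ _ hp1⟩)
      · rintro ⟨u, v⟩ hp ⟨u', v'⟩ hp' h
        have hp := Finset.mem_filter.1 (Finset.mem_coe.1 hp)
        have hp1 := (Finset.mem_filter.1 hp.1).2
        have hp' := Finset.mem_filter.1 (Finset.mem_coe.1 hp')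
        have hp1' := (Finset.mem_filter.1 hp'.1).2
        simp only at h hp1 hp1'
        subst h
        have a1 := hp.2
        have a2 := hp'.2
        simp only at a1 a2
        have : w u v = w u' v := by
          rcases lt_trichotomy (w u v) (w u' v) with h | h | h
          · exact absurd ((half_arr _ _ hp1).mono h) a2
          · exact h
          · exact absurd ((half_arr _ _ hp1').mono h) a1
        rw [hs u, hs u'] at this
        rw [hi _ _ _ this]
    set Λ : SimpleGraph V :=
      { Adj := fun u v => G.Adj u v ∧ (half u v ∨ half v u) ∧
          Arr G w S b L x τ0 (s + 1) u (w u v) ∧ Arr G w S b L x τ0 (s + 1) v (w u v)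
        symm := ⟨by
          rintro u v ⟨h1, h2, h3, h4⟩
          rw [hs u v] at h3 h4
          exact ⟨h1.symm, h2.symm, h4, h3⟩⟩
        loopless := ⟨fun u h => h.1.ne rfl⟩ } with hΛ
    have hsub : ∀ p ∈ HD \ BD, Λ.Adj p.1 p.2 := by
      intro p hp
      have hp := Finset.mem_sdiff.1 hp
      have hp1 : half p.1 p.2 := (Finset.mem_filter.1 hp.1).2
      have hp2 : Arr G w S b L x τ0 (s + 1) p.2 (w p.1 p.2) := by
        by_contra h
        exact hp.2 (Finset.mem_filter.2 ⟨hp.1, h⟩)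
      exact ⟨hp1.2.1, Or.inl hp1, Or.inl hp1.1, hp2⟩
    have hΛd : D * (A (s + 1)).card ≤ darts Λ := by
      have h1 := card_le_darts hsub
      have h2 := Finset.le_card_sdiff BD HD
      have h7 : HD.card ≤ darts Λ + BD.card := Nat.sub_le_iff_le_add.1 (h2.trans h1)
      have h6 : (D + 1) * (A (s + 1)).card ≤ (D + 1) * (2 * (A s).card) :=
        Nat.mul_le_mul_left _ hlt.le
      clear * - h7 h6 hHDcard hBDcard
      nlinarith
    have hxA : x ∈ A (s + 1) := by
      rw [memA]
      refine ⟨τ0, ?_⟩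
      clear * -
      induction s with
      | zero => exact Or.inl ⟨rfl, le_rfl⟩
      | succ s ih => exact Or.inl ih
    obtain ⟨v, l, m1, m2, m3⟩ := hyp Λ (A (s + 1)) ⟨x, hxA⟩
      (fun u v h => (memA _ _).2 ⟨_, h.2.2.1⟩) hΛd
    have hΛG : Λ ≤ G := fun u v h => h.1
    have havoid : ∀ (l : List V) (τ : ℕ) (v : V), Mono Λ w τ v l → ∀ y ∈ l, y ∉ S := by
      intro l
      induction l with
      | nil => simp
      | cons u l ih =>
        intro τ v hm y hy
        rcases List.mem_cons.1 hy with rfl | hy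
        · exact hm.1.2.2.2.notS hxS
        · exact ih _ _ hm.2.2 y hy
    cases l with
    | nil =>
      exfalso
      simp at m3
      have : 1 * 1 ≤ g * (L + 1) := Nat.mul_le_mul hg (by omega)
      omega
    | cons y l =>
      obtain ⟨lq, q1, q2, q3, q4⟩ := m1.1.2.2.1.back hxS
      refine comb g L (by omega) q1 q2 q3 (m := y :: l) ?_ m2 (havoid _ _ _ m1) ?_
      · exact (show Mono Λ w (w v y) v (y :: l) from ⟨m1.1, le_rfl, m1.2.2⟩).weaken hΛG le_rfl
      · exact (Nat.mul_le_mul_left g (by omega)).trans (hℓ.trans m3)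
  have hpow : ∀ s, s ≤ L → 2 ^ s ≤ (A s).card := by
    intro s
    induction s with
    | zero =>
      intro _
      refine Finset.card_pos.2 ⟨x, (memA _ _).2 ⟨τ0, rfl, le_rfl⟩⟩
    | succ s ih =>
      intro h
      have h1 := ih (by omega)
      have h2 := grow s (by omega)
      rw [pow_succ]
      omega
  have h1 := hpow L le_rfl
  have h2 := Finset.card_le_univ (A L)
  omega

end

lemma rooted_edge {V : Type*} [Fintype V] {G : SimpleGraph V} {w : V → V → ℕ}
    (hs : ∀ u v, w u v = w v u) (hi : ∀ u v v', w u v = w u v' → v = v')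
    {D ℓ g k L : ℕ} (hyp : Hyp w D ℓ) (hg : 1 ≤ g) (hℓ : g * (L + 1) ≤ ℓ)
    (hL : Fintype.card V < 2 ^ L) {A : Finset V} (hA : ∀ u v, G.Adj u v → u ∈ A)
    (hd : 2 * ((L + 1) * (2 * D + 3 + k) * A.card) < darts G) :
    ∃ x y, G.Adj x y ∧ ∀ v, (v = x ∨ v = y) → ∀ S : Finset V, S.card ≤ k → v ∉ S →
      ∃ m, Mono G w (w x y + 1) v m ∧ (v :: m).Nodup ∧ (∀ z ∈ m, z ∉ S) ∧ g ≤ m.length := by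
  obtain ⟨x, hx⟩ := exists_good hs hi hA (2 * D + 3 + k) (L + 1) hd
  set F := goodSet G w (Good G w (2 * D + 3 + k) L) x 0 with hF
  have hx' : 2 * D + 3 + k ≤ F.card := hx
  obtain ⟨y, hy, hmin⟩ := Finset.exists_min_image F (fun v => w x v)
    (Finset.card_pos.1 (by omega))
  have hy' := mem_goodSet.1 hy
  refine ⟨x, y, hy'.1, ?_⟩
  have gy : Good G w (2 * D + 2 + k) L y (w x y + 1) := hy'.2.2.anti_b (by omega)
  have gx : Good G w (2 * D + 2 + k) L x (w x y + 1) := by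
    apply Good.pred
    have : F.erase y ⊆ goodSet G w (Good G w (2 * D + 2 + k) L) x (w x y + 1) := by
      intro v hv
      have hvF := Finset.mem_of_mem_erase hv
      have hle := hmin v hvF
      have hvF := mem_goodSet.1 hvF
      rw [mem_goodSet]
      refine ⟨hvF.1, ?_, hvF.2.2.anti_b (by omega)⟩
      refine Nat.succ_le_of_lt (lt_of_le_of_ne hle ?_)
      intro h
      exact (Finset.ne_of_mem_erase hv) (hi _ _ _ h).symm
    have h2 := Finset.card_le_card this
    rw [Finset.card_erase_of_mem hy] at h2
    change 2 * D + 2 + k ≤ _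
    omega
  rintro v (rfl | rfl) S hS hvS
  · exact rooted hs hi hyp hg hℓ hL le_rfl gx hvS hS
  · exact rooted hs hi hyp hg hℓ hL le_rfl gy hvS hS

lemma Mono.append_last {V : Type*} {G : SimpleGraph V} {w : V → V → ℕ} {τ : ℕ} {v z : V}
    {l : List V} (hm : Mono G w τ v (l ++ [z])) :
    ∃ p, G.Adj p z ∧ ∀ G' : SimpleGraph V, G ≤ G' → ∀ l2, Mono G' w (w p z + 1) z l2 →
      Mono G' w τ v (l ++ z :: l2) := by
  induction l generalizing τ v with
  | nil => exact ⟨v, hm.1, fun G' hG l2 h => ⟨hG hm.1, hm.2.1, h⟩⟩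
  | cons u l ih =>
    obtain ⟨p, h1, h2⟩ := ih hm.2.2
    exact ⟨p, h1, fun G' hG l2 h => ⟨hG hm.1, hm.2.1, h2 G' hG l2 h⟩⟩

lemma exists_split {V : Type*} (m : List V) (g : ℕ) (h : g + 1 ≤ m.length) :
    ∃ l z r, m = l ++ z :: r ∧ l.length = g := by
  refine ⟨m.take g, m[g], m.drop (g + 1), ?_, by simp; omega⟩
  rw [← List.drop_eq_getElem_cons, List.take_append_drop]

def Win {V : Type*} (G : SimpleGraph V) (w : V → V → ℕ) (t g : ℕ) (v : V) (τ : ℕ) (c : ℕ) :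
    Prop :=
  ∀ c' ≤ c, ∀ S : Finset V, S.card + c' * g ≤ t * g → v ∉ S →
    ∃ l, Mono G w τ v l ∧ (v :: l).Nodup ∧ (∀ y ∈ l, y ∉ S) ∧ c' * g ≤ l.length

noncomputable def hh {V : Type*} (G : SimpleGraph V) (w : V → V → ℕ) (t g : ℕ) (v : V) (τ : ℕ) :
    ℕ := Nat.findGreatest (Win G w t g v τ) t

section
variable {V : Type*} {G : SimpleGraph V} {w : V → V → ℕ} {t g : ℕ}

lemma win_zero (v : V) (τ : ℕ) : Win G w t g v τ 0 := by
  intro c' hc S _ _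
  obtain rfl := Nat.le_zero.1 hc
  exact ⟨[], trivial, by simp, by simp, by simp⟩

lemma Win.of_hh {v : V} {τ c : ℕ} (h : c ≤ hh G w t g v τ) : Win G w t g v τ c := by
  have h1 : Win G w t g v τ (hh G w t g v τ) :=
    Nat.findGreatest_spec (P := Win G w t g v τ) (Nat.zero_le t) (win_zero v τ)
  intro c' hc
  exact h1 c' (hc.trans h)

lemma win_step {G' : SimpleGraph V} (hG : G' ≤ G) {a : ℕ} (hg : 1 ≤ g) {v : V} {τ : ℕ}
    (hcl : ∀ p z, G'.Adj p z → a ≤ hh G w t g z (w p z + 1))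
    (h0 : Win G w t g v τ a)
    (hr : ∀ S : Finset V, S.card ≤ t * g → v ∉ S →
      ∃ m, Mono G' w τ v m ∧ (v :: m).Nodup ∧ (∀ z ∈ m, z ∉ S) ∧ g ≤ m.length) :
    Win G w t g v τ (a + 1) := by
  intro c' hc S hS hv
  rcases Nat.le_succ_iff.1 hc with hc | rfl
  · exact h0 c' hc S hS hv
  obtain ⟨m, m1, m2, m3, m4⟩ := hr S (by omega) hv
  obtain ⟨l, z, r, rfl, hl⟩ := exists_split m (g - 1) (by omega)
  have m1' : Mono G' w τ v (l ++ [z]) := by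
    have : l ++ z :: r = (l ++ [z]) ++ r := by simp
    rw [this] at m1
    exact m1.take
  obtain ⟨p, hp, happ⟩ := m1'.append_last
  have hW := Win.of_hh (hcl p z hp)
  have hnd : (v :: l).Nodup ∧ z ∉ v :: l := by
    have : v :: (l ++ z :: r) = (v :: l) ++ (z :: r) := by simp
    rw [this, List.nodup_append] at m2
    exact ⟨m2.1, fun h => m2.2.2 z h z (by simp) rfl⟩
  have hcard : (S ∪ (v :: l).toFinset).card ≤ S.card + g := by
    refine (Finset.card_union_le _ _).trans ?_
    have := List.toFinset_card_le (v :: l)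
    simp only [List.length_cons] at this
    omega
  obtain ⟨l2, a1, a2, a3, a4⟩ := hW a le_rfl (S ∪ (v :: l).toFinset) (by
      rw [Nat.succ_mul] at hS; omega) (by
      intro h
      rcases Finset.mem_union.1 h with h | h
      · exact m3 z (by simp) h
      · exact hnd.2 (List.mem_toFinset.1 h))
  refine ⟨l ++ z :: l2, happ G hG l2 a1, ?_, ?_, ?_⟩
  · have : v :: (l ++ z :: l2) = (v :: l) ++ (z :: l2) := by simp
    rw [this, List.nodup_append]
    refine ⟨hnd.1, a2, ?_⟩
    rintro x hx y hy rfl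
    rcases List.mem_cons.1 hy with rfl | hy
    · exact hnd.2 hx
    · exact a3 x hy (Finset.mem_union_right _ (List.mem_toFinset.2 hx))
  · intro y hy
    rcases List.mem_append.1 hy with hy | hy
    · exact m3 y (by simp [hy])
    · rcases List.mem_cons.1 hy with rfl | hy
      · exact m3 y (by simp)
      · exact fun h => a3 y hy (Finset.mem_union_left _ h)
  · simp only [List.length_append, List.length_cons]
    rw [Nat.succ_mul]
    omega

end

lemma hyp_step {V : Type*} [Fintype V] {w : V → V → ℕ}
    (hs : ∀ u v, w u v = w v u) (hi : ∀ u v v', w u v = w u v' → v = v')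
    {D ℓ g t L : ℕ} (hyp : Hyp w D ℓ) (hg : 1 ≤ g) (ht : 1 ≤ t) (hℓ : g * (L + 1) ≤ ℓ)
    (hL : Fintype.card V < 2 ^ L) :
    Hyp w (t * (2 * (L + 1) * (2 * D + 3 + t * g) + 1)) (t * g) := by
  intro G A hAne hA hd
  by_contra hcon
  have hlt : ∀ v τ, hh G w t g v τ < t := by
    intro v τ
    by_contra h
    push Not at h
    obtain ⟨l, h1, h2, h3, h4⟩ := Win.of_hh h t le_rfl ∅ (by simp) (by simp)
    exact hcon ⟨v, l, h1.weaken le_rfl (Nat.zero_le _), h2, h4⟩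
  set f : V × V → ℕ := fun p =>
    min (hh G w t g p.1 (w p.1 p.2 + 1)) (hh G w t g p.2 (w p.1 p.2 + 1)) with hf
  set N := 2 * (L + 1) * (2 * D + 3 + t * g) + 1 with hN
  have hmaps : ∀ p ∈ Finset.univ.filter (fun p : V × V => G.Adj p.1 p.2),
      f p ∈ Finset.range t := by
    intro p _
    exact Finset.mem_range.2 ((min_le_left _ _).trans_lt (hlt _ _))
  obtain ⟨a, ha, hcard⟩ := Finset.exists_le_card_fiber_of_mul_le_card_of_maps_to hmaps
    (n := N * A.card) ⟨0, Finset.mem_range.2 ht⟩ (by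
      rw [Finset.card_range, ← mul_assoc]; exact hd)
  set G' : SimpleGraph V :=
    { Adj := fun u v => G.Adj u v ∧ f (u, v) = a
      symm := ⟨by
        rintro u v ⟨h1, h2⟩
        refine ⟨h1.symm, ?_⟩
        simp only [hf] at h2 ⊢
        rw [min_comm, hs v u]
        exact h2⟩
      loopless := ⟨fun u h => h.1.ne rfl⟩ } with hG'
  have hG : G' ≤ G := fun u v h => h.1
  have hd' : N * A.card ≤ darts G' := by
    refine hcard.trans (card_le_darts ?_)
    intro p hp
    have hp := Finset.mem_filter.1 hp
    exact ⟨(Finset.mem_filter.1 hp.1).2, hp.2⟩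
  have hpos : 0 < A.card := hAne.card_pos
  obtain ⟨x, y, hxy, hroot⟩ := rooted_edge (G := G') (k := t * g) hs hi hyp hg hℓ hL (A := A)
    (fun u v h => hA u v h.1) (by rw [hN] at hd'; nlinarith)
  have hxyf : min (hh G w t g x (w x y + 1)) (hh G w t g y (w x y + 1)) = a := hxy.2
  have hcl : ∀ p z, G'.Adj p z → a ≤ hh G w t g z (w p z + 1) := by
    intro p z h
    have : min (hh G w t g p (w p z + 1)) (hh G w t g z (w p z + 1)) = a := h.2
    rw [← this]
    exact min_le_right _ _
  have fin : ∀ v, (v = x ∨ v = y) → hh G w t g v (w x y + 1) = a → False := by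
    intro v hv hva
    have hW := win_step (t := t) hG hg hcl (Win.of_hh hva.ge) (hroot v hv)
    have := Nat.le_findGreatest (P := Win G w t g v (w x y + 1)) (n := t)
      (Nat.succ_le_of_lt (Finset.mem_range.1 ha)) hW
    change a + 1 ≤ hh G w t g v (w x y + 1) at this
    omega
  rcases min_choice (hh G w t g x (w x y + 1)) (hh G w t g y (w x y + 1)) with h | h
  · exact fin x (Or.inl rfl) (h ▸ hxyf)
  · exact fin y (Or.inr rfl) (h ▸ hxyf)

lemma Hyp.weaken {V : Type*} [Fintype V] {w : V → V → ℕ} {D D' ℓ ℓ' : ℕ} (h : Hyp w D ℓ)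
    (hD : D ≤ D') (hl : ℓ' ≤ ℓ) : Hyp w D' ℓ' := by
  intro G A h1 h2 h3
  obtain ⟨v, l, a, b, c⟩ := h G A h1 h2 ((Nat.mul_le_mul_right _ hD).trans h3)
  exact ⟨v, l, a, b, hl.trans c⟩

lemma hyp_iter {V : Type*} [Fintype V] {w : V → V → ℕ}
    (hs : ∀ u v, w u v = w v u) (hi : ∀ u v v', w u v = w u v' → v = v')
    {L q : ℕ} (hq : 1 ≤ q) (hL : Fintype.card V < 2 ^ L) (r : ℕ) :
    Hyp w (q ^ (r + 2) * (13 * (L + 1) ^ 2) ^ (r + 1)) (q ^ (r + 1) * (L + 1)) := by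
  induction r with
  | zero =>
    refine (hyp_base hs hi (q * (L + 1))).weaken ?_ (by simp)
    have h1 : 1 ≤ q * (L + 1) := Nat.mul_pos hq (by omega)
    generalize hm : q * (L + 1) = m at h1
    have : q ^ (0 + 2) * (13 * (L + 1) ^ 2) ^ (0 + 1) = 13 * m ^ 2 := by rw [← hm]; ring
    rw [this]
    nlinarith
  | succ r ih =>
    have hg : 1 ≤ q ^ (r + 1) := Nat.one_le_pow _ _ hq
    have ht : 1 ≤ q * (L + 1) := Nat.mul_pos hq (by omega)
    refine (hyp_step hs hi ih hg ht le_rfl hL).weaken ?_ (le_of_eq (by ring))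
    have hD : q * (L + 1) * q ^ (r + 1) ≤ q ^ (r + 2) * (13 * (L + 1) ^ 2) ^ (r + 1) := by
      have : q * (L + 1) * q ^ (r + 1) = q ^ (r + 2) * (L + 1) := by ring
      rw [this]
      refine Nat.mul_le_mul_left _ ?_
      calc L + 1 ≤ 13 * (L + 1) ^ 2 := by nlinarith
        _ = (13 * (L + 1) ^ 2) ^ 1 := by ring
        _ ≤ _ := Nat.pow_le_pow_right (by positivity) (by omega)
    have hD1 : 1 ≤ q ^ (r + 2) * (13 * (L + 1) ^ 2) ^ (r + 1) :=
      Nat.mul_pos (Nat.pow_pos hq) (by positivity)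
    have e : q ^ (r + 1 + 2) * (13 * (L + 1) ^ 2) ^ (r + 1 + 1) =
      q * (L + 1) * (13 * (L + 1) * (q ^ (r + 2) * (13 * (L + 1) ^ 2) ^ (r + 1))) := by ring
    rw [e]
    refine Nat.mul_le_mul_left _ ?_
    generalize q ^ (r + 2) * (13 * (L + 1) ^ 2) ^ (r + 1) = D at *
    generalize q * (L + 1) * q ^ (r + 1) = T at *
    have h6 : 2 * D + 3 + T ≤ 6 * D := by omega
    have h7 := Nat.mul_le_mul_left (2 * (L + 1)) h6
    have h8 : 1 * 1 ≤ (L + 1) * D := Nat.mul_le_mul (by omega) hD1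
    nlinarith

lemma numeric (n : ℕ) (hn : 3 ≤ n) (d : ℝ) (hd : 2 ≤ d) :
    d / (2 : ℝ) ^ (50 * Real.sqrt (Real.logb 2 d * Real.logb 2 (Real.logb 2 (n : ℝ)))) ≤ 1 ∨
    ∃ q r : ℕ, 1 ≤ q ∧
      ((q ^ (r + 2) * (13 * ((Nat.log 2 n + 1) + 1) ^ 2) ^ (r + 1) : ℕ) : ℝ) ≤ d ∧
      d / (2 : ℝ) ^ (50 * Real.sqrt (Real.logb 2 d * Real.logb 2 (Real.logb 2 (n : ℝ)))) ≤
        ((q ^ (r + 1) * ((Nat.log 2 n + 1) + 1) : ℕ) : ℝ) := by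
  have hn' : (3 : ℝ) ≤ n := by exact_mod_cast hn
  set x := Real.logb 2 (n : ℝ) with hx
  have hx1 : (3 / 2 : ℝ) ≤ x := by
    rw [hx, Real.le_logb_iff_rpow_le one_lt_two (by linarith)]
    refine le_trans ?_ hn'
    refine le_of_sq_le_sq ?_ (by norm_num)
    rw [← Real.rpow_natCast, ← Real.rpow_mul (by norm_num)]
    norm_num
  set β := Real.logb 2 x with hβ
  have hβ1 : (1 / 2 : ℝ) ≤ β := by
    rw [hβ, Real.le_logb_iff_rpow_le one_lt_two (by linarith)]
    refine le_trans ?_ hx1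
    refine le_of_sq_le_sq ?_ (by norm_num)
    rw [← Real.rpow_natCast, ← Real.rpow_mul (by norm_num)]
    norm_num
  set y := Real.logb 2 d with hy
  have hy1 : 1 ≤ y := by
    rw [hy, Real.le_logb_iff_rpow_le one_lt_two (by linarith)]
    simpa using hd
  have hdy : d = (2 : ℝ) ^ y := (Real.rpow_logb two_pos (by norm_num) (by linarith)).symm
  have hxβ : x = (2 : ℝ) ^ β := (Real.rpow_logb two_pos (by norm_num) (by linarith)).symm
  set Q := Real.sqrt (y * β) with hQ
  have hQ0 : 0 ≤ Q := Real.sqrt_nonneg _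
  have hE : d / (2 : ℝ) ^ (50 * Q) = (2 : ℝ) ^ (y - 50 * Q) := by
    rw [hdy, Real.rpow_sub two_pos]
  rw [hE]
  set l := 7 + 2 * β with hl
  have hl8 : 8 ≤ l := by linarith
  have hB : ((13 * ((Nat.log 2 n + 1) + 1) ^ 2 : ℕ) : ℝ) ≤ (2 : ℝ) ^ l := by
    have h1 : (Nat.log 2 n : ℝ) ≤ x := by
      rw [hx, Real.le_logb_iff_rpow_le one_lt_two (by linarith), Real.rpow_natCast]
      exact_mod_cast Nat.pow_log_le_self 2 (by omega)
    have h2 : (2 : ℝ) ^ l = 128 * x ^ 2 := by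
      rw [hl, Real.rpow_add two_pos, hxβ, mul_comm 2 β, Real.rpow_mul (by norm_num)]
      norm_num
    rw [h2]
    push_cast
    have h3 : (0 : ℝ) ≤ (Nat.log 2 n : ℝ) := Nat.cast_nonneg _
    have h4 : ((Nat.log 2 n : ℝ) + 1 + 1) ^ 2 ≤ (3 * x) ^ 2 := by
      refine pow_le_pow_left₀ (by linarith) (by linarith) _
    nlinarith
  set R := Real.sqrt (y * l) with hR
  have hR2 : R ^ 2 = y * l := Real.sq_sqrt (by positivity)
  have hR0 : 0 ≤ R := Real.sqrt_nonneg _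
  have hQ2 : Q ^ 2 = y * β := Real.sq_sqrt (by positivity)
  have hRQ : R ≤ 4 * Q := by
    refine le_of_sq_le_sq ?_ (by linarith)
    rw [mul_pow, hR2, hQ2]
    nlinarith
  by_cases hc : y < 100 * l
  · left
    refine Real.rpow_le_one_of_one_le_of_nonpos one_le_two ?_
    have : y ≤ 10 * R := by
      refine le_of_sq_le_sq ?_ (by linarith)
      rw [mul_pow, hR2]
      nlinarith
    linarith
  · right
    push Not at hc
    have hRl : 10 * l ≤ R := by
      refine le_of_sq_le_sq ?_ hR0
      rw [hR2]; nlinarith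
    have hRy : R ≤ y / 10 := by
      refine le_of_sq_le_sq ?_ (by linarith)
      rw [hR2]; nlinarith
    set s := ⌈R⌉₊ with hs
    have hs1 : R ≤ s := Nat.le_ceil R
    have hs2 : (s : ℝ) ≤ 2 * R := by
      have := Nat.ceil_lt_add_one hR0
      linarith
    have hsl : 0 < (s : ℝ) + l := by linarith
    have hk2 : 2 ≤ ⌊y / (s + l)⌋₊ := by
      refine Nat.le_floor ?_
      rw [le_div_iff₀ hsl]
      push_cast
      linarith
    obtain ⟨r, hr⟩ : ∃ r, ⌊y / (s + l)⌋₊ = r + 2 := ⟨_, (Nat.sub_add_cancel hk2).symm⟩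
    have hk : ((r : ℝ) + 2) * (s + l) ≤ y := by
      have := Nat.floor_le (a := y / (s + l)) (by positivity)
      rw [hr, le_div_iff₀ hsl] at this
      exact_mod_cast this
    have hk' : y < ((r : ℝ) + 3) * (s + l) := by
      have := Nat.lt_floor_add_one (y / (s + l))
      rw [hr, div_lt_iff₀ hsl] at this
      push_cast at this
      linarith
    refine ⟨2 ^ s, r, Nat.one_le_two_pow, ?_, ?_⟩
    · rw [Nat.cast_mul, Nat.cast_pow, Nat.cast_pow (13 * _ ^ 2)]
      calc _ ≤ ((2 ^ s : ℕ) : ℝ) ^ (r + 2) * ((2 : ℝ) ^ l) ^ (r + 1) := by gcongr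
        _ = (2 : ℝ) ^ ((s : ℝ) * (r + 2) + l * (r + 1)) := by
          clear_value l
          rw [Real.rpow_add two_pos ((s : ℝ) * (r + 2)), Real.rpow_mul (by norm_num) (s : ℝ),
            Real.rpow_mul (by norm_num) l]
          norm_cast
        _ ≤ (2 : ℝ) ^ y := by
          refine Real.rpow_le_rpow_of_exponent_le one_le_two ?_
          linarith
        _ = d := hdy.symm
    · calc (2 : ℝ) ^ (y - 50 * Q) ≤ (2 : ℝ) ^ ((s : ℝ) * (r + 1)) := by
            refine Real.rpow_le_rpow_of_exponent_le one_le_two ?_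
            have h1 : y * l ≤ R * (s + l) := by rw [← hR2]; nlinarith
            have h2 : s * (((r : ℝ) + 3) * (s + l)) ≥ s * y := by
              exact mul_le_mul_of_nonneg_left hk'.le (by linarith)
            have h3 : y - R ≤ s * ((r : ℝ) + 3) := by
              by_contra hcon
              push Not at hcon
              have := mul_lt_mul_of_pos_right hcon hsl
              nlinarith
            linarith
        _ = (((2 ^ s) ^ (r + 1) : ℕ) : ℝ) := by
            rw [Real.rpow_mul (by norm_num)]
            norm_cast
        _ ≤ _ := by
            norm_cast
            exact Nat.le_mul_of_pos_right _ (by omega)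

lemma Mono.toWalk {V : Type*} {G : SimpleGraph V} {wt : Sym2 V → ℕ} {l : List V} :
    ∀ {τ : ℕ} {v : V}, Mono G (fun a b => wt s(a, b)) τ v l →
    ∃ (u : V) (p : G.Walk v u), p.support = v :: l ∧ EO.Increasing wt p.edges ∧
      (∀ e ∈ p.edges.head?, τ ≤ wt e) ∧ p.length = l.length := by
  induction l with
  | nil =>
    intro τ v _
    exact ⟨v, SimpleGraph.Walk.nil, by simp, List.isChain_nil, by simp, by simp⟩
  | cons a l ih =>
    intro τ v h
    obtain ⟨u, p, h1, h2, h3, h4⟩ := ih h.2.2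
    refine ⟨u, SimpleGraph.Walk.cons h.1 p, by simp [h1], ?_, ?_, by simp [h4]⟩
    · rw [SimpleGraph.Walk.edges_cons]
      exact List.isChain_cons.2 ⟨fun e he => h3 e he, h2⟩
    · intro e he
      simp at he
      rw [← he]
      exact h.2.1

lemma darts_eq {V : Type*} [Fintype V] (G : SimpleGraph V) :
    darts G = 2 * G.edgeSet.ncard := by
  have h1 : darts G = ∑ v, G.degree v := by
    unfold darts
    rw [Finset.card_filter, ← Finset.univ_product_univ, Finset.sum_product]
    refine Finset.sum_congr rfl fun v _ => ?_
    rw [← Finset.card_filter, ← SimpleGraph.card_neighborFinset_eq_degree]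
    congr 1
    ext u
    simp
  rw [h1, SimpleGraph.sum_degrees_eq_twice_card_edges, ← SimpleGraph.coe_edgeFinset,
    Set.ncard_coe_finset]

end MPath

/-- Theorem 1.2.  There is an absolute constant `C > 0` such that for
every `n`-vertex graph `G` with average degree `d ≥ 2` and every edge-ordering of `G`,
there is a monotone (increasing) path of length at least
`d / 2^(C·√(log₂ d · log₂ log₂ n))`. -/
theorem stmt14 :
    ∃ C : ℝ, 0 < C ∧
      ∀ (n : ℕ) (G : SimpleGraph (Fin n)) (wt : Sym2 (Fin n) → ℕ),
        Function.Injective wt →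
        ∀ d : ℝ, d = 2 * (G.edgeSet.ncard : ℝ) / (n : ℝ) → 2 ≤ d →
        ∃ (u v : Fin n) (p : G.Walk u v), p.IsPath ∧ EO.Increasing wt p.edges ∧
          d / (2 : ℝ) ^ (C * Real.sqrt (Real.logb 2 d * Real.logb 2 (Real.logb 2 (n : ℝ))))
            ≤ (p.length : ℝ) := by
  refine ⟨50, by norm_num, ?_⟩
  intro n G wt hwt d hd hd2
  have hn0 : 0 < n := by
    rcases Nat.eq_zero_or_pos n with rfl | h
    · simp at hd; linarith
    · exact h
  have hn0' : (0 : ℝ) < n := by exact_mod_cast hn0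
  have hdarts : d * n = (MPath.darts G : ℝ) := by
    rw [MPath.darts_eq, hd]
    push_cast
    field_simp
  have hbound : MPath.darts G + n ≤ n * n := by
    have h1 : MPath.darts G = ((Finset.univ.filter fun p : Fin n × Fin n =>
        G.Adj p.1 p.2)).card := rfl
    have h2 : (Finset.univ.image fun a : Fin n => (a, a)).card = n := by
      rw [Finset.card_image_of_injective _ (fun a b h => (Prod.mk.inj h).1)]
      simp
    have h3 := Finset.card_union_of_disjoint (s := Finset.univ.filter fun p : Fin n × Fin n =>
        G.Adj p.1 p.2) (t := Finset.univ.image fun a : Fin n => (a, a)) (by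
      rw [Finset.disjoint_left]
      intro p hp hp'
      obtain ⟨a, _, rfl⟩ := Finset.mem_image.1 hp'
      exact (Finset.mem_filter.1 hp).2.ne rfl)
    have h4 := Finset.card_le_univ ((Finset.univ.filter fun p : Fin n × Fin n =>
        G.Adj p.1 p.2) ∪ (Finset.univ.image fun a : Fin n => (a, a)))
    rw [h3, h2] at h4
    simpa [h1] using h4
  have hn3 : 3 ≤ n := by
    have h1 : 2 * n ≤ MPath.darts G := by
      have : (2 : ℝ) * n ≤ MPath.darts G := by rw [← hdarts]; gcongr
      exact_mod_cast this
    nlinarith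
  have hs : ∀ u v : Fin n, wt s(u, v) = wt s(v, u) := by
    intro u v; rw [Sym2.eq_swap]
  have hi : ∀ u v v' : Fin n, wt s(u, v) = wt s(u, v') → v = v' := by
    intro u v v' h
    exact Sym2.congr_right.1 (hwt h)
  have fin : ∀ (v : Fin n) (l : List (Fin n)) (E : ℝ),
      MPath.Mono G (fun a b => wt s(a, b)) 0 v l → (v :: l).Nodup → E ≤ (l.length : ℝ) →
      ∃ (u v : Fin n) (p : G.Walk u v), p.IsPath ∧ EO.Increasing wt p.edges ∧
        E ≤ (p.length : ℝ) := by
    intro v l E h1 h2 h3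
    obtain ⟨u, p, a1, a2, _, a4⟩ := h1.toWalk
    exact ⟨v, u, p, SimpleGraph.Walk.IsPath.mk' (by rw [a1]; exact h2), a2, by rw [a4]; exact h3⟩
  rcases MPath.numeric n hn3 d hd2 with h | ⟨q, r, hq, h1, h2⟩
  · have hpos : 0 < MPath.darts G := by
      have : (0 : ℝ) < MPath.darts G := by rw [← hdarts]; positivity
      exact_mod_cast this
    obtain ⟨p, hp⟩ := Finset.card_pos.1 hpos
    have hp := (Finset.mem_filter.1 hp).2
    exact fin p.1 [p.2] _ ⟨hp, Nat.zero_le _, trivial⟩ (by simpa using hp.ne) (by simpa using h)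
  · have hyp := MPath.hyp_iter (w := fun a b : Fin n => wt s(a, b)) hs hi hq
      (L := Nat.log 2 n + 1) (by
        rw [Fintype.card_fin]; exact Nat.lt_pow_succ_log_self one_lt_two n) r
    obtain ⟨v, l, m1, m2, m3⟩ := hyp G Finset.univ ⟨⟨0, hn0⟩, Finset.mem_univ _⟩
      (fun _ _ _ => Finset.mem_univ _) (by
        rw [Finset.card_univ, Fintype.card_fin]
        have := mul_le_mul_of_nonneg_right h1 hn0'.le
        rw [hdarts] at this
        exact_mod_cast this)
    exact fin v l _ m1 m2 (h2.trans (by exact_mod_cast m3))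
end

section
/- Every edge-ordering of the complete graph K_n contains a monotone path of length at least n / 2^{C√(log₂ n · log₂ log₂ n)} for some absolute constant C; in particular, every edge-ordering of K_n contains a monotone path of length n^{1−o(1)}. -/
open scoped Classical

namespace EOP

variable {V : Type*}

/-- `l` continues `v` to an increasing walk in `H` with all labels at least `t`. -/
def Good (wt : Sym2 V → ℕ) (H : Finset (Sym2 V)) : ℕ → V → List V → Prop
  | _, _, [] => True
  | t, v, w :: l => s(v, w) ∈ H ∧ t ≤ wt s(v, w) ∧ Good wt H (wt s(v, w) + 1) w l

def fin1 (wt : Sym2 V → ℕ) : ℕ → V → List V → ℕ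
  | t, _, [] => t
  | _, v, w :: l => fin1 wt (wt s(v, w) + 1) w l

def fin2 : V → List V → V
  | v, [] => v
  | _, w :: l => fin2 w l

def Lev (wt : Sym2 V → ℕ) (H : Finset (Sym2 V)) (δ : ℕ) : ℕ → V → ℕ → Prop
  | 0, _, _ => True
  | r + 1, v, t => ∃ O : Finset V, δ ≤ O.card ∧ ∀ w ∈ O, s(v, w) ∈ H ∧ t ≤ wt s(v, w) ∧
      Lev wt H δ r w (wt s(v, w) + 1) ∧ Lev wt H δ r v (wt s(v, w) + 1)

theorem Good.mono_t {wt : Sym2 V → ℕ} {H : Finset (Sym2 V)} {t t' : ℕ} {v : V} {l : List V}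
    (h : Good wt H t v l) (ht : t' ≤ t) : Good wt H t' v l := by
  cases l with
  | nil => trivial
  | cons w l => exact ⟨h.1, ht.trans h.2.1, h.2.2⟩

theorem Good.mono_H {wt : Sym2 V → ℕ} {H H' : Finset (Sym2 V)} (hH : H ⊆ H') {l : List V} :
    ∀ {t : ℕ} {v : V}, Good wt H t v l → Good wt H' t v l := by
  induction l with
  | nil => intros; trivial
  | cons w l ih => intro t v h; exact ⟨hH h.1, h.2.1, ih h.2.2⟩

theorem good_append {wt : Sym2 V → ℕ} {H : Finset (Sym2 V)} {l l' : List V} :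
    ∀ {t : ℕ} {v : V}, Good wt H t v (l ++ l') ↔
      Good wt H t v l ∧ Good wt H (fin1 wt t v l) (fin2 v l) l' := by
  induction l with
  | nil => intros; simp [Good, fin1, fin2]
  | cons w l ih => intro t v; simp [Good, fin1, fin2, ih, and_assoc]

theorem fin1_append {wt : Sym2 V → ℕ} {l l' : List V} :
    ∀ {t : ℕ} {v : V}, fin1 wt t v (l ++ l') = fin1 wt (fin1 wt t v l) (fin2 v l) l' := by
  induction l with
  | nil => intros; simp [fin1, fin2]
  | cons w l ih => intro t v; simp [fin1, fin2, ih]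

theorem fin2_append {l l' : List V} :
    ∀ {v : V}, fin2 v (l ++ l') = fin2 (fin2 v l) l' := by
  induction l with
  | nil => intros; simp [fin2]
  | cons w l ih => intro v; simp [fin2, ih]

theorem Good.le_fin1 {wt : Sym2 V → ℕ} {H : Finset (Sym2 V)} {l : List V} :
    ∀ {t : ℕ} {v : V}, Good wt H t v l → t ≤ fin1 wt t v l := by
  induction l with
  | nil => intros; simp [fin1]
  | cons w l ih =>
    intro t v h
    have := ih h.2.2
    have := h.2.1
    simp only [fin1]; omega

theorem Lev.mono_t {wt : Sym2 V → ℕ} {H : Finset (Sym2 V)} {δ r t t' : ℕ} {v : V}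
    (h : Lev wt H δ r v t) (ht : t' ≤ t) : Lev wt H δ r v t' := by
  cases r with
  | zero => trivial
  | succ r =>
    obtain ⟨O, h1, h2⟩ := h
    exact ⟨O, h1, fun w hw => ⟨(h2 w hw).1, ht.trans (h2 w hw).2.1, (h2 w hw).2.2⟩⟩

theorem Lev.pred {wt : Sym2 V → ℕ} {H : Finset (Sym2 V)} {δ r : ℕ} :
    ∀ {t : ℕ} {v : V}, Lev wt H δ (r + 1) v t → Lev wt H δ r v t := by
  induction r with
  | zero => intros; trivial
  | succ r ih =>
    rintro t v ⟨O, h1, h2⟩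
    exact ⟨O, h1, fun w hw => ⟨(h2 w hw).1, (h2 w hw).2.1, ih (h2 w hw).2.2.1,
      ih (h2 w hw).2.2.2⟩⟩

theorem Lev.mono_r {wt : Sym2 V → ℕ} {H : Finset (Sym2 V)} {δ r r' t : ℕ} {v : V}
    (h : Lev wt H δ r v t) (hr : r' ≤ r) : Lev wt H δ r' v t := by
  induction r, hr using Nat.le_induction with
  | base => exact h
  | succ n _ ih => exact ih h.pred

theorem fin_split (wt : Sym2 V → ℕ) (W1 W2 : List V) (v : V) (t : ℕ) (u : V) :
    fin2 u (W1 ++ v :: W2) = fin2 v W2 ∧ fin1 wt t u (W1 ++ v :: W2) =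
      fin1 wt (fin1 wt t u (W1 ++ [v])) v W2 := by
  constructor
  · rw [fin2_append]; rfl
  · have : W1 ++ v :: W2 = (W1 ++ [v]) ++ W2 := by simp
    rw [this, fin1_append, fin2_append]; rfl

theorem good_split {wt : Sym2 V → ℕ} {H : Finset (Sym2 V)} {W1 W2 : List V} {v : V} {t : ℕ} {u : V}
    (h : Good wt H t u (W1 ++ v :: W2)) :
    Good wt H (fin1 wt t u (W1 ++ [v])) v W2 ∧ t ≤ fin1 wt t u (W1 ++ [v]) := by
  have : W1 ++ v :: W2 = (W1 ++ [v]) ++ W2 := by simp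
  rw [this, good_append, fin2_append] at h
  exact ⟨h.2, h.1.le_fin1⟩

/-- Merging a short walk with a long path. -/
theorem merge (wt : Sym2 V → ℕ) (K : Finset (Sym2 V)) (M : ℕ) (s : ℕ) :
    ∀ (W : List V) (t : ℕ) (v : V) (Q : List V), W.length ≤ s → Good wt K t v W →
      Good wt K (fin1 wt t v W) (fin2 v W) Q → (fin2 v W :: Q).Nodup →
      (s + 1) * M ≤ Q.length →
      ∃ l, Good wt K t v l ∧ (v :: l).Nodup ∧ (∀ x ∈ l, x ∈ W ∨ x ∈ Q) ∧ M ≤ l.length := by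
  induction s with
  | zero =>
    intro W t v Q hs h1 h2 h3 h4
    obtain rfl : W = [] := List.length_eq_zero_iff.1 (by omega)
    exact ⟨Q, h2, h3, fun x hx => Or.inr hx, by simpa using h4⟩
  | succ s ih =>
    intro W t v Q hs h1 h2 h3 h4
    have h4' : (s + 1) * M + M ≤ Q.length := by linarith
    by_cases hvW : v ∈ W
    · obtain ⟨W1, W2, rfl⟩ := List.append_of_mem hvW
      obtain ⟨e2, e1⟩ := fin_split wt W1 W2 v t v
      rw [e1, e2] at h2
      rw [e2] at h3
      obtain ⟨g1, g2⟩ := good_split h1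
      obtain ⟨l, a1, a2, a3, a4⟩ := ih W2 _ v Q (by simp at hs; omega) g1 h2 h3 (by omega)
      exact ⟨l, a1.mono_t g2, a2, fun x hx => by rcases a3 x hx with h | h <;> simp [h], a4⟩
    cases W with
    | nil => exact ⟨Q, h2, h3, fun x hx => Or.inr hx, by omega⟩
    | cons w W =>
    simp only [fin1, fin2, List.length_cons] at h2 h3 h4 hs
    have hle : wt s(v, w) + 1 ≤ fin1 wt (wt s(v, w) + 1) w W := h1.2.2.le_fin1
    have ht := h1.2.1
    -- a general claim: cut `Q` at `v`
    have key : ∀ Q' : List V, Q' <+: Q → v ∉ Q' → (s + 1) * M ≤ Q'.length →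
        ∃ l, Good wt K t v l ∧ (v :: l).Nodup ∧ (∀ x ∈ l, x ∈ w :: W ∨ x ∈ Q) ∧
          M ≤ l.length := by
      rintro Q' ⟨Q'', rfl⟩ hv hlen
      obtain ⟨l, a1, a2, a3, a4⟩ := ih W (wt s(v, w) + 1) w Q' (by omega) h1.2.2
        (good_append.1 h2).1
        (by
          rw [← List.cons_append] at h3
          exact h3.of_append_left) hlen
      have hvl : v ∉ w :: l := by
        intro hv'
        rcases List.mem_cons.1 hv' with rfl | hx
        · simp at hvW
        · rcases a3 v hx with h | h
          · simp [h] at hvW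
          · exact hv h
      exact ⟨w :: l, ⟨h1.1, ht, a1⟩, List.nodup_cons.2 ⟨hvl, a2⟩, by
          intro x hx
          rcases List.mem_cons.1 hx with rfl | hx
          · simp
          · rcases a3 x hx with h | h <;> simp [h], by simp; omega⟩
    by_cases hvQ : v ∈ Q
    · obtain ⟨Q1, Q2, rfl⟩ := List.append_of_mem hvQ
      have nd := (List.nodup_cons.1 h3).2
      by_cases hM : M ≤ Q2.length
      · obtain ⟨g1, g2⟩ := good_split h2
        exact ⟨Q2, g1.mono_t (by omega), nd.of_append_right, fun x hx => by simp [hx], hM⟩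
      · refine key Q1 (by simp) ?_ (by simp at h4'; omega)
        intro h
        exact (List.disjoint_of_nodup_append nd) h (by simp)
    · exact key Q (List.prefix_refl _) hvQ (by omega)

/-- Density `D` forces an increasing path of length `L`. -/
def Forces (wt : Sym2 V → ℕ) (D L : ℕ) : Prop :=
  ∀ (A : Finset (Sym2 V)) (S : Finset V), S.Nonempty →
    (∀ e ∈ A, ¬ e.IsDiag ∧ ∀ x ∈ e, x ∈ S) → D * S.card ≤ A.card →
    ∃ v l, Good wt A 0 v l ∧ (v :: l).Nodup ∧ L ≤ l.length

theorem forces_one (wt : Sym2 V → ℕ) : Forces wt 1 1 := by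
  intro A S hS hA hc
  have : 0 < A.card := by have := hS.card_pos; omega
  obtain ⟨e, he⟩ := Finset.card_pos.1 this
  induction e using Sym2.ind with
  | _ a b =>
    have := (hA _ he).1
    exact ⟨a, [b], ⟨he, Nat.zero_le _, trivial⟩, by simpa using this, by simp⟩

/-- Existence of a vertex of large level. -/
theorem exists_lev (wt : Sym2 V → ℕ) (hwt : Function.Injective wt) (δ m : ℕ)
    (A : Finset (Sym2 V)) (S : Finset V) (hA : ∀ e ∈ A, ¬ e.IsDiag ∧ ∀ x ∈ e, x ∈ S)
    (hc : δ * m * S.card < A.card) : ∃ v ∈ S, Lev wt A δ m v 0 := by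
  by_contra! hno
  let r : V → ℕ → ℕ := fun v t => Nat.findGreatest (fun k => Lev wt A δ k v t) m
  have hr : ∀ v t, Lev wt A δ (r v t) v t := fun v t =>
    Nat.findGreatest_spec (P := fun k => Lev wt A δ k v t) (Nat.zero_le m) trivial
  have hex : ∀ e, ∃ p : V × V, s(p.1, p.2) = e ∧ r p.1 (wt e + 1) ≤ r p.2 (wt e + 1) := by
    intro e
    induction e using Sym2.ind with
    | _ a b =>
      rcases le_total (r a (wt s(a, b) + 1)) (r b (wt s(a, b) + 1)) with h | h
      · exact ⟨(a, b), rfl, h⟩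
      · exact ⟨(b, a), Sym2.eq_swap, h⟩
  choose p hp1 hp2 using hex
  have hpS : ∀ e ∈ A, (p e).1 ∈ S := by
    intro e he
    refine (hA e he).2 _ ?_
    have h := Sym2.mem_mk_left (p e).1 (p e).2
    rwa [hp1 e] at h
  have hlt : ∀ v ∈ S, ∀ t, r v t < m := by
    intro v hv t
    refine lt_of_le_of_ne (Nat.findGreatest_le m) ?_
    intro h
    have := hr v t
    rw [h] at this
    exact hno v hv (this.mono_t (Nat.zero_le _))
  let f : Sym2 V → V × ℕ := fun e => ((p e).1, r (p e).1 (wt e + 1))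
  obtain ⟨⟨v, ρ⟩, hy, hcard⟩ := Finset.exists_lt_card_fiber_of_mul_lt_card_of_maps_to
    (s := A) (t := S ×ˢ Finset.range m) (f := f) (n := δ)
    (by
      intro e he
      exact Finset.mem_product.2 ⟨hpS e he, Finset.mem_range.2 (hlt _ (hpS e he) _)⟩)
    (by rw [Finset.card_product, Finset.card_range]; calc
          _ = δ * m * S.card := by ring
          _ < _ := hc)
  have hvS : v ∈ S := (Finset.mem_product.1 hy).1
  set F := A.filter (fun e => f e = (v, ρ)) with hF
  have hFm : ∀ e ∈ F, e ∈ A ∧ (p e).1 = v ∧ r v (wt e + 1) = ρ := by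
    intro e he
    obtain ⟨h1, h2⟩ := Finset.mem_filter.1 he
    simp only [f, Prod.mk.injEq] at h2
    refine ⟨h1, h2.1, ?_⟩
    rw [← h2.1]; exact h2.2
  obtain ⟨e0, he0, hmin⟩ := Finset.exists_min_image F wt (Finset.card_pos.1 (by omega))
  have hlev : Lev wt A δ (ρ + 1) v (wt e0 + 1) := by
    refine ⟨(F.erase e0).image (fun e => (p e).2), ?_, ?_⟩
    · rw [Finset.card_image_of_injOn, Finset.card_erase_of_mem he0]
      · omega
      · intro a ha b hb hab
        have ha := hFm a (Finset.mem_of_mem_erase ha)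
        have hb := hFm b (Finset.mem_of_mem_erase hb)
        rw [← hp1 a, ← hp1 b, ha.2.1, hb.2.1]
        simp only at hab
        rw [hab]
    · intro w hw
      obtain ⟨e, he, rfl⟩ := Finset.mem_image.1 hw
      obtain ⟨hne, he⟩ := Finset.mem_erase.1 he
      obtain ⟨h1, h2, h3⟩ := hFm e he
      have h4 := hp1 e
      have h5 := hp2 e
      rw [h2] at h4 h5
      rw [h4]
      rw [h3] at h5
      refine ⟨h1, ?_, (hr _ _).mono_r h5, ?_⟩
      · have := hmin e he
        have : wt e0 ≠ wt e := fun h => hne (hwt h).symm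
        omega
      · have := hr v (wt e + 1)
        rwa [h3] at this
  have h3 := (hFm e0 he0).2.2
  have h4 := hlt v hvS (wt e0 + 1)
  have := Nat.le_findGreatest (P := fun k => Lev wt A δ k v (wt e0 + 1)) (m := ρ + 1) (n := m)
    (by omega) hlev
  change ρ + 1 ≤ r v (wt e0 + 1) at this
  omega

theorem lev_fin {wt : Sym2 V → ℕ} {H K : Finset (Sym2 V)} {δ ρ : ℕ}
    (hK : ∀ e ∈ K, ∀ x ∈ e, Lev wt H δ ρ x (wt e + 1)) {l : List V} :
    ∀ {t : ℕ} {v : V}, Good wt K t v l → Lev wt H δ ρ v t →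
      Lev wt H δ ρ (fin2 v l) (fin1 wt t v l) := by
  induction l with
  | nil => intro t v _ h; exact h
  | cons w l ih => intro t v h _; exact ih h.2.2 (hK _ h.1 w (by simp))

theorem fin2_mem (l : List V) : ∀ v : V, fin2 v l = v ∨ fin2 v l ∈ l := by
  induction l with
  | nil => intro v; exact Or.inl rfl
  | cons w l ih =>
    intro v
    right
    rcases ih w with h | h
    · simp [fin2, h]
    · simp [fin2, h]

theorem Good.mem_edge {wt : Sym2 V → ℕ} {H : Finset (Sym2 V)} {l : List V} :
    ∀ {t : ℕ} {v : V}, Good wt H t v l → ∀ x ∈ l, ∃ e ∈ H, x ∈ e := by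
  induction l with
  | nil => intro t v _ x hx; simp at hx
  | cons w l ih =>
    intro t v h x hx
    rcases List.mem_cons.1 hx with rfl | hx
    · exact ⟨_, h.1, by simp⟩
    · exact ih h.2.2 x hx

theorem group [Fintype V] (wt : Sym2 V → ℕ) (H : Finset (Sym2 V)) (D L lam M ρ : ℕ)
    (hP : Forces wt D L) (hlam : Fintype.card V < 2 ^ lam)
    (hH : ∀ e ∈ H, ¬ e.IsDiag) (hM : lam * M ≤ L - 1) (v : V) (t : ℕ) (U : Finset V)
    (hU : U.card ≤ 6 * D) (hlev : Lev wt H (12 * D) (ρ + lam) v t) :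
    ∃ l, Good wt H t v l ∧ (v :: l).Nodup ∧ (∀ x ∈ l, x ∉ U) ∧ M ≤ l.length ∧
      Lev wt H (12 * D) ρ (fin2 v l) (fin1 wt t v l) := by
  have hlev0 : Lev wt H (12 * D) ρ v t := hlev.mono_r (by omega)
  rcases Nat.eq_zero_or_pos M with rfl | hMpos
  · exact ⟨[], trivial, by simp, by simp, by simp, hlev0⟩
  by_contra hcon
  set K := H.filter (fun e => ∀ x ∈ e, Lev wt H (12 * D) ρ x (wt e + 1)) with hKdef
  have hKH : K ⊆ H := Finset.filter_subset _ _
  have hK : ∀ e ∈ K, ∀ x ∈ e, Lev wt H (12 * D) ρ x (wt e + 1) :=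
    fun e he => (Finset.mem_filter.1 he).2
  let Reach : ℕ → V → Prop := fun i y => ∃ W : List V, W.length = i ∧ Good wt K t v W ∧
    (∀ x ∈ W, x ∉ U) ∧ fin2 v W = y ∧ Lev wt H (12 * D) (ρ + lam - i) y (fin1 wt t v W)
  have hReachU : ∀ i y, Reach i y → y = v ∨ y ∉ U := by
    rintro i y ⟨W, -, -, h, rfl, -⟩
    rcases fin2_mem W v with h' | h'
    · exact Or.inl h'
    · exact Or.inr (h _ h')
  let R : ℕ → Finset V := fun i => Finset.univ.filter (Reach i)
  have hR : ∀ i y, y ∈ R i ↔ Reach i y := fun i y => by simp [R]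
  have hstep : ∀ i < lam, (R i).Nonempty → 2 * (R i).card ≤ (R (i + 1)).card := by
    intro i hi hne
    by_contra hsmall
    have hch : ∀ y ∈ R i, ∃ (W : List V) (O : Finset V), W.length = i ∧ Good wt K t v W ∧
        (∀ x ∈ W, x ∉ U) ∧ fin2 v W = y ∧ 12 * D ≤ O.card ∧ ∀ w ∈ O, s(y, w) ∈ H ∧
          fin1 wt t v W ≤ wt s(y, w) ∧ Lev wt H (12 * D) (ρ + lam - (i + 1)) w (wt s(y, w) + 1) ∧
          Lev wt H (12 * D) (ρ + lam - (i + 1)) y (wt s(y, w) + 1) := by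
      intro y hy
      obtain ⟨W, h1, h2, h3, h4, h5⟩ := (hR i y).1 hy
      have e : ρ + lam - i = (ρ + lam - (i + 1)) + 1 := by omega
      rw [e] at h5
      obtain ⟨O, h6, h7⟩ := h5
      exact ⟨W, O, h1, h2, h3, h4, h6, h7⟩
    choose! W O hW1 hW2 hW3 hW4 hO1 hO2 using hch
    have hmem : ∀ y ∈ R i, ∀ w ∈ O y, w ∉ U → s(y, w) ∈ K ∧ w ∈ R (i + 1) := by
      intro y hy w hw hwU
      obtain ⟨g1, g2, g3, g4⟩ := hO2 y hy w hw
      have hk : s(y, w) ∈ K := by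
        refine Finset.mem_filter.2 ⟨g1, ?_⟩
        intro x hx
        rcases Sym2.mem_iff.1 hx with rfl | rfl
        · exact g4.mono_r (by omega)
        · exact g3.mono_r (by omega)
      refine ⟨hk, (hR _ _).2 ⟨W y ++ [w], by simp [hW1 y hy], ?_, ?_, ?_, ?_⟩⟩
      · rw [good_append, hW4 y hy]
        exact ⟨hW2 y hy, hk, g2, trivial⟩
      · intro x hx
        rcases List.mem_append.1 hx with h | h
        · exact hW3 y hy x h
        · rw [List.mem_singleton.1 h]; exact hwU
      · rw [fin2_append]; rfl
      · rw [fin1_append, hW4 y hy]; exact g3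
    let T : Finset (Σ _ : V, V) := (R i).sigma (fun y => O y \ U)
    let f : (Σ _ : V, V) → Sym2 V := fun p => s(p.1, p.2)
    have hT : (R i).card * (6 * D) ≤ T.card := by
      rw [Finset.card_sigma, ← smul_eq_mul]
      refine Finset.card_nsmul_le_sum _ _ _ ?_
      intro y hy
      have := Finset.le_card_sdiff U (O y)
      have := hO1 y hy
      omega
    have hTA : T.card ≤ 2 * (T.image f).card := by
      refine Finset.card_le_mul_card_image T 2 ?_
      intro e he
      induction e using Sym2.ind with
      | _ a b =>
        refine (Finset.card_le_card (t := {⟨a, b⟩, ⟨b, a⟩}) ?_).trans Finset.card_le_two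
        rintro ⟨x, y⟩ hx
        have := (Finset.mem_filter.1 hx).2
        simp only [f, Sym2.eq_iff] at this
        rcases this with ⟨rfl, rfl⟩ | ⟨rfl, rfl⟩ <;> simp
    have hA : ∀ e ∈ T.image f, ∃ y ∈ R i, ∃ w ∈ O y, w ∉ U ∧ e = s(y, w) := by
      intro e he
      obtain ⟨⟨y, w⟩, hp, rfl⟩ := Finset.mem_image.1 he
      obtain ⟨h1, h2⟩ := Finset.mem_sigma.1 hp
      obtain ⟨h2, h3⟩ := Finset.mem_sdiff.1 h2
      exact ⟨y, h1, w, h2, h3, rfl⟩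
    have hAK : T.image f ⊆ K := by
      intro e he
      obtain ⟨y, hy, w, hw, hwU, rfl⟩ := hA e he
      exact (hmem y hy w hw hwU).1
    have hAS : ∀ e ∈ T.image f, ∀ x ∈ e, x ∈ R i ∪ R (i + 1) := by
      intro e he x hx
      obtain ⟨y, hy, w, hw, hwU, rfl⟩ := hA e he
      rcases Sym2.mem_iff.1 hx with rfl | rfl
      · exact Finset.mem_union_left _ hy
      · exact Finset.mem_union_right _ (hmem y hy _ hw hwU).2
    obtain ⟨q0, l0, hg, hnd, hlen⟩ := hP (T.image f) (R i ∪ R (i + 1)) (hne.mono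
      Finset.subset_union_left) (fun e he => ⟨hH e (hKH (hAK he)), hAS e he⟩) (by
        have h1 := Finset.card_union_le (R i) (R (i + 1))
        have h2 : (R i ∪ R (i + 1)).card ≤ 3 * (R i).card := by omega
        have h3 := Nat.mul_le_mul_left D h2
        nlinarith)
    have hiM : (i + 1) * M ≤ L - 1 := (Nat.mul_le_mul_right M hi).trans hM
    have hpos : 1 ≤ (i + 1) * M := Nat.mul_pos (by omega) hMpos
    have fin : ∀ y ∈ R i, ∀ Q : List V, (∀ x ∈ Q, x ∈ l0) →
        Good wt (T.image f) (fin1 wt t v (W y)) y Q → (y :: Q).Nodup → (i + 1) * M ≤ Q.length →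
        False := by
      intro y hy Q hQ1 hQ2 hQ3 hQ4
      obtain ⟨l, a1, a2, a3, a4⟩ := merge wt K M i (W y) t v Q (hW1 y hy).le (hW2 y hy)
        (by rw [hW4 y hy]; exact hQ2.mono_H hAK) (by rw [hW4 y hy]; exact hQ3) hQ4
      refine hcon ⟨l, a1.mono_H hKH, a2, ?_, a4, lev_fin hK a1 hlev0⟩
      intro x hx
      rcases a3 x hx with h | h
      · exact hW3 y hy x h
      · obtain ⟨e, he, hxe⟩ := hg.mem_edge x (hQ1 x h)
        have hxv : x ≠ v := by
          rintro rfl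
          exact (List.nodup_cons.1 a2).1 hx
        rcases Finset.mem_union.1 (hAS e he x hxe) with h | h
        · exact (hReachU _ _ ((hR _ _).1 h)).resolve_left hxv
        · exact (hReachU _ _ ((hR _ _).1 h)).resolve_left hxv
    cases l0 with
    | nil => simp at hlen; omega
    | cons q1 l1 =>
      obtain ⟨y, hy, w, hw, hwU, he⟩ := hA _ hg.1
      have hlab := (hO2 y hy w hw).2.1
      rw [← he] at hlab
      simp only [List.length_cons] at hlen
      rcases Sym2.eq_iff.1 he with ⟨rfl, rfl⟩ | ⟨rfl, rfl⟩
      · exact fin q0 hy (q1 :: l1) (fun x hx => hx) ⟨hg.1, hlab, hg.2.2⟩ hnd (by simp; omega)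
      · exact fin q1 hy l1 (fun x hx => List.mem_cons_of_mem _ hx)
          (hg.2.2.mono_t (by omega)) (List.nodup_cons.1 hnd).2 (by omega)
  have hgrow : ∀ i ≤ lam, 2 ^ i ≤ (R i).card := by
    intro i
    induction i with
    | zero =>
      intro _
      have : v ∈ R 0 := (hR 0 v).2 ⟨[], rfl, trivial, by simp, rfl, by simpa [fin1] using hlev⟩
      exact Finset.card_pos.2 ⟨v, this⟩
    | succ i ih =>
      intro hi
      have h1 := ih (by omega)
      have h2 := hstep i (by omega) (Finset.card_pos.1 (lt_of_lt_of_le (by positivity) h1))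
      rw [pow_succ]; omega
  have := hgrow lam le_rfl
  have h2 := Finset.card_le_univ (R lam)
  omega

theorem chain [Fintype V] (wt : Sym2 V → ℕ) (H : Finset (Sym2 V)) (D L lam M : ℕ) (hD : 1 ≤ D)
    (hP : Forces wt D L) (hlam : Fintype.card V < 2 ^ lam)
    (hH : ∀ e ∈ H, ¬ e.IsDiag) (hM : lam * M ≤ L - 1) (g : ℕ) :
    ∀ (v : V) (t : ℕ) (U : Finset V), v ∈ U → Lev wt H (12 * D) (g * (lam + 1)) v t →
    ∃ l, Good wt H t v l ∧ l.Nodup ∧ (∀ x ∈ l, x ∉ U) ∧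
      min (g * (M + 1)) (6 * D - U.card) ≤ l.length := by
  induction g with
  | zero => intro v t U _ _; exact ⟨[], trivial, by simp, by simp, by simp⟩
  | succ g ih =>
    intro v t U hv hl
    by_cases hU : 6 * D ≤ U.card
    · exact ⟨[], trivial, by simp, by simp, by simp; omega⟩
    have e : (g + 1) * (lam + 1) = (g * (lam + 1) + lam) + 1 := by ring
    rw [e] at hl
    obtain ⟨O, hO, hO2⟩ := hl
    obtain ⟨w, hwO, hwU⟩ : ∃ w ∈ O, w ∉ U := by
      by_contra! h
      have := Finset.card_le_card (show O ⊆ U from h)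
      omega
    obtain ⟨g1, g2, g3, -⟩ := hO2 w hwO
    obtain ⟨l1, a1, a2, a3, a4, a5⟩ := group wt H D L lam M (g * (lam + 1)) hP hlam hH hM w
      (wt s(v, w) + 1) (insert w U) (by rw [Finset.card_insert_of_notMem hwU]; omega) g3
    have hz : fin2 w l1 ∈ insert w U ∪ l1.toFinset := by
      rcases fin2_mem l1 w with h | h
      · rw [h]; simp
      · simp [h]
    obtain ⟨l2, b1, b2, b3, b4⟩ := ih (fin2 w l1) (fin1 wt (wt s(v, w) + 1) w l1)
      (insert w U ∪ l1.toFinset) hz a5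
    refine ⟨w :: (l1 ++ l2), ⟨g1, g2, good_append.2 ⟨a1, b1⟩⟩, ?_, ?_, ?_⟩
    · rw [← List.cons_append, List.nodup_append]
      refine ⟨a2, b2, ?_⟩
      rintro x hx y hy rfl
      apply b3 x hy
      rcases List.mem_cons.1 hx with rfl | h
      · simp
      · simp [h]
    · intro x hx
      rcases List.mem_cons.1 hx with rfl | hx
      · exact hwU
      · rcases List.mem_append.1 hx with h | h
        · have := a3 x h
          simp at this; exact this.2
        · have := b3 x h
          simp at this; exact this.2.1
    · have c1 := Finset.card_union_le (insert w U) l1.toFinset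
      have c2 := Finset.card_insert_le w U
      have c3 := List.toFinset_card_le l1
      simp only [List.length_cons, List.length_append]
      have : (g + 1) * (M + 1) = g * (M + 1) + (M + 1) := by ring
      rw [this]
      omega

theorem step [Fintype V] (wt : Sym2 V → ℕ) (hwt : Function.Injective wt) (D L lam g : ℕ)
    (hD : 1 ≤ D) (hP : Forces wt D L) (hlam : Fintype.card V < 2 ^ lam) (hl : 1 ≤ lam) :
    Forces wt (12 * D * (g * lam * (lam + 1)) + 1) (min (g * L) (6 * D - 1)) := by
  intro A S hS hA hc
  obtain ⟨v, hv, hlev⟩ := exists_lev wt hwt (12 * D) (g * lam * (lam + 1)) A S hA (by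
    have := hS.card_pos
    nlinarith)
  obtain ⟨l, h1, h2, h3, h4⟩ := chain wt A D L lam ((L - 1) / lam) hD hP hlam
    (fun e he => (hA e he).1) (Nat.mul_div_le _ _) (g * lam) v 0 {v} (by simp) hlev
  refine ⟨v, l, h1, List.nodup_cons.2 ⟨fun h => h3 v h (by simp), h2⟩, le_trans ?_ h4⟩
  have : L ≤ lam * ((L - 1) / lam + 1) := by
    have := Nat.lt_mul_div_succ (L - 1) (show 0 < lam by omega)
    omega
  have h5 : g * L ≤ g * lam * ((L - 1) / lam + 1) := by
    rw [mul_assoc]; exact Nat.mul_le_mul_left g this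
  simp only [Finset.card_singleton]
  omega

theorem Forces.mono {wt : Sym2 V → ℕ} {D L D' L' : ℕ} (h : Forces wt D L) (hD : D ≤ D')
    (hL : L' ≤ L) : Forces wt D' L' := by
  intro A S hS hA hc
  obtain ⟨v, l, h1, h2, h3⟩ := h A S hS hA ((Nat.mul_le_mul_right _ hD).trans hc)
  exact ⟨v, l, h1, h2, hL.trans h3⟩

/-- the triangular exponents -/
def tri : ℕ → ℕ
  | 0 => 0
  | k + 1 => tri k + k

theorem tri_eq (k : ℕ) : 2 * tri (k + 1) = k * (k + 1) := by
  induction k with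
  | zero => simp [tri]
  | succ k ih => rw [tri, mul_add, ih]; ring

theorem forces_all [Fintype V] (wt : Sym2 V → ℕ) (hwt : Function.Injective wt) (lam : ℕ)
    (hlam : Fintype.card V < 2 ^ lam) (hl : 1 ≤ lam) (k : ℕ) :
    Forces wt ((13 * lam * (lam + 1)) ^ tri (k + 1)) ((13 * lam * (lam + 1)) ^ tri k) := by
  set A := 13 * lam * (lam + 1) with hA
  have hApos : 0 < A := by positivity
  induction k with
  | zero => simpa [tri] using forces_one wt
  | succ k ih =>
    have hDpos : 0 < A ^ tri (k + 1) := by positivity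
    refine (step wt hwt (A ^ tri (k + 1)) (A ^ tri k) lam (A ^ k) hDpos ih hlam hl).mono ?_ ?_
    · have e : A ^ tri (k + 1 + 1) = 13 * (A ^ tri (k + 1) * (A ^ k * lam * (lam + 1))) := by
        rw [show tri (k + 1 + 1) = tri (k + 1) + (k + 1) from rfl, pow_add, pow_succ]
        conv_lhs => rw [hA]
        ring
      have : 0 < A ^ tri (k + 1) * (A ^ k * lam * (lam + 1)) := by positivity
      rw [e]; nlinarith
    · have : A ^ k * A ^ tri k = A ^ tri (k + 1) := by
        rw [← pow_add, tri, add_comm]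
      rw [this]
      omega

theorem to_walk {n : ℕ} (wt : Sym2 (Fin n) → ℕ) (A : Finset (Sym2 (Fin n))) (l : List (Fin n)) :
    ∀ (t : ℕ) (v : Fin n), Good wt A t v l → (v :: l).Nodup →
    ∃ (u : Fin n) (p : (⊤ : SimpleGraph (Fin n)).Walk v u), p.support = v :: l ∧
      EO.Increasing wt p.edges ∧ (∀ e ∈ p.edges, t ≤ wt e) ∧ p.length = l.length := by
  induction l with
  | nil => 
    intro t v _ _
    exact ⟨v, SimpleGraph.Walk.nil, by simp, by simp [EO.Increasing, List.Chain'], by simp, by simp⟩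
  | cons w l ih =>
    intro t v h hn
    obtain ⟨u, p, h1, h2, h3, h4⟩ := ih _ w h.2.2 (List.nodup_cons.1 hn).2
    have hne : v ≠ w := by
      rintro rfl
      simp at hn
    refine ⟨u, SimpleGraph.Walk.cons (by simpa using hne) p, by simp [h1], ?_, ?_, by simp [h4]⟩
    · unfold EO.Increasing List.Chain' at *
      rw [SimpleGraph.Walk.edges_cons, List.isChain_cons]
      refine ⟨fun e he => ?_, h2⟩
      have := h3 e (List.mem_of_mem_head? he)
      omega
    · intro e he
      rw [SimpleGraph.Walk.edges_cons] at he
      rcases List.mem_cons.1 he with rfl | he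
      · exact h.2.1
      · have := h3 e he
        have := h.2.1
        omega

theorem nat_main (n : ℕ) (hn : 3 ≤ n) (wt : Sym2 (Fin n) → ℕ) (hwt : Function.Injective wt)
    (k : ℕ) (lam : ℕ) (hlam : n < 2 ^ lam) (hl : 1 ≤ lam)
    (hk : 2 * (13 * lam * (lam + 1)) ^ tri (k + 1) ≤ n - 1) :
    ∃ (u v : Fin n) (p : (⊤ : SimpleGraph (Fin n)).Walk u v),
      p.IsPath ∧ EO.Increasing wt p.edges ∧ (13 * lam * (lam + 1)) ^ tri k ≤ p.length := by
  have hF := forces_all wt hwt lam (by simpa using hlam) hl k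
  have hcard : (Finset.univ.filter (fun e : Sym2 (Fin n) => ¬ e.IsDiag)).card = n.choose 2 := by
    have := Sym2.card_subtype_not_diag (α := Fin n)
    rw [Fintype.card_subtype, Fintype.card_fin] at this
    convert this
  obtain ⟨v, l, h1, h2, h3⟩ := hF (Finset.univ.filter (fun e => ¬ e.IsDiag)) Finset.univ
    ⟨⟨0, by omega⟩, Finset.mem_univ _⟩ (fun e he => ⟨(Finset.mem_filter.1 he).2, by simp⟩) (by
      rw [hcard, Finset.card_univ, Fintype.card_fin, Nat.choose_two_right,
        Nat.le_div_iff_mul_le (by norm_num)]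
      nlinarith)
  obtain ⟨u, p, a1, a2, a3, a4⟩ := to_walk wt _ l 0 v h1 h2
  exact ⟨v, u, p, by rw [SimpleGraph.Walk.isPath_def, a1]; exact h2, a2, by omega⟩

end EOP

/-- Theorem 1.1.  There is an absolute constant `C > 0` such that every
edge-ordering of the complete graph `K_n` (for `n ≥ 3`) contains a monotone (increasing)
path of length at least `n / 2^(C·√(log₂ n · log₂ log₂ n))`; in particular, every
edge-ordering of `K_n` contains a monotone path of length `n^(1−o(1))`. -/
theorem stmt15 :
    ∃ C : ℝ, 0 < C ∧
      ∀ n : ℕ, 3 ≤ n → ∀ wt : Sym2 (Fin n) → ℕ, Function.Injective wt →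
        ∃ (u v : Fin n) (p : (⊤ : SimpleGraph (Fin n)).Walk u v),
          p.IsPath ∧ EO.Increasing wt p.edges ∧
          (n : ℝ) /
              (2 : ℝ) ^ (C * Real.sqrt (Real.logb 2 (n : ℝ) * Real.logb 2 (Real.logb 2 (n : ℝ))))
            ≤ (p.length : ℝ) := by
  refine ⟨29, by norm_num, ?_⟩
  intro n hn wt hwt
  set lam := Nat.log 2 n + 1 with hlam
  have hlamn : n < 2 ^ lam := Nat.lt_pow_succ_log_self (by norm_num) n
  set A := 13 * lam * (lam + 1) with hA
  have hA2 : 2 ≤ A := by rw [hA]; nlinarith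
  -- choose the largest admissible `k`
  have hex : ∃ k, n - 1 < 2 * A ^ EOP.tri (k + 1) := by
    refine ⟨n, ?_⟩
    have h1 : n ≤ EOP.tri (n + 1) := by have := EOP.tri_eq n; nlinarith
    have h2 : n < 2 ^ n := Nat.lt_two_pow_self
    have h3 : 2 ^ n ≤ A ^ EOP.tri (n + 1) :=
      (Nat.pow_le_pow_left hA2 n).trans (Nat.pow_le_pow_right (by omega) h1)
    omega
  obtain ⟨k, hk1, hk2⟩ : ∃ k, 2 * A ^ EOP.tri (k + 1) ≤ n - 1 ∧
      n - 1 < 2 * A ^ EOP.tri (k + 1 + 1) := by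
    have h0 := Nat.find_spec hex
    have hpos : Nat.find hex ≠ 0 := by
      intro h
      rw [h] at h0
      simp [EOP.tri] at h0
      omega
    obtain ⟨k, hk⟩ := Nat.exists_eq_succ_of_ne_zero hpos
    refine ⟨k, ?_, ?_⟩
    · have := Nat.find_min hex (m := k) (by omega)
      omega
    · rw [hk] at h0; exact h0
  obtain ⟨u, v, p, h1, h2, h3⟩ := EOP.nat_main n hn wt hwt k lam hlamn (by omega) hk1
  refine ⟨u, v, p, h1, h2, ?_⟩
  have h3' : ((A : ℝ) ^ EOP.tri k) ≤ (p.length : ℝ) := by exact_mod_cast h3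
  refine le_trans ?_ h3'
  have hApos : (0 : ℝ) < A := by exact_mod_cast (by omega : 0 < A)
  have hnpos : (0 : ℝ) < n := by exact_mod_cast (by omega : 0 < n)
  -- `n ≤ 4 A^(2k+1) A^(tri k)`
  have hn4 : (n : ℝ) ≤ 4 * (A : ℝ) ^ (2 * k + 1) * (A : ℝ) ^ EOP.tri k := by
    have e : A ^ EOP.tri (k + 1 + 1) = A ^ (2 * k + 1) * A ^ EOP.tri k := by
      rw [← pow_add]; congr 1; simp only [EOP.tri]; ring
    rw [e] at hk2
    have : n ≤ 4 * A ^ (2 * k + 1) * A ^ EOP.tri k := by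
      rw [mul_assoc]; omega
    exact_mod_cast this
  -- logarithms
  set ℓ := Real.logb 2 (n : ℝ) with hℓ
  set x := Real.logb 2 ℓ with hx
  set a := Real.logb 2 (A : ℝ) with ha
  have two : (1 : ℝ) < 2 := by norm_num
  have hℓ1 : (3 : ℝ) / 2 ≤ ℓ := by
    rw [hℓ, Real.le_logb_iff_rpow_le two hnpos]
    have h8 : ((2 : ℝ) ^ ((3 : ℝ) / 2)) ^ 2 = 8 := by
      rw [← Real.rpow_natCast, ← Real.rpow_mul (by norm_num)]; norm_num
    have h9 : (3 : ℝ) ≤ n := by exact_mod_cast hn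
    have : (0 : ℝ) ≤ (2 : ℝ) ^ ((3 : ℝ) / 2) := by positivity
    nlinarith
  have hx1 : (1 : ℝ) / 2 ≤ x := by
    rw [hx, Real.le_logb_iff_rpow_le two (by linarith)]
    have h8 : ((2 : ℝ) ^ ((1 : ℝ) / 2)) ^ 2 = 2 := by
      rw [← Real.rpow_natCast, ← Real.rpow_mul (by norm_num)]; norm_num
    have : (0 : ℝ) ≤ (2 : ℝ) ^ ((1 : ℝ) / 2) := by positivity
    nlinarith
  have hxl : x ≤ ℓ := by
    rw [hx, Real.logb_le_iff_le_rpow two (by linarith)]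
    rw [hℓ, Real.rpow_logb (by norm_num) (by norm_num) hnpos, ← hℓ]
    rw [hℓ, Real.logb_le_iff_le_rpow two hnpos, Real.rpow_natCast]
    exact_mod_cast Nat.lt_two_pow_self.le
  have hlamℓ : (lam : ℝ) ≤ ℓ + 1 := by
    rw [hlam]; push_cast
    have : ((Nat.log 2 n : ℕ) : ℝ) ≤ ℓ := by
      rw [hℓ, Real.le_logb_iff_rpow_le two hnpos, Real.rpow_natCast]
      exact_mod_cast Nat.pow_log_le_self 2 (by omega)
    linarith
  have hAℓ : (A : ℝ) ≤ ℓ ^ 13 := by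
    have e1 : (A : ℝ) = 13 * lam * (lam + 1) := by rw [hA]; push_cast; ring
    have e2 : (A : ℝ) ≤ 78 * ℓ ^ 2 := by
      rw [e1]
      have : (0 : ℝ) ≤ lam := Nat.cast_nonneg _
      have b1 : (lam : ℝ) ≤ 2 * ℓ := by linarith
      have b2 : (lam : ℝ) + 1 ≤ 3 * ℓ := by linarith
      have := mul_le_mul b1 b2 (by linarith) (by linarith)
      nlinarith
    have e3 : (78 : ℝ) ≤ ℓ ^ 11 := by
      have : ((3 : ℝ) / 2) ^ 11 ≤ ℓ ^ 11 := by gcongr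
      norm_num at this ⊢; linarith
    calc (A : ℝ) ≤ 78 * ℓ ^ 2 := e2
      _ ≤ ℓ ^ 11 * ℓ ^ 2 := by gcongr
      _ = ℓ ^ 13 := by ring
  have ha0 : 0 ≤ a := Real.logb_nonneg two (by exact_mod_cast (by omega : 1 ≤ A))
  have hax : a ≤ 13 * x := by
    have := Real.logb_le_logb_of_le two hApos hAℓ
    rw [Real.logb_pow] at this
    exact_mod_cast this
  have hka : (k : ℝ) ^ 2 * a ≤ 2 * ℓ := by
    have b1 : (A : ℝ) ^ EOP.tri (k + 1) ≤ n := by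
      exact_mod_cast (by omega : A ^ EOP.tri (k + 1) ≤ n)
    have b2 := Real.logb_le_logb_of_le two (by positivity) b1
    rw [Real.logb_pow] at b2
    have b3 : (2 : ℝ) * EOP.tri (k + 1) = k * (k + 1) := by exact_mod_cast EOP.tri_eq k
    have b4 : (0 : ℝ) ≤ k := Nat.cast_nonneg _
    have b5 : (0 : ℝ) ≤ k * a := mul_nonneg b4 ha0
    change (EOP.tri (k + 1) : ℝ) * a ≤ ℓ at b2
    nlinarith
  set X := Real.sqrt (ℓ * x) with hX
  have hX0 : 0 ≤ X := Real.sqrt_nonneg _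
  have hXsq : X ^ 2 = ℓ * x := Real.sq_sqrt (by nlinarith)
  have hXx : x ≤ X := by
    apply Real.le_sqrt_of_sq_le; nlinarith
  have hkaX : k * a ≤ 6 * X := by
    apply le_of_sq_le_sq _ (by positivity)
    have : (k : ℝ) ^ 2 * a * a ≤ 2 * ℓ * (13 * x) := by
      apply mul_le_mul hka hax ha0; linarith
    nlinarith
  have hbig : 4 * (A : ℝ) ^ (2 * k + 1) ≤ (2 : ℝ) ^ (29 * X) := by
    rw [← Real.logb_le_iff_le_rpow two (by positivity), Real.logb_mul (by norm_num) (by positivity),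
      Real.logb_pow]
    have : Real.logb 2 4 = 2 := by
      rw [show (4 : ℝ) = 2 ^ (2 : ℕ) by norm_num, Real.logb_pow, Real.logb_self_eq_one two]
      norm_num
    rw [this, ← ha]
    push_cast
    nlinarith
  rw [div_le_iff₀ (by positivity)]
  calc (n : ℝ) ≤ 4 * (A : ℝ) ^ (2 * k + 1) * (A : ℝ) ^ EOP.tri k := hn4
    _ ≤ (2 : ℝ) ^ (29 * X) * (A : ℝ) ^ EOP.tri k := by gcongr
    _ = _ := by ring
end

section
/- Let t ≥ 1 be an integer, let G be an ordered graph on n ≥ 2 vertices, let a > 0 be a real number, and let e ∈ E(G) be an edge with height h(e,G) > a. Then there is an increasing path P in G starting with the edge e, having length at least a^{1−1/t}/(70 log₂ n)^{2t}, and such that every edge f of P satisfies h(f,G) ≥ h(e,G) − a. -/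
open scoped Classical

namespace EOP

variable {V : Type} [DecidableEq V]

structure Tab (w : Sym2 V → ℕ) (E : Finset (Sym2 V)) (row : Sym2 V → ℕ) (col : Sym2 V → V) :
    Prop where
  mem : ∀ e ∈ E, col e ∈ e
  inj : ∀ e ∈ E, ∀ f ∈ E, row e = row f → col e = col f → e = f
  ex : ∀ e ∈ E, ∀ v ∈ e, ∀ i < row e, ∃ f ∈ E, row f = i ∧ col f = v ∧ w e < w f

inductive Pth (w : Sym2 V → ℕ) (E : Finset (Sym2 V)) :
    ℕ → Finset V → Sym2 V → V → Finset V → Sym2 V → V → Prop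
  | nil (U e v) (h : v ∉ U) : Pth w E 0 U e v U e v
  | cons (k U e v z U' e' v') (h : v ∉ U) (hE : s(v, z) ∈ E) (hw : w e < w s(v, z))
      (hp : Pth w E k (insert v U) s(v, z) z U' e' v') : Pth w E (k + 1) U e v U' e' v'

variable {w : Sym2 V → ℕ} {E F : Finset (Sym2 V)}

theorem Pth.start {k U e v U' e' v'} (h : Pth w E k U e v U' e' v') : v ∉ U := by
  cases h <;> assumption

theorem Pth.fin {k U e v U' e' v'} (h : Pth w E k U e v U' e' v') : v' ∉ U' := by
  induction h <;> assumption

theorem Pth.append {k U e v U' e' v'} (h : Pth w E k U e v U' e' v') :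
    ∀ {m U2 e2 v2}, Pth w E m U' e' v' U2 e2 v2 → Pth w E (m + k) U e v U2 e2 v2 := by
  induction h with
  | nil => intro m U2 e2 v2 h; exact h
  | cons k U e v z U' e' v' h hE hw hp ih =>
    intro m U2 e2 v2 h2
    exact Pth.cons _ _ _ _ _ _ _ _ h hE hw (ih h2)

theorem Pth.split {n U e v U' e' v'} (h : Pth w E n U e v U' e' v') :
    ∀ k m, n = m + k → ∃ U1 e1 v1, Pth w E k U e v U1 e1 v1 ∧ Pth w E m U1 e1 v1 U' e' v' := by
  induction h with
  | nil U e v h =>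
    intro k m hk
    obtain ⟨rfl, rfl⟩ : m = 0 ∧ k = 0 := by omega
    exact ⟨_, _, _, Pth.nil _ _ _ h, Pth.nil _ _ _ h⟩
  | cons n U e v z U' e' v' h hE hw hp ih =>
    intro k m hk
    cases k with
    | zero =>
      refine ⟨U, e, v, Pth.nil _ _ _ h, ?_⟩
      obtain rfl : m = n + 1 := by omega
      exact Pth.cons _ _ _ _ _ _ _ _ h hE hw hp
    | succ k =>
      obtain ⟨U1, e1, v1, h1, h2⟩ := ih k m (by omega)
      exact ⟨U1, e1, v1, Pth.cons _ _ _ _ _ _ _ _ h hE hw h1, h2⟩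

theorem Pth.card {k U e v U' e' v'} (h : Pth w E k U e v U' e' v') :
    U'.card = U.card + k := by
  induction h with
  | nil => rfl
  | cons n U e v z U' e' v' h hE hw hp ih =>
    rw [ih, Finset.card_insert_of_notMem h]; omega

theorem Pth.sub {k U e v U' e' v'} (h : Pth w E k U e v U' e' v') :
    U ⊆ U' := by
  induction h with
  | nil => rfl
  | cons n U e v z U' e' v' h hE hw hp ih =>
    exact (Finset.subset_insert _ _).trans ih

theorem Pth.wle {k U e v U' e' v'} (h : Pth w E k U e v U' e' v') :
    w e ≤ w e' := by
  induction h with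
  | nil => rfl
  | cons n U e v z U' e' v' h hE hw hp ih => exact hw.le.trans ih

theorem Pth.last {k U e v U' e' v'} (h : Pth w E k U e v U' e' v') :
    v ∈ e → v' ∈ e' := by
  induction h with
  | nil => exact id
  | cons n U e v z U' e' v' h hE hw hp ih => intro _; exact ih (by simp)

theorem Pth.lastE {k U e v U' e' v'} (h : Pth w E k U e v U' e' v') :
    e ∈ F → E ⊆ F → e' ∈ F := by
  induction h with
  | nil => exact fun h _ => h
  | cons n U e v z U' e' v' h hE hw hp ih => intro _ h2; exact ih (h2 hE) h2

theorem Pth.mono {k U e v U' e' v'} (h : Pth w E k U e v U' e' v') (hEF : E ⊆ F) :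
    Pth w F k U e v U' e' v' := by
  induction h with
  | nil U e v h => exact Pth.nil _ _ _ h
  | cons n U e v z U' e' v' h hE hw hp ih =>
    exact Pth.cons _ _ _ _ _ _ _ _ h (hEF hE) hw ih

theorem Pth.weaken {k U e v U' e' v'} (h : Pth w E k U e v U' e' v') :
    ∀ W ⊆ U, ∀ e0, w e0 ≤ w e → ∃ U2 ⊆ U', ∃ e2, Pth w E k W e0 v U2 e2 v' := by
  induction h with
  | nil U e v h =>
    intro W hW e0 _
    exact ⟨W, hW, e0, Pth.nil _ _ _ (fun h' => h (hW h'))⟩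
  | cons n U e v z U' e' v' h hE hw hp ih =>
    intro W hW e0 he
    obtain ⟨U2, h2, e2, h3⟩ := ih (insert v W) (Finset.insert_subset_insert _ hW) s(v, z) le_rfl
    exact ⟨U2, h2, e2, Pth.cons _ _ _ _ _ _ _ _ (fun h' => h (hW h')) hE (he.trans_lt hw) h3⟩

theorem Pth.enlarge {k U e v U' e' v'} (h : Pth w E k U e v U' e' v') :
    ∀ W, Disjoint W (insert v' U') → Pth w E k (U ∪ W) e v (U' ∪ W) e' v' := by
  induction h with
  | nil U e v h =>
    intro W hW
    refine Pth.nil _ _ _ ?_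
    rw [Finset.disjoint_right] at hW
    simp [h, hW (Finset.mem_insert_self _ _)]
  | cons n U e v z U' e' v' h hE hw hp ih =>
    intro W hW
    have h1 := ih W hW
    rw [Finset.insert_union] at h1
    refine Pth.cons _ _ _ _ _ _ _ _ ?_ hE hw h1
    have : v ∈ insert v' U' := Finset.mem_insert_of_mem (hp.sub (Finset.mem_insert_self _ _))
    rw [Finset.disjoint_right] at hW
    simp [h, hW this]

theorem Pth.visit {k U e v U' e' v'} (h : Pth w E k U e v U' e' v') :
    ∀ y ∈ insert v' U', y ∉ U → ∃ i m U1 e1, m + i = k ∧ Pth w E i U e v U1 e1 y ∧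
      Pth w E m U1 e1 y U' e' v' := by
  induction h with
  | nil U e v h =>
    intro y hy hyU
    obtain rfl : y = v := by simpa [hyU] using hy
    exact ⟨0, 0, U, e, rfl, Pth.nil _ _ _ h, Pth.nil _ _ _ h⟩
  | cons n U e v z U' e' v' h hE hw hp ih =>
    intro y hy hyU
    by_cases hyv : y = v
    · subst hyv
      exact ⟨0, n + 1, U, e, rfl, Pth.nil _ _ _ h, Pth.cons _ _ _ _ _ _ _ _ h hE hw hp⟩
    · obtain ⟨i, m, U1, e1, hk, h1, h2⟩ := ih y hy (by simp [hyv, hyU])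
      exact ⟨i + 1, m, U1, e1, by omega, Pth.cons _ _ _ _ _ _ _ _ h hE hw h1, h2⟩

/-- edges lie between vertices in `X`; all vertices stay in `X`. -/
theorem Pth.verts {k U e v U' e' v'} (h : Pth w E k U e v U' e' v') (X : Finset V)
    (hE : ∀ f ∈ E, ∀ u ∈ f, u ∈ X) : v ∈ X → insert v' U' ⊆ U ∪ X := by
  induction h with
  | nil U e v h =>
    intro hv x hx
    rw [Finset.mem_insert] at hx
    rcases hx with rfl | hx <;> simp [*]
  | cons n U e v z U' e' v' h hE' hw hp ih =>
    intro hv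
    refine (ih (hE _ hE' z (by simp))).trans ?_
    intro x
    simp only [Finset.mem_union, Finset.mem_insert]
    rintro ((rfl | h) | h) <;> simp [*]

theorem merge_s16 {j U e y U' e' v} (hQ : Pth w E j U e y U' e' v) :
    ∀ {k e0 U1 e1 v1}, w e' ≤ w e0 → Pth w E k ∅ e0 v U1 e1 v1 → Disjoint U (insert v1 U1) →
    ∃ m U2 e2 v2, Pth w E m U e y U2 e2 v2 ∧ k + 1 ≤ (m + 1) * (j + 1) := by
  induction hQ with
  | nil U e y h =>
    intro k e0 U1 e1 v1 hw hP hd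
    obtain ⟨U2, hU2, e2, h2⟩ := hP.weaken ∅ (by simp) e hw
    have h3 := h2.enlarge U (Finset.disjoint_of_subset_right (Finset.insert_subset_insert _ hU2) hd)
    rw [Finset.empty_union] at h3
    exact ⟨k, _, _, _, h3, by simp⟩
  | cons j U e y z U' e' v h hE hw hp ih =>
    intro k e0 U1 e1 v1 hw' hP hd
    by_cases hy : y ∈ insert v1 U1
    · obtain ⟨i, m, Ua, ea, hk, hA, hB⟩ := hP.visit y hy (by simp)
      have hwe : w e ≤ w ea := (hw.le.trans hp.wle).trans (hw'.trans hA.wle)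
      have hBU : ∃ U2 e2 v2, Pth w E m U e y U2 e2 v2 := by
        obtain ⟨U2, hU2, e2, h2⟩ := hB.weaken ∅ (by simp) e hwe
        have h3 := h2.enlarge U
          (Finset.disjoint_of_subset_right (Finset.insert_subset_insert _ hU2) hd)
        rw [Finset.empty_union] at h3
        exact ⟨_, _, _, h3⟩
      obtain ⟨U2, e2, v2, hBU⟩ := hBU
      cases i with
      | zero => exact ⟨m, _, _, _, hBU, by nlinarith⟩
      | succ i =>
        obtain ⟨Ub, eb, yb, hb1, hb2⟩ := hA.split i 1 (by omega)
        have hUa : insert yb Ub ⊆ Ua := by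
          cases hb2 with
          | cons _ _ _ _ _ _ _ _ _ _ _ hp' => exact hp'.sub
        have hd2 : Disjoint (insert y U) (insert yb Ub) := by
          rw [Finset.disjoint_insert_left]
          refine ⟨fun h' => hA.fin (hUa h'), ?_⟩
          exact Finset.disjoint_of_subset_right
            ((hUa.trans hB.sub).trans (Finset.subset_insert _ _)) hd
        obtain ⟨m', U3, e3, v3, h3, h4⟩ := ih hw' hb1 hd2
        by_cases hc : k + 1 ≤ (m + 1) * (j + 1 + 1)
        · exact ⟨m, _, _, _, hBU, hc⟩
        · refine ⟨m' + 1, _, _, _, Pth.cons _ _ _ _ _ _ _ _ h hE hw h3, ?_⟩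
          push Not at hc
          by_contra hc2
          push Not at hc2
          have : m < m' + 1 + 1 := by
            by_contra hh
            push Not at hh
            nlinarith
          by_cases hm : m + 1 ≤ m' + 1 + 1
          · nlinarith
          · omega
    · obtain ⟨m, U2, e2, v2, h2, h3⟩ := ih hw' hP (by
        rw [Finset.disjoint_insert_left]; exact ⟨hy, hd⟩)
      exact ⟨m + 1, _, _, _, Pth.cons _ _ _ _ _ _ _ _ h hE hw h2, by nlinarith⟩

theorem colcount {row : Sym2 V → ℕ} {col : Sym2 V → V} (T : Tab w E row col)
    {e v} (he : e ∈ E) (hv : v ∈ e) {U : Finset V} (hU : v ∉ U) (b s : ℕ) (hb : b + s ≤ row e) :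
    s ≤ U.card + (E.filter (fun f => (b ≤ row f ∧ row f < b + s ∧ ∀ u ∈ U, u ∉ f) ∧
      col f = v)).card := by
  have key : ∀ i : ℕ, ∃ f, i < s → (f ∈ E ∧ row f = b + i ∧ col f = v) := by
    intro i
    by_cases hi : i < s
    · obtain ⟨f, h1, h2, h3, _⟩ := T.ex e he v hv (b + i) (by omega)
      exact ⟨f, fun _ => ⟨h1, h2, h3⟩⟩
    · exact ⟨e, fun h => absurd h hi⟩
  choose g hg using key
  have hsub : (Finset.range s).image g ⊆ U.image (fun u => s(v, u)) ∪
      (E.filter (fun f => (b ≤ row f ∧ row f < b + s ∧ ∀ u ∈ U, u ∉ f) ∧ col f = v)) := by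
    intro f hf
    obtain ⟨i, hi, rfl⟩ := Finset.mem_image.1 hf
    rw [Finset.mem_range] at hi
    obtain ⟨h1, h2, h3⟩ := hg i hi
    by_cases hh : ∀ u ∈ U, u ∉ g i
    · refine Finset.mem_union_right _ (Finset.mem_filter.2 ⟨h1, ⟨?_, ?_, hh⟩, h3⟩) <;> omega
    · push Not at hh
      obtain ⟨u, hu, hug⟩ := hh
      refine Finset.mem_union_left _ (Finset.mem_image.2 ⟨u, hu, ?_⟩)
      have hvg : v ∈ g i := by
        have := T.mem _ h1
        rwa [h3] at this
      have hne : v ≠ u := fun h => hU (h ▸ hu)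
      exact ((Sym2.mem_and_mem_iff hne).1 ⟨hvg, hug⟩).symm
  have hc : ((Finset.range s).image g).card = s := by
    rw [Finset.card_image_of_injOn, Finset.card_range]
    intro i hi j hj hij
    simp only [Finset.coe_range, Set.mem_Iio] at hi hj
    have h1 := (hg i hi).2.1
    have h2 := (hg j hj).2.1
    have hij' : g i = g j := hij
    rw [hij'] at h1
    omega
  calc s = _ := hc.symm
    _ ≤ _ := Finset.card_le_card hsub
    _ ≤ _ := Finset.card_union_le _ _
    _ ≤ _ := by gcongr; exact Finset.card_image_le

theorem dense {row : Sym2 V → ℕ} {col : Sym2 V → V} (T : Tab w E row col) (X : Finset V)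
    (hX : ∀ f ∈ E, ∀ u ∈ f, u ∈ X) (c : ℕ) (hc : c * X.card < E.card) :
    ∃ f ∈ E, c ≤ row f := by
  by_contra hcon
  push Not at hcon
  have : E.card ≤ (Finset.range c ×ˢ X).card := by
    apply Finset.card_le_card_of_injOn (fun f => (row f, col f))
    · intro f hf
      simp only [Finset.coe_product, Set.mem_prod, Finset.coe_range, Set.mem_Iio, Finset.mem_coe]
      exact ⟨hcon f hf, hX f hf _ (T.mem f hf)⟩
    · intro f hf g hg h
      simp only [Prod.mk.injEq] at h
      exact T.inj f hf g hg h.1 h.2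
  rw [Finset.card_product, Finset.card_range] at this
  omega

/-- an edge in column `v`, in a row below that of `e ∋ v`, is larger than `e` -/
theorem Tab.lt {row : Sym2 V → ℕ} {col : Sym2 V → V} (T : Tab w E row col)
    {e f v} (he : e ∈ E) (hv : v ∈ e) (hf : f ∈ E) (hc : col f = v) (hr : row f < row e) :
    w e < w f := by
  obtain ⟨g, hg, h1, h2, h3⟩ := T.ex e he v hv _ hr
  rwa [T.inj g hg f hf h1 (h2.trans hc.symm)] at h3

def SP (w : Sym2 V → ℕ) (a0 κ : ℕ) : Prop :=
  ∀ (E : Finset (Sym2 V)) (row : Sym2 V → ℕ) (col : Sym2 V → V), (∀ e ∈ E, ¬ e.IsDiag) →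
    Tab w E row col → ∀ e ∈ E, a0 ≤ row e → ∃ x y k U' e' v', e = s(x, y) ∧
      Pth w E k {x} e y U' e' v' ∧ κ ≤ k + 1

theorem greedy_aux {row : Sym2 V → ℕ} {col : Sym2 V → V} (hE : ∀ e ∈ E, ¬ e.IsDiag) (T : Tab w E row col) (D : ℕ) :
    ∀ k U e y, e ∈ E → y ∈ e → y ∉ U → U.card + k ≤ D → k * D ≤ row e →
    ∃ U' e' v', Pth w E k U e y U' e' v' := by
  intro k
  induction k with
  | zero => intro U e y _ _ h _ _; exact ⟨_, _, _, Pth.nil _ _ _ h⟩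
  | succ k ih =>
    intro U e y he hy hyU hD hr
    have hr' : k * D + D ≤ row e := by rw [← Nat.succ_mul]; exact hr
    have hc := colcount T he hy hyU (row e - D) D (by omega)
    have hpos : 0 < (E.filter (fun f => (row e - D ≤ row f ∧ row f < row e - D + D ∧
      ∀ u ∈ U, u ∉ f) ∧ col f = y)).card := by omega
    obtain ⟨f, hf⟩ := Finset.card_pos.1 hpos
    obtain ⟨hfE, ⟨h1, h2, h3⟩, h4⟩ := Finset.mem_filter.1 hf
    have hlt : w e < w f := T.lt he hy hfE h4 (by omega)
    have hyf : y ∈ f := h4 ▸ T.mem f hfE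
    obtain ⟨z, rfl⟩ := hyf
    by_cases hzy : z = y
    · subst hzy
      exfalso
      exact hE _ hfE (by simp)
    · obtain ⟨U', e', v', hp⟩ := ih (insert y U) s(y, z) z hfE (by simp)
        (by
          rw [Finset.mem_insert]
          rintro (h | h)
          · exact hzy h
          · exact h3 z h (by simp))
        (by rw [Finset.card_insert_of_notMem hyU]; omega) (by omega)
      exact ⟨U', e', v', Pth.cons _ _ _ _ _ _ _ _ hyU hfE hlt hp⟩

theorem greedy (k : ℕ) : SP w (k * (k + 1)) (k + 1) := by
  intro E row col hE T e he hr
  induction e with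
  | h x y =>
    have hxy : x ≠ y := fun h => hE _ he (by simpa using h)
    obtain ⟨U', e', v', hp⟩ := greedy_aux hE T (k + 1) k {x} s(x, y) y he (by simp)
      (by simpa using hxy.symm) (by simp; omega) hr
    exact ⟨x, y, k, U', e', v', rfl, hp, le_rfl⟩

variable [Fintype V]

theorem segment (hT : ∀ H : Finset (Sym2 V), (∀ e ∈ H, ¬ e.IsDiag) → ∃ row col, Tab w H row col)
    {row : Sym2 V → ℕ} {col : Sym2 V → V} (hE : ∀ e ∈ E, ¬ e.IsDiag) (T : Tab w E row col)
    (a0 κ q : ℕ) (ha0 : 1 ≤ a0) (hS : SP w a0 κ) (hq : q * (Nat.log 2 (Fintype.card V) + 1) < κ)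
    (s : ℕ) (U : Finset V) (hs : U.card + 2 * a0 ≤ s) (e : Sym2 V) (y : V) (he : e ∈ E)
    (hy : y ∈ e) (hyU : y ∉ U) (hr : (Nat.log 2 (Fintype.card V) + 1) * s ≤ row e) :
    ∃ U' e' v', Pth w (E.filter (fun f => row e ≤ row f +
      (Nat.log 2 (Fintype.card V) + 1) * s)) q U e y U' e' v' := by
  set lam := Nat.log 2 (Fintype.card V) with hlam
  set ER : ℕ → Finset (Sym2 V) := fun r => E.filter (fun f => row e ≤ row f + r * s) with hER
  have hERmono : ∀ r r', r ≤ r' → ER r ⊆ ER r' := by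
    intro r r' h f hf
    rw [Finset.mem_filter] at hf ⊢
    exact ⟨hf.1, hf.2.trans (by gcongr)⟩
  have heER : ∀ r, e ∈ ER r := fun r => Finset.mem_filter.2 ⟨he, by omega⟩
  set X : ℕ → Finset V := fun r => Finset.univ.filter
    (fun v => ∃ k ≤ r, ∃ U' e', Pth w (ER r) k U e y U' e' v) with hX
  have hmemX : ∀ r v, v ∈ X r ↔ ∃ k ≤ r, ∃ U' e', Pth w (ER r) k U e y U' e' v := by
    intro r v; simp [hX]
  have hyX : y ∈ X 0 := (hmemX 0 y).2 ⟨0, le_rfl, _, _, Pth.nil _ _ _ hyU⟩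
  obtain ⟨r, hrl, hXr⟩ : ∃ r ≤ lam, (X (r + 1)).card < 2 * (X r).card := by
    by_contra hcon
    push Not at hcon
    have : ∀ r ≤ lam + 1, 2 ^ r ≤ (X r).card := by
      intro r
      induction r with
      | zero => intro _; exact Finset.card_pos.2 ⟨y, hyX⟩
      | succ r ih =>
        intro h
        have := ih (by omega)
        have := hcon r (by omega)
        rw [pow_succ]; omega
    have h1 := this (lam + 1) le_rfl
    have h2 : (X (lam + 1)).card ≤ Fintype.card V := Finset.card_le_univ _
    have h3 := Nat.lt_pow_succ_log_self (b := 2) (by norm_num) (Fintype.card V)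
    rw [← hlam] at h3
    exact absurd h3 (not_lt.2 (h1.trans h2))
  have hb0 : (r + 1) * s ≤ row e := le_trans (by gcongr) hr
  obtain ⟨b, hb⟩ : ∃ b, row e = b + (r + 1) * s := ⟨row e - (r + 1) * s, by omega⟩
  have hb' : row e = b + s + r * s := by rw [hb]; ring
  set H : Finset (Sym2 V) := (E.filter (fun f => b ≤ row f ∧ row f < b + s ∧ ∀ u ∈ U, u ∉ f)).filter
    (fun f => col f ∈ X r) with hH
  have hmemH : ∀ f, f ∈ H ↔ (f ∈ E ∧ b ≤ row f ∧ row f < b + s ∧ ∀ u ∈ U, u ∉ f) ∧ col f ∈ X r := by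
    intro f; simp [hH]
  -- properties of reached vertices
  have hreach : ∀ v ∈ X r, ∃ k ≤ r, ∃ U' e', Pth w (ER r) k U e y U' e' v ∧ e' ∈ E ∧ v ∈ e' ∧
      b + s ≤ row e' := by
    intro v hv
    obtain ⟨k, hk, U', e', hp⟩ := (hmemX r v).1 hv
    have h1 := Finset.mem_filter.1 (hp.lastE (heER r) (Finset.Subset.refl _))
    exact ⟨k, hk, U', e', hp, h1.1, hp.last hy, by omega⟩
  have hHcard : (X r).card * (2 * a0) ≤ H.card := by
    have : H.card = ∑ v ∈ X r, (H.filter (fun f => col f = v)).card :=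
      Finset.card_eq_sum_card_fiberwise (fun f hf => ((hmemH f).1 hf).2)
    rw [this, ← smul_eq_mul]
    apply Finset.card_nsmul_le_sum
    intro v hv
    obtain ⟨k, hk, U', e', hp, h1, h2, h3⟩ := hreach v hv
    have hvU : v ∉ U := fun h => hp.fin (hp.sub h)
    have := colcount T h1 h2 hvU b s h3
    have h4 : s ≤ U.card + (H.filter (fun f => col f = v)).card := by
      refine this.trans (Nat.add_le_add_left (Finset.card_le_card ?_) _)
      intro f hf
      simp only [Finset.mem_filter] at hf
      rw [Finset.mem_filter, hmemH]
      exact ⟨⟨⟨hf.1, hf.2.1⟩, hf.2.2 ▸ hv⟩, hf.2.2⟩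
    omega
  have hHE : ∀ f ∈ H, f ∈ ER (r + 1) := by
    intro f hf
    have := (hmemH f).1 hf
    exact Finset.mem_filter.2 ⟨this.1.1, by omega⟩
  have hHX : ∀ f ∈ H, ∀ u ∈ f, u ∈ X (r + 1) := by
    intro f hf u hu
    obtain ⟨⟨hfE, hf1, hf2, hfU⟩, hfc⟩ := (hmemH f).1 hf
    obtain ⟨k, hk, U', e', hp, h1, h2, h3⟩ := hreach _ hfc
    have hlt := T.lt h1 h2 hfE rfl (by omega)
    have hpm := hp.mono (hERmono r (r + 1) (by omega))
    by_cases huU : u ∈ insert (col f) U'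
    · obtain ⟨i, m, U1, e1, hk', h4, h5⟩ := hpm.visit u huU (fun h => hfU u h hu)
      exact (hmemX _ _).2 ⟨i, by omega, _, _, h4⟩
    · have hfeq : f = s(col f, u) :=
        (Sym2.mem_and_mem_iff (fun h => huU (by simp [h]))).1 ⟨T.mem f hfE, hu⟩
      have hstep : Pth w (ER (r + 1)) 1 U' e' (col f) (insert (col f) U') s(col f, u) u :=
        Pth.cons _ _ _ _ _ _ _ _ hp.fin (hfeq ▸ hHE f hf) (hfeq ▸ hlt) (Pth.nil _ _ _ huU)
      exact (hmemX _ _).2 ⟨_, by omega, _, _, hpm.append hstep⟩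
  obtain ⟨row', col', T'⟩ := hT H (fun f hf => hE f ((hmemH f).1 hf).1.1)
  obtain ⟨f, hf, hfr⟩ := dense T' (X (r + 1)) hHX a0 (by nlinarith)
  obtain ⟨x', z', k, Up, ep, vp, hfe, hP, hκ⟩ := hS H row' col'
    (fun f hf => hE f ((hmemH f).1 hf).1.1) T' f hf hfr
  obtain ⟨⟨hfE, hf1, hf2, hfU⟩, hfc⟩ := (hmemH f).1 hf
  obtain ⟨j, hj, U', e', hQ, h1, h2, h3⟩ := hreach _ hfc
  have hlt := T.lt h1 h2 hfE rfl (by omega)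
  -- the continuation from `col f`
  have hxH : ∀ u ∈ f, u ∈ Finset.univ \ U := by
    intro u hu; simp; exact fun h => hfU u h hu
  have hHU : ∀ g ∈ H, ∀ u ∈ g, u ∈ Finset.univ \ U := by
    intro g hg u hu; simp; exact fun h => ((hmemH g).1 hg).1.2.2.2 u h hu
  have hcont : ∃ k' ≥ k, ∃ U1 e1 v1, Pth w H k' ∅ e' (col f) U1 e1 v1 := by
    have hcf := T.mem f hfE
    have hcf' : col f = x' ∨ col f = z' := by
      have : col f ∈ s(x', z') := hfe ▸ hcf
      simpa using this
    rcases hcf' with h | h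
    · rw [h]
      obtain ⟨U2, -, e2, hp2⟩ := (Pth.cons (w := w) (E := H) k ∅ e' x' z' Up ep vp (by simp)
        (hfe ▸ hf) (hfe ▸ hlt) (by simpa [hfe] using hP)).weaken ∅ (by simp) e' le_rfl
      exact ⟨k + 1, by omega, _, _, _, hp2⟩
    · rw [h]
      obtain ⟨U2, -, e2, hp2⟩ := hP.weaken ∅ (by simp) e' hlt.le
      exact ⟨k, le_rfl, _, _, _, hp2⟩
  obtain ⟨k', hk', U1, e1, v1, hP'⟩ := hcont
  have hdis : Disjoint U (insert v1 U1) := by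
    have := hP'.verts _ hHU (hHU f hf _ (T.mem f hfE))
    rw [Finset.empty_union] at this
    exact Finset.disjoint_of_subset_right this Finset.disjoint_sdiff
  have hsub1 : ER r ⊆ ER (lam + 1) := hERmono _ _ (by omega)
  have hsub2 : H ⊆ ER (lam + 1) := fun g hg => hERmono (r + 1) (lam + 1) (by omega) (hHE g hg)
  obtain ⟨m, U2, e2, v2, hR, hm⟩ := merge_s16 (hQ.mono hsub1) le_rfl (hP'.mono hsub2) hdis
  have hqm : q ≤ m := by
    by_contra hcon
    push Not at hcon
    have : (m + 1) * (j + 1) ≤ q * (lam + 1) := Nat.mul_le_mul hcon (by omega)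
    omega
  obtain ⟨Ua, ea, va, hfin, -⟩ := hR.split q (m - q) (by omega)
  exact ⟨Ua, ea, va, hfin⟩

theorem iter (hT : ∀ H : Finset (Sym2 V), (∀ e ∈ H, ¬ e.IsDiag) → ∃ row col, Tab w H row col)
    {row : Sym2 V → ℕ} {col : Sym2 V → V} (hE : ∀ e ∈ E, ¬ e.IsDiag) (T : Tab w E row col)
    (a0 κ q : ℕ) (ha0 : 1 ≤ a0) (hS : SP w a0 κ) (hq : q * (Nat.log 2 (Fintype.card V) + 1) < κ)
    (D : ℕ) : ∀ j U e y, e ∈ E → y ∈ e → y ∉ U → U.card + j * q ≤ D →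
      j * ((Nat.log 2 (Fintype.card V) + 1) * (D + 2 * a0)) ≤ row e →
      ∃ U' e' v', Pth w E (j * q) U e y U' e' v' := by
  intro j
  induction j with
  | zero => intro U e y _ _ h _ _; rw [zero_mul]; exact ⟨_, _, _, Pth.nil _ _ _ h⟩
  | succ j ih =>
    intro U e y he hy hyU hD hr
    rw [Nat.succ_mul] at hr hD
    obtain ⟨U1, e1, v1, h1⟩ := segment hT hE T a0 κ q ha0 hS hq (D + 2 * a0) U (by omega) e y
      he hy hyU (by omega)
    have h2 := Finset.mem_filter.1 (h1.lastE (F := E.filter (fun f => row e ≤ row f +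
      (Nat.log 2 (Fintype.card V) + 1) * (D + 2 * a0)))
      (Finset.mem_filter.2 ⟨he, by omega⟩) (Finset.Subset.refl _))
    obtain ⟨U2, e2, v2, h3⟩ := ih U1 e1 v1 h2.1 (h1.last hy) h1.fin
      (by rw [h1.card]; omega) (by omega)
    rw [Nat.succ_mul]
    exact ⟨_, _, _, (h1.mono (Finset.filter_subset _ _)).append h3⟩

theorem step_s16 (hT : ∀ H : Finset (Sym2 V), (∀ e ∈ H, ¬ e.IsDiag) → ∃ row col, Tab w H row col)
    (a0 κ q j : ℕ) (ha0 : 1 ≤ a0) (hS : SP w a0 κ)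
    (hq : q * (Nat.log 2 (Fintype.card V) + 1) < κ) :
    SP w (j * ((Nat.log 2 (Fintype.card V) + 1) * (1 + j * q + 2 * a0))) (j * q + 1) := by
  intro E row col hE T e he hr
  induction e with
  | h x y =>
    have hxy : x ≠ y := fun h => hE _ he (by simpa using h)
    obtain ⟨U', e', v', hp⟩ := iter hT hE T a0 κ q ha0 hS hq (1 + j * q) j {x} s(x, y) y he
      (by simp) (by simpa using hxy.symm) (by simp) hr
    exact ⟨x, y, _, U', e', v', rfl, hp, le_rfl⟩

theorem mainS (hT : ∀ H : Finset (Sym2 V), (∀ e ∈ H, ¬ e.IsDiag) → ∃ row col, Tab w H row col)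
    (hV : 2 ≤ Fintype.card V) (t : ℕ) : ∀ (A : ℝ), 0 < A →
    SP w ⌊A ^ (t + 1)⌋₊ ⌈A ^ t / (70 * Real.logb 2 (Fintype.card V)) ^ (2 * (t + 1))⌉₊ := by
  set lg := Real.logb 2 (Fintype.card V) with hlg
  have hlg1 : 1 ≤ lg := by
    rw [hlg, Real.le_logb_iff_rpow_le (by norm_num) (by positivity)]
    simpa using (by exact_mod_cast hV : (2 : ℝ) ≤ (Fintype.card V : ℝ))
  have hlam : (Nat.log 2 (Fintype.card V) : ℝ) ≤ lg := by
    rw [hlg, Real.le_logb_iff_rpow_le (by norm_num) (by positivity), Real.rpow_natCast]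
    exact_mod_cast Nat.pow_log_le_self 2 (by omega)
  have hL : (1 : ℝ) ≤ 70 * lg := by linarith
  -- monotonicity in the first argument and trivial bounds
  have triv : ∀ (a0 κ : ℕ), κ ≤ 1 → SP w a0 κ := by
    intro a0 κ hκ E row col hE T e he hr
    obtain ⟨x, y, k, U', e', v', h1, h2, h3⟩ := greedy (w := w) 0 E row col hE T e he (by simp)
    exact ⟨x, y, k, U', e', v', h1, h2, by omega⟩
  have mon : ∀ (a0 a1 κ κ' : ℕ), a0 ≤ a1 → κ' ≤ κ → SP w a0 κ → SP w a1 κ' := by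
    intro a0 a1 κ κ' ha hκ hS E row col hE T e he hr
    obtain ⟨x, y, k, U', e', v', h1, h2, h3⟩ := hS E row col hE T e he (ha.trans hr)
    exact ⟨x, y, k, U', e', v', h1, h2, hκ.trans h3⟩
  induction t with
  | zero =>
    intro A hA
    apply triv
    rw [Nat.ceil_le]
    simp only [pow_zero, Nat.cast_one]
    rw [div_le_one (by positivity)]
    exact one_le_pow₀ hL
  | succ t ih =>
    intro A hA
    set L := 70 * lg with hLd
    by_cases h1 : A ^ (t + 1) / L ^ (2 * (t + 1 + 1)) ≤ 1
    · apply triv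
      rw [Nat.ceil_le]; simpa using h1
    push Not at h1
    have hL2 : L ^ (2 * (t + 1 + 1)) < A ^ (t + 1) := by
      rwa [one_lt_div (by positivity)] at h1
    have hAL : L ^ 2 < A := by
      have : (L ^ 2) ^ (t + 1) < A ^ (t + 1) := by
        refine lt_of_le_of_lt ?_ hL2
        rw [← pow_mul]
        exact pow_le_pow_right₀ hL (by omega)
      exact lt_of_pow_lt_pow_left₀ _ hA.le this
    have hLlg : 4900 * lg ≤ L ^ 2 := by rw [hLd]; nlinarith
    have hA1 : (4900 : ℝ) < A := by nlinarith
    set La : ℕ := Nat.log 2 (Fintype.card V) + 1 with hLa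
    have hLa2 : (La : ℝ) ≤ 2 * lg := by rw [hLa]; push_cast; linarith
    have hLa1 : (1 : ℝ) ≤ La := by rw [hLa]; push_cast; linarith [Nat.cast_nonneg (α := ℝ) (Nat.log 2 (Fintype.card V))]
    set l : ℝ := A ^ t / L ^ (2 * (t + 1)) with hl
    have hlpos : 0 < l := by positivity
    have htarget : A ^ (t + 1) / L ^ (2 * (t + 1 + 1)) = A * l / L ^ 2 := by
      rw [hl]; field_simp; ring
    by_cases hc : l < 2 * La
    · -- greedy case
      have hfl1 : (⌊A⌋₊ : ℝ) ≤ A := Nat.floor_le hA.le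
      have hfl2 : A < ⌊A⌋₊ + 1 := Nat.lt_floor_add_one _
      have hfl3 : 1 ≤ ⌊A⌋₊ := (Nat.one_le_floor_iff _).2 (by linarith)
      obtain ⟨k, hk⟩ : ∃ k, ⌊A⌋₊ = k + 1 := ⟨⌊A⌋₊ - 1, by omega⟩
      rw [hk] at hfl1 hfl2
      push_cast at hfl1 hfl2
      refine mon _ _ _ _ ?_ ?_ (greedy k)
      · rw [Nat.le_floor_iff (by positivity)]
        push_cast
        have h3 : A ^ 2 ≤ A ^ (t + 1 + 1) := pow_le_pow_right₀ (by linarith) (by omega)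
        nlinarith [Nat.cast_nonneg (α := ℝ) k]
      · rw [Nat.ceil_le, htarget]
        push_cast
        have h4 : A * l / L ^ 2 ≤ A / 2 := by
          rw [div_le_div_iff₀ (by positivity) (by norm_num)]
          have : l * 2 ≤ L ^ 2 := by linarith
          nlinarith
        linarith
    · push Not at hc
      set a0 := ⌊A ^ (t + 1)⌋₊ with ha0
      have hA1' : (1 : ℝ) ≤ A ^ (t + 1) := one_le_pow₀ (by linarith)
      have ha01 : 1 ≤ a0 := by rw [ha0]; exact (Nat.one_le_floor_iff _).2 hA1'
      have ha0le : (a0 : ℝ) ≤ A ^ (t + 1) := Nat.floor_le (by positivity)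
      have ha0lt : A ^ (t + 1) < a0 + 1 := Nat.lt_floor_add_one _
      have ha0half : A ^ (t + 1) ≤ 2 * a0 := by
        have : (1 : ℝ) ≤ a0 := by exact_mod_cast ha01
        linarith
      obtain ⟨q, hq1, hq2⟩ : ∃ q : ℕ, (q : ℝ) < l / La ∧ l / La - 1 ≤ q := by
        have hpos : 0 < ⌈l / La⌉₊ := Nat.ceil_pos.2 (by positivity)
        refine ⟨⌈l / La⌉₊ - 1, ?_, ?_⟩
        · rw [Nat.cast_sub hpos]; push_cast
          linarith [Nat.ceil_lt_add_one (show 0 ≤ l / La by positivity)]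
        · rw [Nat.cast_sub hpos]; push_cast
          linarith [Nat.le_ceil (l / La)]
      have hq3 : l / (2 * La) ≤ q := by
        have : 2 ≤ l / La := by rw [le_div_iff₀ (by linarith)]; exact hc
        have h2 : l / (2 * La) = l / La / 2 := by field_simp
        rw [h2]; linarith
      have hqκ : q * La < ⌈l⌉₊ := by
        rw [Nat.lt_ceil]; push_cast
        rwa [lt_div_iff₀ (by linarith)] at hq1
      set j := ⌊A / (8 * La)⌋₊ with hj
      have hj1 : (j : ℝ) ≤ A / (8 * La) := Nat.floor_le (by positivity)
      have hj1' : (j : ℝ) * La ≤ A / 8 := by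
        rw [le_div_iff₀ (by positivity)] at hj1; linarith
      have hj2 : A / (16 * La) ≤ j := by
        have h3 : A / (8 * La) < j + 1 := Nat.lt_floor_add_one _
        have h4 : 2 ≤ A / (8 * La) := by
          rw [le_div_iff₀ (by positivity)]; linarith
        have h5 : A / (16 * La) = A / (8 * La) / 2 := by field_simp; norm_num
        rw [h5]; linarith
      have hlA : l ≤ A ^ t := by
        rw [hl]; exact div_le_self (by positivity) (one_le_pow₀ hL)
      have hjq : (j : ℝ) * q ≤ a0 := by
        have h3 : (q : ℝ) ≤ A ^ t := by
          refine hq1.le.trans ((div_le_self hlpos.le hLa1).trans hlA)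
        have h4 : (j : ℝ) ≤ A / 8 := by nlinarith [Nat.cast_nonneg (α := ℝ) j]
        calc (j : ℝ) * q ≤ (A / 8) * A ^ t := by gcongr
          _ = A ^ (t + 1) / 8 := by ring
          _ ≤ a0 := by linarith
      have hS := step_s16 hT a0 ⌈l⌉₊ q j ha01 (ih A hA) hqκ
      refine mon _ _ _ _ ?_ ?_ hS
      · rw [Nat.le_floor_iff (by positivity)]
        push_cast
        have h3 : (1 : ℝ) ≤ a0 := by exact_mod_cast ha01
        have hLacast : ((Nat.log 2 (Fintype.card V) : ℝ) + 1) = La := by rw [hLa]; push_cast; ring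
        rw [hLacast]
        calc (j : ℝ) * (La * (1 + j * q + 2 * a0)) = (j * La) * (1 + j * q + 2 * a0) := by ring
          _ ≤ (A / 8) * (4 * A ^ (t + 1)) := by
            apply mul_le_mul hj1' _ (by positivity) (by positivity)
            linarith
          _ ≤ A ^ (t + 1 + 1) := by
            rw [pow_succ A (t + 1)]; nlinarith
      · rw [Nat.ceil_le, htarget]
        push_cast
        have h3 : A / (16 * La) * (l / (2 * La)) ≤ j * q := by gcongr
        have h4 : A * l / L ^ 2 ≤ A / (16 * La) * (l / (2 * La)) := by
          rw [div_mul_div_comm]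
          apply div_le_div_of_nonneg_left (by positivity) (by positivity)
          rw [hLd]; nlinarith
        linarith

theorem toWalk {G : SimpleGraph V} (hEG : ∀ e ∈ E, e ∈ G.edgeSet) {k U e v U' e' v'}
    (h : Pth w E k U e v U' e' v') :
    ∃ P : G.Walk v v', P.IsPath ∧ P.length = k ∧ (∀ u ∈ P.support, u ∉ U) ∧
      List.IsChain (fun a b => w a < w b) (e :: P.edges) ∧ ∀ f ∈ P.edges, f ∈ E := by
  induction h with
  | nil U e v h => exact ⟨SimpleGraph.Walk.nil, by simp, by simp, by simpa using h, by simp, by simp⟩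
  | cons n U e v z U' e' v' h hE hw hp ih =>
    obtain ⟨P, h1, h2, h3, h4, h5⟩ := ih
    have hadj : G.Adj v z := hEG _ hE
    refine ⟨SimpleGraph.Walk.cons hadj P, ?_, ?_, ?_, ?_, ?_⟩
    · rw [SimpleGraph.Walk.cons_isPath_iff]
      exact ⟨h1, fun hv => h3 v hv (Finset.mem_insert_self _ _)⟩
    · simp [h2]
    · intro u hu
      rw [SimpleGraph.Walk.support_cons, List.mem_cons] at hu
      rcases hu with rfl | hu
      · exact h
      · exact fun hU => h3 u hu (Finset.mem_insert_of_mem hU)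
    · rw [SimpleGraph.Walk.edges_cons]
      exact List.IsChain.cons_cons hw h4
    · intro f hf
      rw [SimpleGraph.Walk.edges_cons, List.mem_cons] at hf
      rcases hf with rfl | hf
      · exact hE
      · exact h5 f hf

end EOP

namespace EOP

variable {N : ℕ} {G : SimpleGraph (Fin N)} {w : Sym2 (Fin N) → ℕ}

theorem mem_htList (k : ℕ) (o : Option (Sym2 (Fin N))) :
    o ∈ EO.htList N G w k ↔ ∃ i < k, EO.htEntry N G w i = o := by
  induction k with
  | zero => simp [EO.htList]
  | succ k ih =>
    rw [EO.htList, List.mem_append, ih, List.mem_singleton]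
    constructor
    · rintro (⟨i, hi, h⟩ | h)
      · exact ⟨i, by omega, h⟩
      · exact ⟨k, by omega, h.symm⟩
    · rintro ⟨i, hi, h⟩
      rcases Nat.lt_succ_iff_lt_or_eq.1 hi with h' | rfl
      · exact Or.inl ⟨i, h', h⟩
      · exact Or.inr h.symm

theorem entry_spec (hN : 0 < N) {k f} (h : EO.htEntry N G w k = some f) :
    f ∈ G.edgeSet ∧ (⟨k % N, Nat.mod_lt k hN⟩ : Fin N) ∈ f ∧
      (∀ i < k, EO.htEntry N G w i ≠ some f) ∧
      ∀ g ∈ G.edgeSet, (⟨k % N, Nat.mod_lt k hN⟩ : Fin N) ∈ g →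
        (∀ i < k, EO.htEntry N G w i ≠ some g) → w g ≤ w f := by
  unfold EO.htEntry EO.htPick at h
  rw [dif_pos hN] at h
  split_ifs at h with hex
  have hs := hex.choose_spec
  rw [Option.some.inj h] at hs
  obtain ⟨⟨h1, h2, h3⟩, h4⟩ := hs
  refine ⟨h1, h2, ?_, ?_⟩
  · intro i hi hi'
    exact h3 ((mem_htList k _).2 ⟨i, hi, hi'⟩)
  · intro g hg1 hg2 hg3
    refine h4 g ⟨hg1, hg2, fun hm => ?_⟩
    obtain ⟨i, hi, hi'⟩ := (mem_htList k _).1 hm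
    exact hg3 i hi hi'

theorem entry_ex (hN : 0 < N) {k e} (he : e ∈ G.edgeSet)
    (hv : (⟨k % N, Nat.mod_lt k hN⟩ : Fin N) ∈ e)
    (hn : ∀ i < k, EO.htEntry N G w i ≠ some e) : ∃ f, EO.htEntry N G w k = some f := by
  unfold EO.htEntry EO.htPick
  rw [dif_pos hN]
  have hex : ∃ e, (e ∈ G.edgeSet ∧ (⟨k % N, Nat.mod_lt k hN⟩ : Fin N) ∈ e ∧
          some e ∉ EO.htList N G w k) ∧
        ∀ f, (f ∈ G.edgeSet ∧ (⟨k % N, Nat.mod_lt k hN⟩ : Fin N) ∈ f ∧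
          some f ∉ EO.htList N G w k) → w f ≤ w e := by
    obtain ⟨m, hm1, hm2⟩ := Set.exists_max_image {e | e ∈ G.edgeSet ∧
      (⟨k % N, Nat.mod_lt k hN⟩ : Fin N) ∈ e ∧ some e ∉ EO.htList N G w k} w (Set.toFinite _)
      ⟨e, he, hv, fun hm => by
        obtain ⟨i, hi, hi'⟩ := (mem_htList k _).1 hm
        exact hn i hi hi'⟩
    exact ⟨m, hm1, hm2⟩
  rw [dif_pos hex]
  exact ⟨_, rfl⟩

theorem placed (hN : 0 < N) {e} (he : e ∈ G.edgeSet) : ∃ k, EO.htEntry N G w k = some e := by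
  by_contra hcon
  push Not at hcon
  obtain ⟨v, hv⟩ : ∃ v, v ∈ e := ⟨_, Sym2.out_fst_mem e⟩
  have key : ∀ i : ℕ, ∃ f, EO.htEntry N G w (v + i * N) = some f := by
    intro i
    apply entry_ex hN he _ (fun i _ => hcon i)
    convert hv using 1
    apply Fin.ext
    simp [Nat.mod_eq_of_lt v.2]
  choose g hg using key
  have hinj : Function.Injective g := by
    intro i j hij
    by_contra hne
    rcases Nat.lt_or_gt_of_ne hne with h | h
    · have := (entry_spec hN (hg j)).2.2.1 (v + i * N) (by gcongr)
      exact this (by rw [hg i, hij])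
    · have := (entry_spec hN (hg i)).2.2.1 (v + j * N) (by gcongr)
      exact this (by rw [hg j, hij])
  exact not_injective_infinite_finite g hinj

theorem index_spec (hN : 0 < N) {e} (he : e ∈ G.edgeSet) :
    EO.htEntry N G w (EO.htIndex N G w e) = some e := by
  unfold EO.htIndex
  rw [dif_pos (placed hN he)]
  exact Nat.find_spec (placed hN he)

theorem index_eq (hN : 0 < N) {e k} (h : EO.htEntry N G w k = some e) :
    EO.htIndex N G w e = k := by
  have h1 := entry_spec hN h
  have h2 := index_spec (w := w) hN h1.1
  have h3 := entry_spec hN h2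
  by_contra hne
  rcases Nat.lt_or_gt_of_ne hne with h' | h'
  · exact h1.2.2.1 _ h' h2
  · exact h3.2.2.1 _ h' h

theorem tabG (hN : 0 < N) (hw : Function.Injective w) (E : Finset (Sym2 (Fin N)))
    (hE : ∀ e, e ∈ E ↔ e ∈ G.edgeSet) :
    Tab w E (fun e => EO.htIndex N G w e / N)
      (fun e => ⟨EO.htIndex N G w e % N, Nat.mod_lt _ hN⟩) := by
  constructor
  · intro e he
    exact (entry_spec hN (index_spec hN ((hE e).1 he))).2.1
  · intro e he f hf h1 h2
    simp only [Fin.mk.injEq] at h1 h2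
    have h3 : EO.htIndex N G w e = EO.htIndex N G w f := by
      rw [← Nat.div_add_mod (EO.htIndex N G w e) N, h1, h2, Nat.div_add_mod]
    have h4 := index_spec (w := w) hN ((hE e).1 he)
    rw [h3, index_spec hN ((hE f).1 hf)] at h4
    exact (Option.some.inj h4).symm
  · intro e he v hv i hi
    have he' := (hE e).1 he
    have hp : (v : ℕ) + i * N < EO.htIndex N G w e := by
      have h1 := Nat.div_mul_le_self (EO.htIndex N G w e) N
      have h2 : (i + 1) * N ≤ EO.htIndex N G w e / N * N := Nat.mul_le_mul_right _ hi
      have := v.2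
      rw [Nat.succ_mul] at h2
      omega
    have hmod : (⟨((v : ℕ) + i * N) % N, Nat.mod_lt _ hN⟩ : Fin N) = v := by
      apply Fin.ext
      simp [Nat.mod_eq_of_lt v.2]
    have hnot := (entry_spec hN (index_spec (w := w) hN he')).2.2.1
    have hnot2 : ∀ j < (v : ℕ) + i * N, EO.htEntry N G w j ≠ some e :=
      fun j hj => hnot j (hj.trans hp)
    obtain ⟨f, hf⟩ := entry_ex (w := w) hN he' (by rw [hmod]; exact hv) hnot2
    have hs := entry_spec hN hf
    refine ⟨f, (hE f).2 hs.1, ?_, ?_, ?_⟩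
    · simp only [index_eq hN hf]
      rw [Nat.add_mul_div_right _ _ hN, Nat.div_eq_of_lt v.2, zero_add]
    · simp only [index_eq hN hf]; exact hmod
    · refine lt_of_le_of_ne (hs.2.2.2 e he' (by rw [hmod]; exact hv) hnot2) ?_
      intro h
      have := hw h
      subst this
      exact hnot _ hp hf

theorem tabEx (hN : 0 < N) (hw : Function.Injective w) (H : Finset (Sym2 (Fin N)))
    (hH : ∀ e ∈ H, ¬ e.IsDiag) : ∃ row col, Tab w H row col := by
  refine ⟨_, _, tabG (G := SimpleGraph.fromEdgeSet (H : Set (Sym2 (Fin N)))) hN hw H ?_⟩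
  intro e
  rw [SimpleGraph.edgeSet_fromEdgeSet]
  simp only [Set.mem_diff, Finset.mem_coe]
  exact ⟨fun h => ⟨h, hH e h⟩, fun h => h.1⟩

end EOP

/-- Theorem 4.1.  Let `t ≥ 1` be an integer, `G` an ordered graph on
`n ≥ 2` vertices, `a > 0` a real number, and `e ∈ E(G)` an edge of height `h(e, G) > a`.
Then there is an increasing path `P` in `G` starting with the edge `e`, of length at least
`a^(1 − 1/t) / (70·log₂ n)^(2t)`, all of whose edges `f` satisfy
`h(f, G) ≥ h(e, G) − a`. -/
theorem stmt16 (t : ℕ) (ht : 1 ≤ t) (N : ℕ) (hN : 2 ≤ N) (G : SimpleGraph (Fin N))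
    (wt : Sym2 (Fin N) → ℕ) (hw : Function.Injective wt)
    (a : ℝ) (ha : 0 < a) (e : Sym2 (Fin N)) (he : e ∈ G.edgeSet)
    (hhe : a < (EO.height N G wt e : ℝ)) :
    ∃ (u v : Fin N) (P : G.Walk u v), P.IsPath ∧ EO.Increasing wt P.edges ∧
      P.edges.head? = some e ∧
      a ^ ((1 : ℝ) - 1 / (t : ℝ)) / (70 * Real.logb 2 (N : ℝ)) ^ (2 * t)
        ≤ (P.length : ℝ) ∧
      ∀ f ∈ P.edges, (EO.height N G wt e : ℝ) - a ≤ (EO.height N G wt f : ℝ) := by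
  obtain ⟨t, rfl⟩ : ∃ t', t = t' + 1 := ⟨t - 1, by omega⟩
  have hN0 : 0 < N := by omega
  set E : Finset (Sym2 (Fin N)) := Finset.univ.filter (fun f => f ∈ G.edgeSet) with hE
  have T := EOP.tabG (G := G) hN0 hw E (by simp [hE])
  set row : Sym2 (Fin N) → ℕ := fun f => EO.htIndex N G wt f / N with hrow
  set col : Sym2 (Fin N) → Fin N := fun f => ⟨EO.htIndex N G wt f % N, Nat.mod_lt _ hN0⟩ with hcol
  have hht : ∀ f, EO.height N G wt f = row f + 1 := fun f => rfl
  simp only [hht] at hhe ⊢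
  push_cast at hhe ⊢
  have hfl : ⌊a⌋₊ ≤ row e := by
    have := Nat.floor_le ha.le
    have h2 : (⌊a⌋₊ : ℝ) < ((row e + 1 : ℕ) : ℝ) := by push_cast; linarith
    have h3 := Nat.cast_lt.1 h2
    omega
  obtain ⟨i0, hi0⟩ : ∃ i0, row e = i0 + ⌊a⌋₊ := ⟨row e - ⌊a⌋₊, by omega⟩
  set E' := E.filter (fun f => i0 ≤ row f) with hE'
  have T' : EOP.Tab wt E' (fun f => row f - i0) col := by
    constructor
    · intro f hf
      exact T.mem f (Finset.mem_filter.1 hf).1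
    · intro f hf g hg h1 h2
      have hf' := Finset.mem_filter.1 hf
      have hg' := Finset.mem_filter.1 hg
      have h1' : row f - i0 = row g - i0 := h1
      exact T.inj f hf'.1 g hg'.1 (show row f = row g by omega) h2
    · intro f hf v hv i hi
      have hf' := Finset.mem_filter.1 hf
      have hi' : i < row f - i0 := hi
      obtain ⟨g, hg, h1, h2, h3⟩ := T.ex f hf'.1 v hv (i + i0) (show i + i0 < row f by omega)
      have h1' : row g = i + i0 := h1
      exact ⟨g, Finset.mem_filter.2 ⟨hg, by omega⟩, show row g - i0 = i by omega, h2, h3⟩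
  have hE'G : ∀ f ∈ E', f ∈ G.edgeSet := by
    intro f hf
    exact (Finset.mem_filter.1 (Finset.mem_filter.1 hf).1).2
  have heE' : e ∈ E' := Finset.mem_filter.2 ⟨Finset.mem_filter.2 ⟨Finset.mem_univ _, he⟩, by omega⟩
  have hA : (a ^ (1 / ((t : ℝ) + 1))) ^ (t + 1) = a := by
    rw [← Real.rpow_natCast, ← Real.rpow_mul ha.le]
    push_cast
    rw [one_div_mul_cancel (by positivity), Real.rpow_one]
  have hA2 : (a ^ (1 / ((t : ℝ) + 1))) ^ t = a ^ (1 - 1 / ((t : ℝ) + 1)) := by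
    rw [← Real.rpow_natCast, ← Real.rpow_mul ha.le]
    congr 1
    field_simp
    ring
  have hmain := EOP.mainS (w := wt) (EOP.tabEx hN0 hw) (by simpa using hN) t
    (a ^ (1 / ((t : ℝ) + 1))) (by positivity)
  rw [hA, hA2, Fintype.card_fin] at hmain
  obtain ⟨x, y, k, U', e', v', hexy, hP, hk⟩ := hmain E' _ col
    (fun f hf => G.not_isDiag_of_mem_edgeSet (hE'G f hf)) T' e heE'
    (show ⌊a⌋₊ ≤ row e - i0 by omega)
  obtain ⟨P, h1, h2, h3, h4, h5⟩ := EOP.toWalk hE'G hP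
  subst hexy
  have hadj : G.Adj x y := he
  refine ⟨x, v', SimpleGraph.Walk.cons hadj P, ?_, ?_, ?_, ?_, ?_⟩
  · rw [SimpleGraph.Walk.cons_isPath_iff]
    exact ⟨h1, fun hv => h3 x hv (Finset.mem_singleton_self _)⟩
  · exact h4
  · simp
  · rw [SimpleGraph.Walk.length_cons, h2]
    exact Nat.ceil_le.1 hk
  · intro f hf
    have hfE : f ∈ E' := by
      rw [SimpleGraph.Walk.edges_cons, List.mem_cons] at hf
      rcases hf with rfl | hf
      · exact heE'
      · exact h5 f hf
    have h6 := (Finset.mem_filter.1 hfE).2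
    have h7 : (row s(x, y) : ℝ) = i0 + ⌊a⌋₊ := by exact_mod_cast hi0
    have h8 : (i0 : ℝ) ≤ row f := by exact_mod_cast h6
    have h9 := Nat.floor_le ha.le
    linarith
end
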